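/- arXiv:2012.13795 — 3 statements merged into one kernel-verified Lean document; each statement's English description precedes it below -/
import Mathlib

section
/- For n ≥ 1, let M(n) = max{|μ(1,π)| : π a permutation of length n}. Then M(n) ≥ 2^{⌊n/4⌋ − 1} for all n ≥ 1 (interpreting 2^{−1} = 1/2 when n < 4). In particular, the maximum absolute value of the principal Möbius function over permutations of length n grows at least exponentially in n. -/
/-!
The permutation pattern poset and its Möbius function.

A permutation of length `n` is represented as an element of the symmetric
group on `Fin n`; the collection of all permutations of all lengths is the
sigma type `PPerm`.  Pattern containment `PPerm.Le` makes `PPerm` into the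
permutation pattern poset, and `mu` is its Möbius function, defined by the
usual recursion `μ(σ,σ) = 1`, `μ(σ,π) = -∑_{σ ≤ λ < π} μ(σ,λ)` for `σ < π`
and `μ(σ,π) = 0` otherwise.
-/

open scoped Classical

/-- A permutation of an arbitrary finite length `n`, as an element of the
symmetric group on `Fin n`. -/
abbrev PPerm : Type := Σ n : ℕ, Equiv.Perm (Fin n)

namespace PPerm

/-- Classical pattern containment `σ ≤ π`: there is a strictly increasing map
of positions along which `π` realises the same relative order as `σ`. -/
def Le (σ π : PPerm) : Prop :=
  ∃ f : Fin σ.1 → Fin π.1, StrictMono f ∧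
    ∀ a b : Fin σ.1, σ.2 a < σ.2 b ↔ π.2 (f a) < π.2 (f b)

/-- Strict pattern containment. -/
def Lt (σ π : PPerm) : Prop := Le σ π ∧ σ ≠ π

/-- The permutation `1` of length one. -/
def one : PPerm := ⟨1, 1⟩

/-- The direct sum `α ⊕ β` of two permutations: `β` is placed after and
above `α`. -/
def dsum (α β : PPerm) : PPerm :=
  ⟨α.1 + β.1, finSumFinEquiv.symm.trans ((Equiv.sumCongr α.2 β.2).trans finSumFinEquiv)⟩

end PPerm

/-- Fuelled recursion computing the Möbius function of the permutation
pattern poset.  Any `λ` with `σ ≤ λ < π` has length `< |π|`, so for any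
fuel `≥ |π| + 1` this computes the standard recursion
`μ(σ,σ) = 1`, `μ(σ,π) = -∑_{σ ≤ λ < π} μ(σ,λ)` for `σ < π`, and
`μ(σ,π) = 0` when `σ ≰ π`. -/
noncomputable def muAux : ℕ → PPerm → PPerm → ℤ
  | 0, _, _ => 0
  | n + 1, σ, π =>
    if σ = π then 1
    else if PPerm.Le σ π then
      - ∑ m ∈ Finset.range π.1,
          ∑ p ∈ Finset.univ.filter
              (fun p : Equiv.Perm (Fin m) => PPerm.Le σ ⟨m, p⟩ ∧ PPerm.Le ⟨m, p⟩ π),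
            muAux n σ ⟨m, p⟩
    else 0

/-- The Möbius function of the permutation pattern poset. -/
noncomputable def mu (σ π : PPerm) : ℤ := muAux (π.1 + 1) σ π

/-- The closed interval `[σ, π]` of the permutation pattern poset, as a
finset (any `λ ≤ π` has length `≤ |π|`). -/
noncomputable def intervalCC (σ π : PPerm) : Finset PPerm :=
  (Finset.range (π.1 + 1)).biUnion fun m =>
    (Finset.univ.filter fun p : Equiv.Perm (Fin m) =>
        PPerm.Le σ ⟨m, p⟩ ∧ PPerm.Le ⟨m, p⟩ π).image fun p => (⟨m, p⟩ : PPerm)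

/-- The half-open interval `[σ, π)` of the permutation pattern poset. -/
noncomputable def intervalCO (σ π : PPerm) : Finset PPerm :=
  (intervalCC σ π).filter fun lam => lam ≠ π

/-- `M(n)`: the maximum of `|μ(1,π)|` over all permutations `π` of
length `n`. -/
noncomputable def maxAbsMu (n : ℕ) : ℕ :=
  Finset.univ.sup fun p : Equiv.Perm (Fin n) => (mu PPerm.one ⟨n, p⟩).natAbs

namespace PPerm

/-! ### Plots of permutations as point sets -/

/-- `S` is a plot (in general position) of `σ`. -/
def Pat (σ : PPerm) (S : Finset (ℤ × ℤ)) : Prop :=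
  ∃ e : Fin σ.1 → ℤ × ℤ, Finset.univ.image e = S ∧ StrictMono (fun i => (e i).1) ∧
    ∀ a b, σ.2 a < σ.2 b ↔ (e a).2 < (e b).2

/-- General position. -/
def Gen (S : Finset (ℤ × ℤ)) : Prop :=
  ∀ p ∈ S, ∀ q ∈ S, (p.1 = q.1 → p = q) ∧ (p.2 = q.2 → p = q)

/-- Order isomorphic point sets. -/
def Iso (S S' : Finset (ℤ × ℤ)) : Prop :=
  ∃ φ : ℤ × ℤ → ℤ × ℤ, S.image φ = S' ∧ ∀ p ∈ S, ∀ q ∈ S,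
    (p.1 < q.1 ↔ (φ p).1 < (φ q).1) ∧ (p.2 < q.2 ↔ (φ p).2 < (φ q).2)

theorem Pat.gen {σ S} (h : Pat σ S) : Gen S := by
  obtain ⟨e, rfl, h1, h2⟩ := h
  intro p hp q hq
  simp only [Finset.mem_image, Finset.mem_univ, true_and] at hp hq
  obtain ⟨i, rfl⟩ := hp
  obtain ⟨j, rfl⟩ := hq
  refine ⟨fun h => ?_, fun h => ?_⟩
  · rw [h1.injective h]
  · have a := h2 i j
    have b := h2 j i
    have : σ.2 i = σ.2 j := by
      apply le_antisymm
      · rw [← not_lt, b]; omega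
      · rw [← not_lt, a]; omega
    rw [σ.2.injective this]

theorem Pat.card {σ S} (h : Pat σ S) : S.card = σ.1 := by
  obtain ⟨e, rfl, h1, h2⟩ := h
  rw [Finset.card_image_of_injective]
  · simp
  · intro i j hij
    exact h1.injective (by simp [hij])

theorem Pat.iso {σ S S'} (h : Pat σ S) (h' : Iso S S') : Pat σ S' := by
  obtain ⟨e, rfl, h1, h2⟩ := h
  obtain ⟨φ, rfl, hφ⟩ := h'
  refine ⟨φ ∘ e, by rw [Finset.image_image], ?_, ?_⟩
  · intro i j hij
    exact ((hφ (e i) (by simp) (e j) (by simp)).1).1 (h1 hij)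
  · intro a b
    rw [h2]
    exact (hφ (e a) (by simp) (e b) (by simp)).2

theorem Pat.toIso {σ S S'} (h : Pat σ S) (h' : Pat σ S') : Iso S S' := by
  obtain ⟨e, rfl, h1, h2⟩ := h
  obtain ⟨e', rfl, h1', h2'⟩ := h'
  have hinj : Function.Injective e := fun i j hij => h1.injective (by simp [hij])
  have key : ∀ i, (Function.extend e e' (fun _ => 0)) (e i) = e' i := fun i => hinj.extend_apply _ _ _
  refine ⟨Function.extend e e' (fun _ => 0), ?_, ?_⟩
  · rw [Finset.image_image]
    congr 1
    funext i
    exact key i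
  · intro p hp q hq
    simp only [Finset.mem_image, Finset.mem_univ, true_and] at hp hq
    obtain ⟨i, rfl⟩ := hp
    obtain ⟨j, rfl⟩ := hq
    rw [key, key]
    exact ⟨(h1.lt_iff_lt (a := i) (b := j)).trans (h1'.lt_iff_lt (a := i) (b := j)).symm,
      (h2 i j).symm.trans (h2' i j)⟩

theorem Pat.unique {σ τ S} (h : Pat σ S) (h' : Pat τ S) : σ = τ := by
  have hg := h.gen
  have hc : σ.1 = τ.1 := by rw [← h.card, h'.card]
  obtain ⟨n, σ⟩ := σ
  obtain ⟨m, τ⟩ := τ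
  simp only at hc
  subst hc
  obtain ⟨e, he, h1, h2⟩ := h
  obtain ⟨e', he', h1', h2'⟩ := h'
  simp only at h1 h2 h1' h2' he he' e e'
  have hfst : (fun i => (e i).1) = (fun i => (e' i).1) := by
    rw [← StrictMono.range_inj h1 h1']
    have : ∀ x : ℤ × ℤ, (∃ i, e i = x) ↔ ∃ i, e' i = x := by
      intro x
      have := congrArg (fun S => x ∈ S) (he.trans he'.symm)
      simpa using this
    ext x
    simp only [Set.mem_range]
    constructor
    · rintro ⟨i, rfl⟩
      obtain ⟨j, hj⟩ := (this (e i)).1 ⟨i, rfl⟩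
      exact ⟨j, by rw [hj]⟩
    · rintro ⟨i, rfl⟩
      obtain ⟨j, hj⟩ := (this (e' i)).2 ⟨i, rfl⟩
      exact ⟨j, by rw [hj]⟩
  have hee : e = e' := by
    funext i
    refine (hg _ (by simp [← he]) _ (by simp [← he'])).1 (congrFun hfst i)
  subst hee
  have hmono : StrictMono (τ ∘ σ.symm) := by
    intro i j hij
    have := (h2 (σ.symm i) (σ.symm j)).1 (by simpa using hij)
    exact (h2' _ _).2 this
  have hid : τ ∘ σ.symm = id := by
    rw [← StrictMono.range_inj hmono strictMono_id]
    simp [Set.range_comp]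
  have : σ = τ := by
    ext i
    have := congrFun hid (σ i)
    simp at this
    rw [this]
  rw [this]

theorem exists_pat {S} (hS : Gen S) : ∃ σ, Pat σ S := by
  have hx : (S.image Prod.fst).card = S.card :=
    Finset.card_image_of_injOn fun p hp q hq h => (hS p hp q hq).1 h
  have hy : (S.image Prod.snd).card = S.card :=
    Finset.card_image_of_injOn fun p hp q hq h => (hS p hp q hq).2 h
  set E := (S.image Prod.fst).orderIsoOfFin hx
  set Y := (S.image Prod.snd).orderIsoOfFin hy
  have hE : ∀ i, ∃ p ∈ S, p.1 = (E i : ℤ) := fun i => Finset.mem_image.1 (E i).2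
  choose e heS he using hE
  have hmono : StrictMono (fun i => (e i).1) := by
    intro i j hij
    simp only [he]
    exact_mod_cast E.strictMono hij
  have hYm : ∀ i, (e i).2 ∈ S.image Prod.snd := fun i => Finset.mem_image_of_mem _ (heS i)
  let g : Fin S.card → Fin S.card := fun i => Y.symm ⟨(e i).2, hYm i⟩
  have hlt : ∀ i j, g i < g j ↔ (e i).2 < (e j).2 := by
    intro i j
    simp [g]
  have hg : Function.Injective g := by
    intro i j hij
    have := Y.symm.injective hij
    simp only [Subtype.mk.injEq] at this
    have := (hS _ (heS i) _ (heS j)).2 this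
    exact hmono.injective (by simp [this])
  refine ⟨⟨S.card, Equiv.ofBijective g (Finite.injective_iff_bijective.1 hg)⟩, e, ?_, hmono, ?_⟩
  · ext p
    simp only [Finset.mem_image, Finset.mem_univ, true_and]
    constructor
    · rintro ⟨i, rfl⟩; exact heS i
    · intro hp
      refine ⟨E.symm ⟨p.1, Finset.mem_image_of_mem _ hp⟩, ?_⟩
      refine (hS _ (heS _) _ hp).1 ?_
      rw [he]; simp
  · intro a b
    exact hlt a b

theorem exists_canon (σ : PPerm) : ∃ S, Pat σ S ∧ ∀ p ∈ S, 0 ≤ p.1 ∧ p.1 < σ.1 ∧ 0 ≤ p.2 ∧ p.2 < σ.1 := by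
  refine ⟨Finset.univ.image fun i : Fin σ.1 => (((i : ℕ) : ℤ), ((σ.2 i : ℕ) : ℤ)), ⟨_, rfl, ?_, ?_⟩, ?_⟩
  · intro i j hij
    simpa using hij
  · intro a b; simp
  · intro p hp
    simp only [Finset.mem_image, Finset.mem_univ, true_and] at hp
    obtain ⟨i, rfl⟩ := hp
    simp

theorem Gen.subset {S T} (hS : Gen S) (h : T ⊆ S) : Gen T :=
  fun p hp q hq => hS p (h hp) q (h hq)

theorem le_iff {σ π S} (h : Pat π S) : Le σ π ↔ ∃ T ⊆ S, Pat σ T := by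
  obtain ⟨e, rfl, h1, h2⟩ := h
  constructor
  · rintro ⟨f, hf, hf2⟩
    refine ⟨Finset.univ.image (e ∘ f), ?_, e ∘ f, rfl, ?_, ?_⟩
    · rw [← Finset.image_image]
      exact Finset.image_subset_image (Finset.subset_univ _)
    · intro i j hij
      exact h1 (hf hij)
    · intro a b
      rw [hf2, h2]; rfl
  · rintro ⟨T, hT, e', rfl, h1', h2'⟩
    have : ∀ i, ∃ j, e j = e' i := by
      intro i
      have := hT (Finset.mem_image_of_mem e' (Finset.mem_univ i))
      simpa using this
    choose f hf using this
    refine ⟨f, ?_, ?_⟩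
    · intro i j hij
      have := h1' hij
      simp only [← hf] at this
      exact h1.lt_iff_lt.1 this
    · intro a b
      rw [h2', h2, hf, hf]

theorem Le.trans {a b c : PPerm} (h : Le a b) (h' : Le b c) : Le a c := by
  obtain ⟨f, hf, hf2⟩ := h
  obtain ⟨g, hg, hg2⟩ := h'
  exact ⟨g ∘ f, hg.comp hf, fun x y => by rw [hf2, hg2]; rfl⟩

theorem Le.rfl' (a : PPerm) : Le a a := ⟨id, strictMono_id, fun _ _ => Iff.rfl⟩

theorem Le.length {a b : PPerm} (h : Le a b) : a.1 ≤ b.1 := by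
  obtain ⟨f, hf, -⟩ := h
  simpa using Fintype.card_le_of_injective f hf.injective

theorem Le.eq_of_length {a b : PPerm} (h : Le a b) (h' : a.1 = b.1) : a = b := by
  obtain ⟨S, hS, -⟩ := exists_canon b
  obtain ⟨T, hT, hp⟩ := (le_iff hS).1 h
  have : T = S := Finset.eq_of_subset_of_card_le hT (by rw [hS.card, hp.card, h'])
  subst this
  exact hp.unique hS

/-! ### Adding corner points around a permutation -/

/-- Admissible corner configurations. -/
def GenK (K : Finset (ℤ × ℤ)) : Prop := Gen K ∧ ∀ k ∈ K, k.1 ≠ 0 ∧ k.2 ≠ 0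

/-- The point `p` is on the side of `r` prescribed by `k`. -/
def Bey (k p r : ℤ × ℤ) : Prop :=
  (0 < k.1 → r.1 < p.1) ∧ (k.1 < 0 → p.1 < r.1) ∧ (0 < k.2 → r.2 < p.2) ∧ (k.2 < 0 → p.2 < r.2)

/-- `S` is `δ` surrounded by corner points configured as `K`. -/
def Str (K : Finset (ℤ × ℤ)) (δ : PPerm) (S : Finset (ℤ × ℤ)) : Prop :=
  ∃ κ R, S = K.image κ ∪ R ∧ Pat δ R ∧
    (∀ k ∈ K, ∀ l ∈ K, (k.1 < l.1 → (κ k).1 < (κ l).1) ∧ (k.2 < l.2 → (κ k).2 < (κ l).2)) ∧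
    ∀ k ∈ K, ∀ r ∈ R, Bey k (κ k) r

theorem Str.gen {K δ S} (hK : GenK K) (h : Str K δ S) : Gen S := by
  obtain ⟨κ, R, rfl, hR, h1, h2⟩ := h
  have hg := hR.gen
  intro p hp q hq
  simp only [Finset.mem_union, Finset.mem_image] at hp hq
  rcases hp with ⟨k, hk, rfl⟩ | hp <;> rcases hq with ⟨l, hl, rfl⟩ | hq
  · have a := h1 k hk l hl
    have b := h1 l hl k hk
    have c := hK.1 k hk l hl
    constructor
    · intro h
      rw [c.1 (by omega)]
    · intro h
      rw [c.2 (by omega)]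
  · have a := h2 k hk q hq
    have b := hK.2 k hk
    unfold Bey at a
    constructor <;> intro h <;> omega
  · have a := h2 l hl p hp
    have b := hK.2 l hl
    unfold Bey at a
    constructor <;> intro h <;> omega
  · exact hg p hp q hq

theorem exists_str (K δ) : ∃ S, Str K δ S := by
  obtain ⟨R, hR, hb⟩ := exists_canon δ
  let m : ℤ → ℤ := fun x => if x < 0 then x else δ.1 + x
  refine ⟨_, fun k => (m k.1, m k.2), R, rfl, hR, ?_, ?_⟩
  · intro k hk l hl
    simp only [m]
    constructor <;> intro h <;> split_ifs <;> omega
  · intro k hk r hr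
    have := hb r hr
    simp only [Bey, m]
    refine ⟨?_, ?_, ?_, ?_⟩ <;> intro h <;> split_ifs <;> omega

theorem Str.iso {K δ S S'} (h : Str K δ S) (h' : Iso S S') : Str K δ S' := by
  obtain ⟨κ, R, rfl, hR, h1, h2⟩ := h
  obtain ⟨φ, rfl, hφ⟩ := h'
  refine ⟨φ ∘ κ, R.image φ, by rw [Finset.image_union, Finset.image_image], ?_, ?_, ?_⟩
  · exact hR.iso ⟨φ, rfl, fun p hp q hq => hφ p (Finset.mem_union_right _ hp) q (Finset.mem_union_right _ hq)⟩
  · intro k hk l hl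
    have := hφ (κ k) (Finset.mem_union_left _ (Finset.mem_image_of_mem _ hk)) (κ l)
      (Finset.mem_union_left _ (Finset.mem_image_of_mem _ hl))
    have := h1 k hk l hl
    simp only [Function.comp]
    tauto
  · intro k hk r hr
    simp only [Finset.mem_image] at hr
    obtain ⟨r, hr, rfl⟩ := hr
    have a := hφ (κ k) (Finset.mem_union_left _ (Finset.mem_image_of_mem _ hk)) r (Finset.mem_union_right _ hr)
    have b := hφ r (Finset.mem_union_right _ hr) (κ k) (Finset.mem_union_left _ (Finset.mem_image_of_mem _ hk))
    obtain ⟨c1, c2, c3, c4⟩ := h2 k hk r hr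
    exact ⟨fun h => b.1.1 (c1 h), fun h => a.1.1 (c2 h), fun h => b.2.1 (c3 h), fun h => a.2.1 (c4 h)⟩

theorem Str.toIso {K δ S S'} (hK : GenK K) (h : Str K δ S) (h' : Str K δ S') : Iso S S' := by
  obtain ⟨κ, R, rfl, hR, h1, h2⟩ := h
  obtain ⟨κ', R', rfl, hR', h1', h2'⟩ := h'
  obtain ⟨φ, rfl, hφ⟩ := hR.toIso hR'
  have hex : ∀ p, ∃ q, (∀ k ∈ K, κ k = p → q = κ' k) ∧ (p ∈ R → q = φ p) := by
    intro p
    by_cases hp : p ∈ R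
    · refine ⟨φ p, ?_, fun _ => rfl⟩
      rintro k hk rfl
      have a := h2 k hk _ hp
      have b := hK.2 k hk
      unfold Bey at a
      omega
    · by_cases hk : ∃ k ∈ K, κ k = p
      · obtain ⟨k, hk, rfl⟩ := hk
        refine ⟨κ' k, ?_, fun h => absurd h hp⟩
        intro l hl hlk
        have a := h1 k hk l hl
        have b := h1 l hl k hk
        rw [hlk] at a b
        rw [(hK.1 k hk l hl).1 (by omega)]
      · refine ⟨0, fun k hk' h => absurd ⟨k, hk', h⟩ hk, fun h => absurd h hp⟩
  choose ψ hψ1 hψ2 using hex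
  have e1 : ∀ k ∈ K, ψ (κ k) = κ' k := fun k hk => hψ1 _ k hk rfl
  refine ⟨ψ, ?_, ?_⟩
  · rw [Finset.image_union, Finset.image_image]
    congr 1
    · exact Finset.image_congr fun k hk => e1 k hk
    · exact Finset.image_congr fun r hr => hψ2 r hr
  · intro p hp q hq
    simp only [Finset.mem_union, Finset.mem_image] at hp hq
    rcases hp with ⟨k, hk, rfl⟩ | hp <;> rcases hq with ⟨l, hl, rfl⟩ | hq
    · rw [e1 k hk, e1 l hl]
      have a := h1 k hk l hl
      have b := h1 l hl k hk
      have a' := h1' k hk l hl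
      have b' := h1' l hl k hk
      have c := (hK.1 k hk l hl)
      by_cases hkl : k = l
      · subst hkl; simp
      · have c1 : k.1 ≠ l.1 := fun h => hkl (c.1 h)
        have c2 : k.2 ≠ l.2 := fun h => hkl (c.2 h)
        omega
    · rw [e1 k hk, hψ2 q hq]
      have a := h2 k hk q hq
      have a' := h2' k hk (φ q) (Finset.mem_image_of_mem _ hq)
      have b := hK.2 k hk
      unfold Bey at a a'
      omega
    · rw [e1 l hl, hψ2 p hp]
      have a := h2 l hl p hp
      have a' := h2' l hl (φ p) (Finset.mem_image_of_mem _ hp)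
      have b := hK.2 l hl
      unfold Bey at a a'
      omega
    · rw [hψ2 p hp, hψ2 q hq]
      exact hφ p hp q hq

theorem exists_infl (K δ) : ∃ σ : PPerm, GenK K → ∃ S, Pat σ S ∧ Str K δ S := by
  by_cases hK : GenK K
  · obtain ⟨S, hS⟩ := exists_str K δ
    obtain ⟨σ, hσ⟩ := exists_pat (hS.gen hK)
    exact ⟨σ, fun _ => ⟨S, hσ, hS⟩⟩
  · exact ⟨one, fun h => absurd h hK⟩

/-- Surround `δ` by corner points configured as `K`. -/
noncomputable def infl (K : Finset (ℤ × ℤ)) (δ : PPerm) : PPerm := (exists_infl K δ).choose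

theorem infl_iff {K δ S} (hK : GenK K) : Pat (infl K δ) S ↔ Str K δ S := by
  obtain ⟨S0, h1, h2⟩ := (exists_infl K δ).choose_spec hK
  constructor
  · intro h
    exact h2.iso (h1.toIso h)
  · intro h
    exact h1.iso (h2.toIso hK h)

theorem exists_infl_plot {K δ} (hK : GenK K) : ∃ S, Pat (infl K δ) S ∧ Str K δ S := by
  obtain ⟨S, h⟩ := exists_canon (infl K δ)
  exact ⟨S, h.1, (infl_iff hK).1 h.1⟩

/-- Add a single corner point in direction `s`. -/
noncomputable def op (s : ℤ × ℤ) (δ : PPerm) : PPerm := infl {s} δ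

/-- The four corner points of a balloon. -/
def K4 : Finset (ℤ × ℤ) := {(-2, -1), (-1, 2), (1, -2), (2, 1)}

/-- The 2413-balloon of `δ`. -/
noncomputable def bal (δ : PPerm) : PPerm := infl K4 δ

/-- Nonzero direction. -/
def Dir (s : ℤ × ℤ) : Prop := s.1 ≠ 0 ∧ s.2 ≠ 0

theorem op_iff {s δ S} (hs : Dir s) :
    Pat (op s δ) S ↔ ∃ p R, S = insert p R ∧ Pat δ R ∧ ∀ r ∈ R, Bey s p r := by
  have hK : GenK {s} := by
    constructor
    · intro p hp q hq
      simp only [Finset.mem_singleton] at hp hq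
      simp [hp, hq]
    · intro k hk
      simp only [Finset.mem_singleton] at hk
      rw [hk]; exact hs
  unfold op
  rw [infl_iff hK]
  constructor
  · rintro ⟨κ, R, rfl, hR, -, h⟩
    exact ⟨κ s, R, by simp, hR, fun r hr => h s (by simp) r hr⟩
  · rintro ⟨p, R, rfl, hR, h⟩
    refine ⟨fun _ => p, R, by simp, hR, by simp, ?_⟩
    intro k hk r hr
    simp only [Finset.mem_singleton] at hk
    rw [hk]; exact h r hr

/-- Balloon corner configuration. -/
def Box (p2 p5 p1 p4 : ℤ × ℤ) : Prop :=
  p2.1 < p5.1 ∧ p5.1 < p1.1 ∧ p1.1 < p4.1 ∧ p1.2 < p2.2 ∧ p2.2 < p4.2 ∧ p4.2 < p5.2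

theorem bal_iff {δ S} :
    Pat (bal δ) S ↔ ∃ p2 p5 p1 p4 R, S = {p2, p5, p1, p4} ∪ R ∧ Pat δ R ∧ Box p2 p5 p1 p4 ∧
      ∀ r ∈ R, p5.1 < r.1 ∧ r.1 < p1.1 ∧ p2.2 < r.2 ∧ r.2 < p4.2 := by
  have hK : GenK K4 := by
    constructor
    · unfold Gen K4; decide
    · unfold K4; decide
  unfold bal
  rw [infl_iff hK]
  constructor
  · rintro ⟨κ, R, rfl, hR, h1, h2⟩
    refine ⟨κ (-2, -1), κ (-1, 2), κ (1, -2), κ (2, 1), R, ?_, hR, ?_, ?_⟩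
    · simp [K4, Finset.image_insert]
    · have := fun k l hk hl => h1 k hk l hl
      refine ⟨?_, ?_, ?_, ?_, ?_, ?_⟩
      · exact (h1 (-2, -1) (by decide) (-1, 2) (by decide)).1 (by norm_num)
      · exact (h1 (-1, 2) (by decide) (1, -2) (by decide)).1 (by norm_num)
      · exact (h1 (1, -2) (by decide) (2, 1) (by decide)).1 (by norm_num)
      · exact (h1 (1, -2) (by decide) (-2, -1) (by decide)).2 (by norm_num)
      · exact (h1 (-2, -1) (by decide) (2, 1) (by decide)).2 (by norm_num)
      · exact (h1 (2, 1) (by decide) (-1, 2) (by decide)).2 (by norm_num)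
    · intro r hr
      refine ⟨?_, ?_, ?_, ?_⟩
      · exact (h2 (-1, 2) (by decide) r hr).2.1 (by norm_num)
      · exact (h2 (1, -2) (by decide) r hr).1 (by norm_num)
      · exact (h2 (-2, -1) (by decide) r hr).2.2.2 (by norm_num)
      · exact (h2 (2, 1) (by decide) r hr).2.2.1 (by norm_num)
  · rintro ⟨p2, p5, p1, p4, R, rfl, hR, ⟨h1, h2, h3, h4, h5, h6⟩, h⟩
    refine ⟨fun k => if k = (-2, -1) then p2 else if k = (-1, 2) then p5 else
      if k = (1, -2) then p1 else p4, R, ?_, hR, ?_, ?_⟩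
    · simp [K4, Finset.image_insert]
    · intro k hk l hl
      simp only [K4, Finset.mem_insert, Finset.mem_singleton] at hk hl
      rcases hk with rfl | rfl | rfl | rfl <;> rcases hl with rfl | rfl | rfl | rfl <;>
        simp <;> omega
    · intro k hk r hr
      have := h r hr
      simp only [K4, Finset.mem_insert, Finset.mem_singleton] at hk
      rcases hk with rfl | rfl | rfl | rfl <;> simp [Bey] <;> omega

theorem bal_plot (δ) : ∃ p2 p5 p1 p4 R, Pat (bal δ) ({p2, p5, p1, p4} ∪ R) ∧ Pat δ R ∧ Box p2 p5 p1 p4 ∧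
      ∀ r ∈ R, p5.1 < r.1 ∧ r.1 < p1.1 ∧ p2.2 < r.2 ∧ r.2 < p4.2 := by
  obtain ⟨S, h, -⟩ := exists_canon (bal δ)
  have h' := h
  rw [bal_iff] at h'
  obtain ⟨p2, p5, p1, p4, R, rfl, h1⟩ := h'
  exact ⟨p2, p5, p1, p4, R, h, h1⟩

theorem op_plot {s} (δ) (hs : Dir s) : ∃ p R, Pat (op s δ) (insert p R) ∧ Pat δ R ∧ ∀ r ∈ R, Bey s p r := by
  obtain ⟨S, h, -⟩ := exists_canon (op s δ)
  have h' := h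
  rw [op_iff hs] at h'
  obtain ⟨p, R, rfl, h1⟩ := h'
  exact ⟨p, R, h, h1⟩

theorem bey_irrefl {s p} (hs : Dir s) : ¬ Bey s p p := by
  unfold Bey Dir at *; omega

theorem bey_asymm {s p q} (hs : Dir s) (h : Bey s p q) : ¬ Bey s q p := by
  unfold Bey Dir at *; omega

theorem op_length {s δ} (hs : Dir s) : (op s δ).1 = δ.1 + 1 := by
  obtain ⟨p, R, h1, h2, h3⟩ := op_plot δ hs
  rw [← h1.card, ← h2.card, Finset.card_insert_of_notMem]
  exact fun h => bey_irrefl hs (h3 p h)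

theorem op_inj {s} (hs : Dir s) : Function.Injective (op s) := by
  intro ε ε' h
  obtain ⟨p, R, h1, h2, h3⟩ := op_plot ε hs
  rw [h, op_iff hs] at h1
  obtain ⟨q, R', h4, h5, h6⟩ := h1
  have hpq : p = q := by
    by_contra hne
    have a : p ∈ insert q R' := h4 ▸ Finset.mem_insert_self _ _
    have b : q ∈ insert p R := h4 ▸ Finset.mem_insert_self _ _
    have a' := Finset.mem_of_mem_insert_of_ne a hne
    have b' := Finset.mem_of_mem_insert_of_ne b (Ne.symm hne)
    exact bey_asymm hs (h3 q b') (h6 p a')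
  subst hpq
  have hp : p ∉ R := fun h => bey_irrefl hs (h3 p h)
  have hp' : p ∉ R' := fun h => bey_irrefl hs (h6 p h)
  have : R = R' := by
    rw [← Finset.erase_insert hp, h4, Finset.erase_insert hp']
  subst this
  exact h2.unique h5

theorem le_op {s lam δ} (hs : Dir s) : Le lam (op s δ) ↔ Le lam δ ∨ ∃ ε, Le ε δ ∧ lam = op s ε := by
  obtain ⟨p, R, h1, h2, h3⟩ := op_plot δ hs
  rw [le_iff h1]
  constructor
  · rintro ⟨T, hT, hp⟩
    by_cases hpT : p ∈ T
    · right
      have hsub : T.erase p ⊆ R := by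
        rw [← Finset.subset_insert_iff]; exact hT
      obtain ⟨ε, hε⟩ := exists_pat (h2.gen.subset hsub)
      refine ⟨ε, (le_iff h2).2 ⟨_, hsub, hε⟩, ?_⟩
      apply hp.unique
      rw [op_iff hs]
      exact ⟨p, T.erase p, (Finset.insert_erase hpT).symm, hε, fun r hr => h3 r (hsub hr)⟩
    · left
      refine (le_iff h2).2 ⟨T, ?_, hp⟩
      rwa [Finset.subset_insert_iff_of_notMem hpT] at hT
  · rintro (h | ⟨ε, h, rfl⟩)
    · obtain ⟨T, hT, hp⟩ := (le_iff h2).1 h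
      exact ⟨T, hT.trans (Finset.subset_insert _ _), hp⟩
    · obtain ⟨T, hT, hp⟩ := (le_iff h2).1 h
      refine ⟨insert p T, Finset.insert_subset_insert _ hT, ?_⟩
      rw [op_iff hs]
      exact ⟨p, T, rfl, hp, fun r hr => h3 r (hT hr)⟩

theorem le_op_self {s} (δ) (hs : Dir s) : Le δ (op s δ) := (le_op hs).2 (Or.inl (Le.rfl' _))

theorem op_le_op {s ε δ} (hs : Dir s) : Le (op s ε) (op s δ) ↔ Le ε δ := by
  constructor
  · intro h
    rcases (le_op hs).1 h with h | ⟨ε', h, he⟩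
    · exact (le_op_self ε hs).trans h
    · rwa [op_inj hs he]
  · intro h
    exact (le_op hs).2 (Or.inr ⟨ε, h, rfl⟩)

theorem pat_empty {δ : PPerm} (h : δ.1 = 0) : Pat δ ∅ := by
  obtain ⟨S, hS, -⟩ := exists_canon δ
  have := hS.card
  rw [h, Finset.card_eq_zero] at this
  exact this ▸ hS

theorem eq_of_length_zero {δ ε : PPerm} (h : δ.1 = 0) (h' : ε.1 = 0) : δ = ε :=
  (pat_empty h).unique (pat_empty h')

theorem eq_one {δ : PPerm} (h : δ.1 = 1) : δ = one := by
  obtain ⟨n, σ⟩ := δ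
  simp only at h
  subst h
  unfold one
  congr 1
  exact Subsingleton.elim _ _

/-- Opposite corners commute. -/
theorem op_comm {s t τ} (hs : Dir s) (ht : Dir t) (h1 : s.1 * t.1 < 0) (h2 : s.2 * t.2 < 0) :
    op s (op t τ) = op t (op s τ) := by
  obtain ⟨p, R, a1, a2, a3⟩ := op_plot (op t τ) hs
  have a2' := a2
  rw [op_iff ht] at a2'
  obtain ⟨q, R', rfl, b2, b3⟩ := a2'
  apply a1.unique
  rw [op_iff ht]
  refine ⟨q, insert p R', Finset.insert_comm _ _ _, ?_, ?_⟩
  · rw [op_iff hs]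
    exact ⟨p, R', rfl, b2, fun r hr => a3 r (Finset.mem_insert_of_mem hr)⟩
  · intro r hr
    rcases Finset.mem_insert.1 hr with rfl | hr
    · have := a3 q (Finset.mem_insert_self _ _)
      unfold Bey Dir at *
      rw [mul_neg_iff] at h1 h2
      omega
    · exact b3 r hr

theorem bey_same {s t p x} (hs : Dir s) (ht : Dir t) (h : Bey s p x) (h' : Bey t p x) :
    0 < s.1 * t.1 ∧ 0 < s.2 * t.2 := by
  rw [mul_pos_iff, mul_pos_iff]
  obtain ⟨a1, a2, a3, a4⟩ := h
  obtain ⟨b1, b2, b3, b4⟩ := h'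
  obtain ⟨c1, c2⟩ := hs
  obtain ⟨d1, d2⟩ := ht
  constructor <;> omega

theorem bey_opp {s t p x} (hs : Dir s) (ht : Dir t) (h : Bey s p x) (h' : Bey t x p) :
    s.1 * t.1 < 0 ∧ s.2 * t.2 < 0 := by
  rw [mul_neg_iff, mul_neg_iff]
  obtain ⟨a1, a2, a3, a4⟩ := h
  obtain ⟨b1, b2, b3, b4⟩ := h'
  obtain ⟨c1, c2⟩ := hs
  obtain ⟨d1, d2⟩ := ht
  constructor <;> omega

theorem op_eq_op {s t ε ε'} (hs : Dir s) (ht : Dir t) (h : op s ε = op t ε') (hε : 0 < ε.1) :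
    s.1 * t.1 < 0 ∧ s.2 * t.2 < 0 ∨ 0 < s.1 * t.1 ∧ 0 < s.2 * t.2 := by
  obtain ⟨p, R, a1, a2, a3⟩ := op_plot ε hs
  rw [h, op_iff ht] at a1
  obtain ⟨q, R', h4, h5, h6⟩ := a1
  have hc := a2.card
  obtain ⟨x, hx⟩ : R.Nonempty := by rw [← Finset.card_pos]; omega
  have hx3 := a3 x hx
  have hp : p ∈ insert q R' := h4 ▸ Finset.mem_insert_self _ _
  have hx' : x ∈ insert q R' := h4 ▸ Finset.mem_insert_of_mem hx
  have hpx : Bey t p x ∨ ∃ y, Bey t y p ∧ Bey s p y := by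
    by_cases hpq : p = q
    · left
      rw [hpq]
      refine h6 x (Finset.mem_of_mem_insert_of_ne hx' ?_)
      rintro rfl
      exact bey_irrefl hs (hpq ▸ hx3)
    · right
      have hp' := Finset.mem_of_mem_insert_of_ne hp hpq
      have hq : q ∈ insert p R := h4 ▸ Finset.mem_insert_self _ _
      exact ⟨q, h6 p hp', a3 q (Finset.mem_of_mem_insert_of_ne hq (Ne.symm hpq))⟩
  rcases hpx with h | ⟨y, h, h'⟩
  · right
    exact bey_same hs ht hx3 h
  · left
    exact bey_opp hs ht h' h

/-- Intersection of opposite ranges. -/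
theorem op_eq_op_opp {s t ε ε'} (hs : Dir s) (ht : Dir t) (h1 : s.1 * t.1 < 0) (h : op s ε = op t ε')
    (hε : 0 < ε.1) : ∃ τ, ε = op t τ ∧ ε' = op s τ := by
  have hst := op_eq_op hs ht h hε
  obtain ⟨p, R, a1, a2, a3⟩ := op_plot ε hs
  rw [h, op_iff ht] at a1
  obtain ⟨q, R', h4, h5, h6⟩ := a1
  have hne : p ≠ q := by
    rintro rfl
    have hc := a2.card
    obtain ⟨x, hx⟩ : R.Nonempty := by rw [← Finset.card_pos]; omega
    have hx3 := a3 x hx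
    have hx' : x ∈ insert p R' := h4 ▸ Finset.mem_insert_of_mem hx
    rcases Finset.mem_insert.1 hx' with rfl | hx'
    · exact absurd hx3 (bey_irrefl hs)
    · have := h6 x hx'
      unfold Bey Dir at *
      rw [mul_neg_iff] at h1
      omega
  have hqR : q ∈ R := Finset.mem_of_mem_insert_of_ne (h4 ▸ Finset.mem_insert_self _ _) hne.symm
  have hpR : p ∈ R' := Finset.mem_of_mem_insert_of_ne (h4 ▸ Finset.mem_insert_self _ _) hne
  have hp : p ∉ R := fun h => bey_irrefl hs (a3 p h)
  have hq : q ∉ R' := fun h => bey_irrefl ht (h6 q h)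
  have hRR : R.erase q = R'.erase p := by
    have e1 : R = (insert q R').erase p := by rw [← h4, Finset.erase_insert hp]
    rw [e1, Finset.erase_right_comm, Finset.erase_insert hq]
  obtain ⟨τ, hτ⟩ := exists_pat (a2.gen.subset (Finset.erase_subset q R))
  refine ⟨τ, ?_, ?_⟩
  · apply a2.unique
    rw [op_iff ht]
    refine ⟨q, R.erase q, (Finset.insert_erase hqR).symm, hτ, ?_⟩
    intro r hr
    rw [hRR] at hr
    exact h6 r (Finset.mem_of_mem_erase hr)
  · apply h5.unique
    rw [op_iff hs]
    refine ⟨p, R'.erase p, (Finset.insert_erase hpR).symm, hRR ▸ hτ, ?_⟩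
    intro r hr
    rw [← hRR] at hr
    exact a3 r (Finset.mem_of_mem_erase hr)

/-! ### Balloons -/

theorem bal_length (δ) : (bal δ).1 = δ.1 + 4 := by
  obtain ⟨p2, p5, p1, p4, R, h1, h2, hb, h3⟩ := bal_plot δ
  have a2 : p2 ∉ R := fun h => by have := h3 _ h; unfold Box at hb; omega
  have a5 : p5 ∉ R := fun h => by have := h3 _ h; unfold Box at hb; omega
  have a1 : p1 ∉ R := fun h => by have := h3 _ h; unfold Box at hb; omega
  have a4 : p4 ∉ R := fun h => by have := h3 _ h; unfold Box at hb; omega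
  have ne : ∀ {p q : ℤ × ℤ}, p.1 < q.1 → p ≠ q := fun h h' => by rw [h'] at h; omega
  unfold Box at hb
  have b1 : p2 ≠ p5 := ne (by omega)
  have b2 : p2 ≠ p1 := ne (by omega)
  have b3 : p2 ≠ p4 := ne (by omega)
  have b4 : p5 ≠ p1 := ne (by omega)
  have b5 : p5 ≠ p4 := ne (by omega)
  have b6 : p1 ≠ p4 := ne (by omega)
  rw [← h1.card, ← h2.card]
  simp only [Finset.insert_union, Finset.singleton_union]
  rw [Finset.card_insert_of_notMem, Finset.card_insert_of_notMem, Finset.card_insert_of_notMem,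
    Finset.card_insert_of_notMem] <;> simp [*]

theorem bal_aux {ε T p2 p5 p1 p4 R} (h1 : Pat (bal ε) T) (hT : T ⊆ {p2, p5, p1, p4} ∪ R)
    (hb : Box p2 p5 p1 p4) (h3 : ∀ r ∈ R, p5.1 < r.1 ∧ r.1 < p1.1 ∧ p2.2 < r.2 ∧ r.2 < p4.2) :
    ∃ T' ⊆ R, Pat ε T' := by
  rw [bal_iff] at h1
  obtain ⟨q2, q5, q1, q4, R', rfl, h4, hb', h5⟩ := h1
  refine ⟨R', ?_, h4⟩
  have key : ∀ x ∈ ({q2, q5, q1, q4} ∪ R' : Finset (ℤ × ℤ)), p2.1 ≤ x.1 ∧ x.1 ≤ p4.1 ∧ p1.2 ≤ x.2 ∧ x.2 ≤ p5.2 := by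
    intro x hx
    have := hT hx
    simp only [Finset.mem_union, Finset.mem_insert, Finset.mem_singleton] at this
    unfold Box at hb
    rcases this with (rfl | rfl | rfl | rfl) | h
    · omega
    · omega
    · omega
    · omega
    · have := h3 x h
      omega
  have k2 := key q2 (by simp)
  have k5 := key q5 (by simp)
  have k1 := key q1 (by simp)
  have k4 := key q4 (by simp)
  intro r hr
  have := hT (Finset.mem_union_right _ hr)
  simp only [Finset.mem_union, Finset.mem_insert, Finset.mem_singleton] at this
  have hr5 := h5 r hr
  unfold Box at hb'
  rcases this with (rfl | rfl | rfl | rfl) | h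
  · omega
  · omega
  · omega
  · omega
  · exact h

theorem bal_le_bal {ε δ} : Le (bal ε) (bal δ) ↔ Le ε δ := by
  obtain ⟨p2, p5, p1, p4, R, h1, h2, hb, h3⟩ := bal_plot δ
  rw [le_iff h1, le_iff h2]
  constructor
  · rintro ⟨T, hT, hp⟩
    exact bal_aux hp hT hb h3
  · rintro ⟨T, hT, hp⟩
    refine ⟨{p2, p5, p1, p4} ∪ T, Finset.union_subset_union_right hT, ?_⟩
    rw [bal_iff]
    exact ⟨p2, p5, p1, p4, T, rfl, hp, hb, fun r hr => h3 r (hT hr)⟩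

theorem bal_inj : Function.Injective bal := by
  intro ε δ h
  have h1 : Le ε δ := bal_le_bal.1 (h ▸ Le.rfl' _)
  refine h1.eq_of_length ?_
  have a := bal_length ε
  have b := bal_length δ
  rw [h] at a; omega

theorem bal_ne_op {s δ ε} (hs : Dir s) : bal δ ≠ op s ε := by
  intro h
  obtain ⟨p2, p5, p1, p4, R, h1, h2, hb, h3⟩ := bal_plot δ
  rw [h, op_iff hs] at h1
  obtain ⟨q, R', h4, h5, h6⟩ := h1
  have key : ∀ x ∈ ({p2, p5, p1, p4} ∪ R : Finset (ℤ × ℤ)), x = q ∨ Bey s q x := by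
    intro x hx
    rw [h4] at hx
    rcases Finset.mem_insert.1 hx with h | h
    · exact Or.inl h
    · exact Or.inr (h6 x h)
  have hq : q ∈ ({p2, p5, p1, p4} ∪ R : Finset (ℤ × ℤ)) := h4 ▸ Finset.mem_insert_self _ _
  have ne : ∀ {a b : ℤ × ℤ}, a.1 ≠ b.1 → a ≠ b := fun h h' => h (by rw [h'])
  have k : ∀ x ∈ ({p2, p5, p1, p4} ∪ R : Finset (ℤ × ℤ)), x.1 ≠ q.1 → Bey s q x := by
    intro x hx hne
    exact (key x hx).resolve_left (ne hne)
  have k2 := k p2 (by simp)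
  have k5 := k p5 (by simp)
  have k1 := k p1 (by simp)
  have k4 := k p4 (by simp)
  clear k key
  simp only [Finset.mem_union, Finset.mem_insert, Finset.mem_singleton] at hq
  unfold Box at hb
  unfold Dir at hs
  rcases hq with (rfl | rfl | rfl | rfl) | h
  · have a := k5 (by omega)
    have b := k1 (by omega)
    unfold Bey at a b
    omega
  · have a := k2 (by omega)
    have b := k1 (by omega)
    unfold Bey at a b
    omega
  · have a := k2 (by omega)
    have b := k4 (by omega)
    unfold Bey at a b
    omega
  · have a := k5 (by omega)
    have b := k2 (by omega)
    unfold Bey at a b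
    omega
  · have := h3 q h
    have a := k2 (by omega)
    have b := k4 (by omega)
    unfold Bey at a b
    omega

/-- The four pairs (direction, adjacent direction). -/
def Adj (s t : ℤ × ℤ) : Prop :=
  (s = (-1, -1) ∧ t = (-1, 1)) ∨ (s = (1, 1) ∧ t = (1, -1)) ∨ (s = (-1, 1) ∧ t = (1, 1)) ∨
    (s = (1, -1) ∧ t = (-1, -1))

theorem Adj.dir {s t} (h : Adj s t) : Dir s ∧ Dir t ∧ Dir (-s) := by
  unfold Dir
  rcases h with ⟨rfl, rfl⟩ | ⟨rfl, rfl⟩ | ⟨rfl, rfl⟩ | ⟨rfl, rfl⟩ <;> norm_num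

theorem op_le_bal {s t ε δ} (h : Adj s t) : Le (op s ε) (bal δ) ↔ Le ε (op t (op (-s) δ)) := by
  obtain ⟨hs, ht, hs'⟩ := h.dir
  obtain ⟨p2, p5, p1, p4, R, h1, h2, hb, h3⟩ := bal_plot δ
  -- a common argument: `c` is the inserted corner, `v` the opposite one, `w` the adjacent one
  have main : ∀ c w v z : ℤ × ℤ, ({p2, p5, p1, p4} : Finset (ℤ × ℤ)) = {c, z, w, v} →
      (∀ r ∈ R, Bey (-s) v r) → (∀ r ∈ insert v R, Bey t w r) →
      (∀ r ∈ insert w (insert v R), Bey s c r) →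
      (∀ x ∈ ({p2, p5, p1, p4} ∪ R : Finset (ℤ × ℤ)), ¬ Bey s x c ∧ ¬ Bey s x z) →
      (Le (op s ε) (bal δ) ↔ Le ε (op t (op (-s) δ))) := by
    intro c w v z hset hv hw hc hmin
    have hU : Pat (op t (op (-s) δ)) (insert w (insert v R)) := by
      rw [op_iff ht]
      refine ⟨w, _, rfl, ?_, hw⟩
      rw [op_iff hs']
      exact ⟨v, _, rfl, h2, hv⟩
    rw [le_iff h1, le_iff hU]
    constructor
    · rintro ⟨T, hT, hp⟩
      rw [op_iff hs] at hp
      obtain ⟨p, T', rfl, hp, hT'⟩ := hp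
      refine ⟨T', ?_, hp⟩
      intro x hx
      have hx1 := hT (Finset.mem_insert_of_mem hx)
      have hp1 := hmin p (hT (Finset.mem_insert_self _ _))
      have hx2 := hT' x hx
      rw [hset] at hx1
      simp only [Finset.mem_union, Finset.mem_insert, Finset.mem_singleton] at hx1 ⊢
      rcases hx1 with (rfl | rfl | rfl | rfl) | h
      · exact absurd hx2 hp1.1
      · exact absurd hx2 hp1.2
      · simp
      · simp
      · simp [h]
    · rintro ⟨T, hT, hp⟩
      refine ⟨insert c T, ?_, ?_⟩
      · intro x hx
        rw [hset]
        rcases Finset.mem_insert.1 hx with rfl | hx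
        · simp
        · have := hT hx
          simp only [Finset.mem_union, Finset.mem_insert, Finset.mem_singleton] at this ⊢
          tauto
      · rw [op_iff hs]
        exact ⟨c, T, rfl, hp, fun r hr => hc r (hT hr)⟩
  unfold Box at hb
  have fin : ∀ P : ℤ × ℤ → Prop, P p2 → P p5 → P p1 → P p4 → (∀ r ∈ R, P r) →
      ∀ x ∈ ({p2, p5, p1, p4} ∪ R : Finset (ℤ × ℤ)), P x := by
    intro P a2 a5 a1 a4 a x hx
    simp only [Finset.mem_union, Finset.mem_insert, Finset.mem_singleton] at hx
    rcases hx with (rfl | rfl | rfl | rfl) | h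
    · exact a2
    · exact a5
    · exact a1
    · exact a4
    · exact a x h
  rcases h with ⟨rfl, rfl⟩ | ⟨rfl, rfl⟩ | ⟨rfl, rfl⟩ | ⟨rfl, rfl⟩
  · apply main p2 p5 p4 p1
    · ext x; simp; tauto
    · intro r hr; have := h3 r hr; simp [Bey]; omega
    · simp only [Finset.forall_mem_insert]
      exact ⟨by simp [Bey]; omega, fun r hr => by have := h3 r hr; simp [Bey]; omega⟩
    · simp only [Finset.forall_mem_insert]
      exact ⟨by simp [Bey]; omega, by simp [Bey]; omega, fun r hr => by have := h3 r hr; simp [Bey]; omega⟩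
    · apply fin
      iterate 4 (simp [Bey]; omega)
      intro r hr; have := h3 r hr; simp [Bey]; omega
  · apply main p4 p1 p2 p5
    · ext x; simp; tauto
    · intro r hr; have := h3 r hr; simp [Bey]; omega
    · simp only [Finset.forall_mem_insert]
      exact ⟨by simp [Bey]; omega, fun r hr => by have := h3 r hr; simp [Bey]; omega⟩
    · simp only [Finset.forall_mem_insert]
      exact ⟨by simp [Bey]; omega, by simp [Bey]; omega, fun r hr => by have := h3 r hr; simp [Bey]; omega⟩
    · apply fin
      iterate 4 (simp [Bey]; omega)
      intro r hr; have := h3 r hr; simp [Bey]; omega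
  · apply main p5 p4 p1 p2
    · ext x; simp; tauto
    · intro r hr; have := h3 r hr; simp [Bey]; omega
    · simp only [Finset.forall_mem_insert]
      exact ⟨by simp [Bey]; omega, fun r hr => by have := h3 r hr; simp [Bey]; omega⟩
    · simp only [Finset.forall_mem_insert]
      exact ⟨by simp [Bey]; omega, by simp [Bey]; omega, fun r hr => by have := h3 r hr; simp [Bey]; omega⟩
    · apply fin
      iterate 4 (simp [Bey]; omega)
      intro r hr; have := h3 r hr; simp [Bey]; omega
  · apply main p1 p2 p5 p4
    · ext x; simp; tauto
    · intro r hr; have := h3 r hr; simp [Bey]; omega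
    · simp only [Finset.forall_mem_insert]
      exact ⟨by simp [Bey]; omega, fun r hr => by have := h3 r hr; simp [Bey]; omega⟩
    · simp only [Finset.forall_mem_insert]
      exact ⟨by simp [Bey]; omega, by simp [Bey]; omega, fun r hr => by have := h3 r hr; simp [Bey]; omega⟩
    · apply fin
      iterate 4 (simp [Bey]; omega)
      intro r hr; have := h3 r hr; simp [Bey]; omega

theorem op_op_le_bal {s t τ δ} (h : Adj s t) (hτ : 0 < τ.1) :
    Le (op s (op (-s) τ)) (bal δ) ↔ Le τ δ := by
  obtain ⟨hs, ht, hs'⟩ := h.dir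
  rw [op_le_bal h, le_op ht, op_le_op hs']
  refine or_iff_left ?_
  rintro ⟨ε, -, he⟩
  have := op_eq_op hs' ht he hτ
  rcases h with ⟨rfl, rfl⟩ | ⟨rfl, rfl⟩ | ⟨rfl, rfl⟩ | ⟨rfl, rfl⟩ <;> norm_num at this

theorem le_bal {lam δ} (h : Le lam (bal δ)) : Le lam δ ∨ (∃ ε, Le ε δ ∧ lam = bal ε) ∨
    (∃ ε, lam = op (-1, -1) ε) ∨ (∃ ε, lam = op (1, 1) ε) ∨ (∃ ε, lam = op (-1, 1) ε) ∨
    (∃ ε, lam = op (1, -1) ε) := by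
  obtain ⟨p2, p5, p1, p4, R, h1, h2, hb, h3⟩ := bal_plot δ
  rw [le_iff h1] at h
  obtain ⟨T, hT, hp⟩ := h
  have hmem : ∀ x ∈ T, x = p2 ∨ x = p5 ∨ x = p1 ∨ x = p4 ∨ x ∈ R := by
    intro x hx
    have := hT hx
    simp only [Finset.mem_union, Finset.mem_insert, Finset.mem_singleton] at this
    tauto
  have ext : ∀ s, Dir s → ∀ p ∈ T, (∀ x ∈ T, x ≠ p → Bey s p x) → ∃ ε, lam = op s ε := by
    intro s hs p hpT hx
    obtain ⟨ε, hε⟩ := exists_pat (hp.gen.subset (Finset.erase_subset p T))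
    refine ⟨ε, hp.unique ?_⟩
    rw [op_iff hs]
    refine ⟨p, _, (Finset.insert_erase hpT).symm, hε, ?_⟩
    intro r hr
    exact hx r (Finset.mem_of_mem_erase hr) (Finset.ne_of_mem_erase hr)
  have Ea : p2 ∈ T → p1 ∉ T → ∃ ε, lam = op (-1, -1) ε := by
    intro hin hout
    refine ext _ (by unfold Dir; norm_num) p2 hin ?_
    intro x hx hne
    unfold Box at hb
    rcases hmem x hx with rfl | rfl | rfl | rfl | h
    · exact absurd rfl hne
    · simp [Bey]; omega
    · exact absurd hx hout
    · simp [Bey]; omega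
    · have := h3 x h; simp [Bey]; omega
  have Ec : p5 ∈ T → p2 ∉ T → ∃ ε, lam = op (-1, 1) ε := by
    intro hin hout
    refine ext _ (by unfold Dir; norm_num) p5 hin ?_
    intro x hx hne
    unfold Box at hb
    rcases hmem x hx with rfl | rfl | rfl | rfl | h
    · exact absurd hx hout
    · exact absurd rfl hne
    · simp [Bey]; omega
    · simp [Bey]; omega
    · have := h3 x h; simp [Bey]; omega
  have Eb : p4 ∈ T → p5 ∉ T → ∃ ε, lam = op (1, 1) ε := by
    intro hin hout
    refine ext _ (by unfold Dir; norm_num) p4 hin ?_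
    intro x hx hne
    unfold Box at hb
    rcases hmem x hx with rfl | rfl | rfl | rfl | h
    · simp [Bey]; omega
    · exact absurd hx hout
    · simp [Bey]; omega
    · exact absurd rfl hne
    · have := h3 x h; simp [Bey]; omega
  have Ed : p1 ∈ T → p4 ∉ T → ∃ ε, lam = op (1, -1) ε := by
    intro hin hout
    refine ext _ (by unfold Dir; norm_num) p1 hin ?_
    intro x hx hne
    unfold Box at hb
    rcases hmem x hx with rfl | rfl | rfl | rfl | h
    · simp [Bey]; omega
    · simp [Bey]; omega
    · exact absurd rfl hne
    · exact absurd hx hout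
    · have := h3 x h; simp [Bey]; omega
  by_cases m2 : p2 ∈ T <;> by_cases m5 : p5 ∈ T <;> by_cases m1 : p1 ∈ T <;> by_cases m4 : p4 ∈ T <;>
    first
    | exact Or.inr (Or.inr (Or.inl (Ea m2 m1)))
    | exact Or.inr (Or.inr (Or.inr (Or.inl (Eb m4 m5))))
    | exact Or.inr (Or.inr (Or.inr (Or.inr (Or.inl (Ec m5 m2)))))
    | exact Or.inr (Or.inr (Or.inr (Or.inr (Or.inr (Ed m1 m4)))))
    | skip
  · right; left
    have hsub : T ∩ R ⊆ R := Finset.inter_subset_right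
    obtain ⟨ε, hε⟩ := exists_pat (h2.gen.subset hsub)
    refine ⟨ε, (le_iff h2).2 ⟨_, hsub, hε⟩, hp.unique ?_⟩
    rw [bal_iff]
    refine ⟨p2, p5, p1, p4, T ∩ R, ?_, hε, hb, fun r hr => h3 r (hsub hr)⟩
    ext x
    simp only [Finset.mem_union, Finset.mem_insert, Finset.mem_singleton, Finset.mem_inter]
    constructor
    · intro hx
      have := hmem x hx
      tauto
    · rintro ((rfl | rfl | rfl | rfl) | h)
      · exact m2
      · exact m5
      · exact m1
      · exact m4
      · exact h.1
  · left
    refine (le_iff h2).2 ⟨T, ?_, hp⟩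
    intro x hx
    rcases hmem x hx with rfl | rfl | rfl | rfl | h
    · exact absurd hx m2
    · exact absurd hx m5
    · exact absurd hx m1
    · exact absurd hx m4
    · exact h

/-! ### The Möbius function: basic summation -/

theorem one_le {lam : PPerm} : Le one lam ↔ 0 < lam.1 := by
  constructor
  · intro h
    exact lt_of_lt_of_le Nat.one_pos h.length
  · intro h
    refine ⟨fun _ => ⟨0, h⟩, ?_, ?_⟩
    · intro a b hab
      have h1 : (a : ℕ) < 1 := a.2
      have h2 : (b : ℕ) < 1 := b.2
      have h3 : (a : ℕ) < b := hab
      omega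
    · intro a b
      have : a = b := Subsingleton.elim (α := Fin 1) a b
      simp [this]

theorem muAux_fuel (σ : PPerm) : ∀ n m (π : PPerm), π.1 < n → π.1 < m → muAux n σ π = muAux m σ π := by
  intro n
  induction n with
  | zero => intro m π h; omega
  | succ n ih =>
    intro m π h h'
    obtain ⟨m, rfl⟩ : ∃ k, m = k + 1 := ⟨m - 1, by omega⟩
    simp only [muAux]
    split_ifs with h1 h2
    · rfl
    · congr 1
      refine Finset.sum_congr rfl fun k hk => Finset.sum_congr rfl fun p _ => ?_
      have := Finset.mem_range.1 hk
      apply ih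
      · show k < n
        omega
      · show k < m
        omega
    · rfl

/-- The principal Möbius function. -/
noncomputable def f (π : PPerm) : ℤ := mu one π

/-- Nonempty permutations below `π`. -/
noncomputable def D (π : PPerm) : Finset PPerm := intervalCC one π

theorem mem_D {lam π : PPerm} : lam ∈ D π ↔ 0 < lam.1 ∧ Le lam π := by
  obtain ⟨m, p⟩ := lam
  simp only [D, intervalCC, Finset.mem_biUnion, Finset.mem_range, Finset.mem_image, Finset.mem_filter,
    Finset.mem_univ, true_and]
  constructor
  · rintro ⟨k, hk, q, ⟨h1, h2⟩, h⟩
    rw [h] at h1 h2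
    exact ⟨one_le.1 h1, h2⟩
  · rintro ⟨h1, h2⟩
    exact ⟨m, Nat.lt_succ_of_le h2.length, p, ⟨one_le.2 h1, h2⟩, rfl⟩

theorem f_one : f one = 1 := by
  simp [f, mu, muAux]

theorem f_sum {π : PPerm} (h : 1 < π.1) : ∑ lam ∈ D π, f lam = 0 := by
  have hne : one ≠ π := by
    rintro rfl
    exact absurd h (lt_irrefl 1)
  have hπ : π ∈ D π := mem_D.2 ⟨by omega, Le.rfl' _⟩
  rw [← Finset.add_sum_erase _ _ hπ]
  have : f π = - ∑ lam ∈ (D π).erase π, f lam := by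
    unfold f
    conv_lhs => unfold mu
    rw [muAux, if_neg hne, if_pos (one_le.2 (by omega)), Finset.sum_sigma']
    congr 1
    have hset : ((Finset.range π.1).sigma fun m => Finset.univ.filter
        (fun p : Equiv.Perm (Fin m) => PPerm.Le one ⟨m, p⟩ ∧ PPerm.Le ⟨m, p⟩ π)) = (D π).erase π := by
      ext ⟨m, p⟩
      simp only [Finset.mem_sigma, Finset.mem_range, Finset.mem_filter, Finset.mem_univ, true_and,
        Finset.mem_erase, mem_D]
      constructor
      · rintro ⟨h1, h2, h3⟩
        refine ⟨?_, one_le.1 h2, h3⟩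
        rintro rfl
        exact absurd h1 (lt_irrefl _)
      · rintro ⟨h1, h2, h3⟩
        refine ⟨lt_of_le_of_ne h3.length ?_, one_le.2 h2, h3⟩
        intro h4
        exact h1 (h3.eq_of_length h4)
    rw [hset]
    refine Finset.sum_congr rfl fun lam hl => ?_
    rw [← hset] at hl
    have hl := Finset.mem_range.1 (Finset.mem_sigma.1 hl).1
    exact muAux_fuel _ _ _ _ hl (Nat.lt_succ_self _)
  rw [this]; ring

theorem inversion (h : PPerm → ℤ) (hs : ∀ δ : PPerm, 0 < δ.1 → ∑ ε ∈ D δ, h ε = 0) :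
    ∀ (n : ℕ) (δ : PPerm), δ.1 = n → 0 < δ.1 → h δ = 0 := by
  intro n
  induction n using Nat.strong_induction_on with
  | _ n ih =>
    intro δ hn hδ
    have h1 := hs δ hδ
    have hm : δ ∈ D δ := mem_D.2 ⟨hδ, Le.rfl' _⟩
    rw [← Finset.add_sum_erase _ _ hm, Finset.sum_eq_zero, add_zero] at h1
    · exact h1
    · intro ε hε
      rw [Finset.mem_erase, mem_D] at hε
      obtain ⟨a, b, c⟩ := hε
      have : ε.1 < δ.1 := lt_of_le_of_ne c.length fun h => a (c.eq_of_length h)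
      exact ih ε.1 (by omega) ε rfl b

/-- `lam` is obtained from a nonempty permutation by adding a corner in direction `s`. -/
def isR (s : ℤ × ℤ) (lam : PPerm) : Prop := ∃ ε : PPerm, 0 < ε.1 ∧ lam = op s ε

theorem not_isR_one {s} (hs : Dir s) : ¬ isR s one := by
  rintro ⟨ε, h1, h2⟩
  have := op_length (δ := ε) hs
  rw [← h2] at this
  have h3 : one.1 = 1 := rfl
  omega

theorem isR_op {s ε} (h : 0 < ε.1) : isR s (op s ε) := ⟨ε, h, rfl⟩

theorem not_isR_of_op {s t ε} (hs : Dir s) (ht : Dir t) (h : s.1 * t.1 > 0 ↔ s.2 * t.2 < 0)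
    (hε : 0 < ε.1) : ¬ isR s (op t ε) := by
  rintro ⟨ε', h1, h2⟩
  have := op_eq_op hs ht h2.symm h1
  omega

theorem one_mem_D {δ : PPerm} (h : 0 < δ.1) : one ∈ D δ := mem_D.2 ⟨Nat.one_pos, one_le.2 h⟩

theorem split {s δ} (hs : Dir s) (hδ : 0 < δ.1) (g : PPerm → ℤ) :
    ∑ lam ∈ D (op s δ), g lam = ∑ ε ∈ D δ, ((if isR s ε then 0 else g ε) + g (op s ε)) := by
  rw [Finset.sum_add_distrib, ← Finset.sum_filter_add_sum_filter_not (D (op s δ)) (isR s), add_comm]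
  congr 1
  · have e : ∀ ε, (if isR s ε then 0 else g ε) = if ¬ isR s ε then g ε else 0 := by
      intro ε; split_ifs <;> rfl
    simp only [e]
    rw [← Finset.sum_filter]
    refine Finset.sum_congr ?_ fun _ _ => rfl
    ext lam
    simp only [Finset.mem_filter, mem_D, le_op hs]
    constructor
    · rintro ⟨⟨h1, h2 | ⟨ε, h2, rfl⟩⟩, h3⟩
      · exact ⟨⟨h1, h2⟩, h3⟩
      · refine ⟨⟨h1, ?_⟩, h3⟩
        by_cases hε : 0 < ε.1
        · exact absurd (isR_op hε) h3
        · rw [eq_one (δ := op s ε) (by rw [op_length hs]; omega)]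
          exact one_le.2 hδ
    · rintro ⟨⟨h1, h2⟩, h3⟩
      exact ⟨⟨h1, Or.inl h2⟩, h3⟩
  · rw [← Finset.sum_image (f := g) (g := op s) (fun a _ b _ h => op_inj hs h)]
    refine Finset.sum_congr ?_ fun _ _ => rfl
    ext lam
    simp only [Finset.mem_filter, mem_D, Finset.mem_image]
    constructor
    · rintro ⟨⟨h1, h2⟩, ε, h3, rfl⟩
      exact ⟨ε, ⟨h3, (op_le_op hs).1 h2⟩, rfl⟩
    · rintro ⟨ε, ⟨h1, h2⟩, rfl⟩
      exact ⟨⟨by rw [op_length hs]; omega, (op_le_op hs).2 h2⟩, isR_op h1⟩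

theorem f_op {s δ} (hs : Dir s) (hδ : 0 < δ.1) : f (op s δ) = if isR s δ then 0 else - f δ := by
  have := inversion (fun ε => (if isR s ε then 0 else f ε) + f (op s ε)) (by
    intro δ hδ
    rw [← split hs hδ]
    exact f_sum (by rw [op_length hs]; omega)) _ δ rfl hδ
  split_ifs at this ⊢ <;> linarith

theorem dir_neg {s} (hs : Dir s) : Dir (-s) := by
  unfold Dir at *; simpa using hs

/-- The empty permutation. -/
def emp : PPerm := ⟨0, 1⟩

theorem op_emp {s} (hs : Dir s) : op s emp = one := eq_one (by rw [op_length hs]; rfl)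

theorem neg_mul1 {s} (hs : Dir s) : s.1 * (-s).1 < 0 ∧ s.2 * (-s).2 < 0 := by
  obtain ⟨h1, h2⟩ := hs
  have a := mul_self_pos.2 h1
  have b := mul_self_pos.2 h2
  simp only [Prod.fst_neg, Prod.snd_neg, mul_neg]
  constructor <;> linarith

theorem isR_neg {s ε} (hs : Dir s) (hε : 0 < ε.1) : isR s (op (-s) ε) ↔ ε = one ∨ isR s ε := by
  have hs' := dir_neg hs
  obtain ⟨n1, n2⟩ := neg_mul1 hs
  constructor
  · rintro ⟨ε', h1, h2⟩
    obtain ⟨τ, h3, h4⟩ := op_eq_op_opp hs hs' n1 h2.symm h1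
    by_cases hτ : 0 < τ.1
    · exact Or.inr ⟨τ, hτ, h4⟩
    · left
      rw [h4]
      exact eq_one (by rw [op_length hs]; omega)
  · have key : ∀ τ, isR s (op (-s) (op s τ)) := by
      intro τ
      rw [← op_comm hs hs' n1 n2]
      exact isR_op (by rw [op_length hs']; omega)
    rintro (rfl | ⟨τ, h1, rfl⟩)
    · rw [← op_emp hs]; exact key _
    · exact key _

/-- Sum of `f` over elements with a corner in direction `s`. -/
noncomputable def sg (s : ℤ × ℤ) (π : PPerm) : ℤ := ∑ lam ∈ D π, if isR s lam then f lam else 0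

theorem sg_neg {s δ} (hs : Dir s) (hδ : 0 < δ.1) : sg s (op (-s) δ) = -1 := by
  have hs' := dir_neg hs
  unfold sg
  rw [split hs' hδ]
  have : ∀ ε ∈ D δ, ((if isR (-s) ε then 0 else if isR s ε then f ε else 0) +
      if isR s (op (-s) ε) then f (op (-s) ε) else 0) = if ε = one then -1 else 0 := by
    intro ε hε
    have hε := (mem_D.1 hε).1
    rw [isR_neg hs hε, f_op hs' hε]
    by_cases h1 : ε = one
    · subst h1
      simp [not_isR_one hs, not_isR_one hs', f_one]
    · simp only [h1, false_or, if_false]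
      split_ifs <;> simp
  rw [Finset.sum_congr rfl this, Finset.sum_ite_eq' , if_pos (one_mem_D hδ)]

theorem sg_adj {s t δ} (h : Adj s t) (hδ : 0 < δ.1) : sg s (op t δ) = sg s δ := by
  obtain ⟨hs, ht, hs'⟩ := h.dir
  have hst : s.1 * t.1 > 0 ↔ s.2 * t.2 < 0 := by
    rcases h with ⟨rfl, rfl⟩ | ⟨rfl, rfl⟩ | ⟨rfl, rfl⟩ | ⟨rfl, rfl⟩ <;> norm_num
  unfold sg
  rw [split ht hδ]
  refine Finset.sum_congr rfl fun ε hε => ?_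
  have hε := (mem_D.1 hε).1
  rw [if_neg (not_isR_of_op hs ht hst hε), add_zero]
  by_cases h1 : isR t ε
  · obtain ⟨τ, h2, rfl⟩ := h1
    rw [if_neg (not_isR_of_op hs ht hst h2)]
    simp
  · rw [if_neg h1]

theorem sg_bal_aux {s t δ} (h : Adj s t) : sg s (bal δ) = sg s (op (-s) δ) := by
  obtain ⟨hs, ht, hs'⟩ := h.dir
  have hpos : 0 < (op (-s) δ).1 := by rw [op_length hs']; omega
  rw [← sg_adj h hpos]
  have e1 : sg s (bal δ) = ∑ ε ∈ D (op t (op (-s) δ)), f (op s ε) := by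
    unfold sg
    rw [← Finset.sum_filter, ← Finset.sum_image (f := f) (g := op s) (fun a _ b _ h => op_inj hs h)]
    refine Finset.sum_congr ?_ fun _ _ => rfl
    ext lam
    simp only [Finset.mem_filter, mem_D, Finset.mem_image]
    constructor
    · rintro ⟨⟨h1, h2⟩, ε, h3, rfl⟩
      exact ⟨ε, ⟨h3, (op_le_bal h).1 h2⟩, rfl⟩
    · rintro ⟨ε, ⟨h1, h2⟩, rfl⟩
      exact ⟨⟨by rw [op_length hs]; omega, (op_le_bal h).2 h2⟩, isR_op h1⟩
  have e2 : ∑ ε ∈ D (op t (op (-s) δ)), f ε = 0 := f_sum (by rw [op_length ht]; omega)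
  have e3 : sg s (bal δ) + ∑ ε ∈ D (op t (op (-s) δ)), f ε = sg s (op t (op (-s) δ)) := by
    rw [e1, ← Finset.sum_add_distrib]
    unfold sg
    refine Finset.sum_congr rfl fun ε hε => ?_
    rw [f_op hs (mem_D.1 hε).1]
    split_ifs <;> ring
  rw [← e3, e2, add_zero]

theorem sg_bal {s t δ} (h : Adj s t) (hδ : 0 < δ.1) : sg s (bal δ) = -1 := by
  rw [sg_bal_aux h, sg_neg h.dir.1 hδ]

theorem D_one : D one = {one} := by
  ext lam
  rw [mem_D, Finset.mem_singleton]
  constructor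
  · rintro ⟨h1, h2⟩
    have := h2.length
    have h3 : one.1 = 1 := rfl
    exact eq_one (by omega)
  · rintro rfl
    exact ⟨Nat.one_pos, Le.rfl' _⟩

theorem sg_bal_emp {s t} (h : Adj s t) : sg s (bal emp) = 0 := by
  rw [sg_bal_aux h, op_emp h.dir.2.2, sg, D_one, Finset.sum_singleton, if_neg (not_isR_one h.dir.1)]

/-- Terms without corners in directions `s`, `-s`. -/
noncomputable def nn (s : ℤ × ℤ) (ε : PPerm) : ℤ := if ε = one ∨ isR s ε ∨ isR (-s) ε then 0 else f ε

theorem sg2_bal {s t δ} (h : Adj s t) :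
    (∑ lam ∈ D (bal δ), if isR s lam ∧ isR (-s) lam then f lam else 0) = -1 + ∑ τ ∈ D δ, nn s τ := by
  obtain ⟨hs, ht, hs'⟩ := h.dir
  obtain ⟨n1, n2⟩ := neg_mul1 hs
  have hset : (D (bal δ)).filter (fun lam => isR s lam ∧ isR (-s) lam) =
      insert (op s one) ((D δ).image fun τ => op s (op (-s) τ)) := by
    ext lam
    simp only [Finset.mem_filter, mem_D, Finset.mem_image, Finset.mem_insert]
    constructor
    · rintro ⟨⟨h1, h2⟩, ⟨ε, h3, rfl⟩, ⟨ε', h4, h5⟩⟩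
      obtain ⟨τ, rfl, rfl⟩ := op_eq_op_opp hs hs' n1 h5 h3
      by_cases hτ : 0 < τ.1
      · right
        exact ⟨τ, ⟨hτ, (op_op_le_bal h hτ).1 h2⟩, rfl⟩
      · left
        congr 1
        exact eq_one (by rw [op_length hs']; omega)
    · have key : ∀ τ, isR s (op s (op (-s) τ)) ∧ isR (-s) (op s (op (-s) τ)) := by
        intro τ
        refine ⟨isR_op (by rw [op_length hs']; omega), ?_⟩
        rw [op_comm hs hs' n1 n2]
        exact isR_op (by rw [op_length hs]; omega)
      rintro (rfl | ⟨τ, ⟨h1, h2⟩, rfl⟩)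
      · refine ⟨⟨by rw [op_length hs]; omega, ?_⟩, ?_⟩
        · rw [op_le_bal h, one_le, op_length ht]; omega
        · rw [← op_emp hs']; exact key _
      · exact ⟨⟨by rw [op_length hs]; omega, (op_op_le_bal h h1).2 h2⟩, key τ⟩
  rw [← Finset.sum_filter, hset, Finset.sum_insert, Finset.sum_image]
  · congr 1
    · rw [f_op hs Nat.one_pos, if_neg (not_isR_one hs), f_one]
    · refine Finset.sum_congr rfl fun τ hτ => ?_
      have hτ := (mem_D.1 hτ).1
      rw [f_op hs (by rw [op_length hs']; omega), f_op hs' hτ, isR_neg hs hτ]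
      unfold nn
      by_cases h1 : τ = one <;> by_cases h2 : isR s τ <;> by_cases h3 : isR (-s) τ <;> simp [h1, h2, h3]
  · intro a _ b _ hab
    exact op_inj hs' (op_inj hs hab)
  · intro hmem
    obtain ⟨τ, hτ, he⟩ := Finset.mem_image.1 hmem
    have h1 := (mem_D.1 hτ).1
    have := congrArg Sigma.fst he
    rw [op_length hs, op_length hs, op_length hs'] at this
    have h3 : one.1 = 1 := rfl
    omega

/-- `lam` is a balloon. -/
def isB (lam : PPerm) : Prop := ∃ ε, lam = bal ε

theorem bal_sum (δ : PPerm) : (∑ lam ∈ D (bal δ), if isB lam then f lam else 0) =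
    f (bal emp) + ∑ ε ∈ D δ, f (bal ε) := by
  have hset : (D (bal δ)).filter isB = insert (bal emp) ((D δ).image bal) := by
    ext lam
    simp only [Finset.mem_filter, mem_D, Finset.mem_image, Finset.mem_insert]
    constructor
    · rintro ⟨⟨h1, h2⟩, ε, rfl⟩
      by_cases hε : 0 < ε.1
      · exact Or.inr ⟨ε, ⟨hε, bal_le_bal.1 h2⟩, rfl⟩
      · left
        congr 1
        exact eq_of_length_zero (by omega) rfl
    · rintro (rfl | ⟨ε, ⟨h1, h2⟩, rfl⟩)
      · refine ⟨⟨by rw [bal_length]; omega, bal_le_bal.2 ?_⟩, _, rfl⟩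
        exact ⟨fun i => i.elim0, fun i => i.elim0, fun i => i.elim0⟩
      · exact ⟨⟨by rw [bal_length]; omega, bal_le_bal.2 h2⟩, _, rfl⟩
  rw [← Finset.sum_filter, hset, Finset.sum_insert, Finset.sum_image]
  · intro a _ b _ hab
    exact bal_inj hab
  · intro hmem
    obtain ⟨τ, hτ, he⟩ := Finset.mem_image.1 hmem
    have h1 := (mem_D.1 hτ).1
    rw [bal_inj he] at h1
    exact absurd h1 (lt_irrefl 0)

/-- No corner and not a balloon. -/
def noneP (lam : PPerm) : Prop :=
  ¬ isR (-1, -1) lam ∧ ¬ isR (1, 1) lam ∧ ¬ isR (-1, 1) lam ∧ ¬ isR (1, -1) lam ∧ ¬ isB lam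

theorem adj_a : Adj (-1, -1) (-1, 1) := Or.inl ⟨rfl, rfl⟩
theorem adj_b : Adj (1, 1) (1, -1) := Or.inr (Or.inl ⟨rfl, rfl⟩)
theorem adj_c : Adj (-1, 1) (1, 1) := Or.inr (Or.inr (Or.inl ⟨rfl, rfl⟩))
theorem adj_d : Adj (1, -1) (-1, -1) := Or.inr (Or.inr (Or.inr ⟨rfl, rfl⟩))

theorem isR_excl {s t lam} (hs : Dir s) (ht : Dir t) (h : s.1 * t.1 > 0 ↔ s.2 * t.2 < 0) :
    isR s lam → isR t lam → False := by
  rintro h1 ⟨ε, h2, rfl⟩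
  exact not_isR_of_op hs ht h h2 h1

theorem total (δ : PPerm) :
    ∑ lam ∈ D (bal δ), f lam = sg (-1, -1) (bal δ) + sg (1, 1) (bal δ) + sg (-1, 1) (bal δ) + sg (1, -1) (bal δ)
      - (-1 + ∑ τ ∈ D δ, nn (-1, -1) τ) - (-1 + ∑ τ ∈ D δ, nn (-1, 1) τ)
      + (f (bal emp) + ∑ ε ∈ D δ, f (bal ε)) + ∑ lam ∈ D (bal δ), if noneP lam then f lam else 0 := by
  rw [← bal_sum, ← sg2_bal adj_a, ← sg2_bal adj_c]
  unfold sg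
  simp only [← Finset.sum_add_distrib, ← Finset.sum_sub_distrib]
  refine Finset.sum_congr rfl fun lam _ => ?_
  have na : (-(-1, -1) : ℤ × ℤ) = (1, 1) := by norm_num
  have nc : (-(-1, 1) : ℤ × ℤ) = (1, -1) := by norm_num
  rw [na, nc]
  have hB : ∀ s, Dir s → isR s lam → isB lam → False := by
    rintro s hs ⟨ε, -, h1⟩ ⟨ε', h2⟩
    exact bal_ne_op hs (h2.symm.trans h1)
  have da := adj_a.dir.1
  have db := adj_b.dir.1
  have dc := adj_c.dir.1
  have dd := adj_d.dir.1
  have Ba := hB _ da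
  have Bb := hB _ db
  have Bc := hB _ dc
  have Bd := hB _ dd
  have ac := isR_excl (lam := lam) da dc (by norm_num)
  have ad := isR_excl (lam := lam) da dd (by norm_num)
  have bc := isR_excl (lam := lam) db dc (by norm_num)
  have bd := isR_excl (lam := lam) db dd (by norm_num)
  unfold noneP
  by_cases ha : isR (-1, -1) lam <;> by_cases hb : isR (1, 1) lam <;> by_cases hc : isR (-1, 1) lam <;>
    by_cases hd : isR (1, -1) lam <;> by_cases hb' : isB lam <;>
    first
    | exact (Ba ha hb').elim
    | exact (Bb hb hb').elim
    | exact (Bc hc hb').elim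
    | exact (Bd hd hb').elim
    | exact (ac ha hc).elim
    | exact (ad ha hd).elim
    | exact (bc hb hc).elim
    | exact (bd hb hd).elim
    | simp [ha, hb, hc, hd, hb']

theorem none_le {lam δ} (h1 : 0 < lam.1) (h : Le lam (bal δ)) (hn : noneP lam) : Le lam δ ∨ lam = one := by
  obtain ⟨na, nb, nc, nd, nB⟩ := hn
  have key : ∀ s, Dir s → ¬ isR s lam → (∃ ε, lam = op s ε) → lam = one := by
    rintro s hs hn ⟨ε, rfl⟩
    by_cases hε : 0 < ε.1
    · exact absurd (isR_op hε) hn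
    · exact eq_one (by rw [op_length hs]; omega)
  rcases le_bal h with h | ⟨ε, -, h⟩ | h | h | h | h
  · exact Or.inl h
  · exact absurd ⟨ε, h⟩ nB
  · exact Or.inr (key _ adj_a.dir.1 na h)
  · exact Or.inr (key _ adj_b.dir.1 nb h)
  · exact Or.inr (key _ adj_c.dir.1 nc h)
  · exact Or.inr (key _ adj_d.dir.1 nd h)

theorem none_one : noneP one := by
  refine ⟨not_isR_one adj_a.dir.1, not_isR_one adj_b.dir.1, not_isR_one adj_c.dir.1, not_isR_one adj_d.dir.1, ?_⟩
  rintro ⟨ε, h⟩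
  have := bal_length ε
  rw [← h] at this
  have h3 : one.1 = 1 := rfl
  omega

theorem le_bal_self (δ) : Le δ (bal δ) := by
  obtain ⟨p2, p5, p1, p4, R, h1, h2, hb, h3⟩ := bal_plot δ
  exact (le_iff h1).2 ⟨R, Finset.subset_union_right, h2⟩

theorem D_emp : D emp = ∅ := by
  ext lam
  simp only [mem_D, Finset.notMem_empty, iff_false]
  rintro ⟨h1, h2⟩
  have := h2.length
  have h3 : emp.1 = 0 := rfl
  omega

theorem f_bal_emp : f (bal emp) = -3 := by
  have h := total emp
  rw [f_sum (by rw [bal_length]; omega), sg_bal_emp adj_a, sg_bal_emp adj_b, sg_bal_emp adj_c,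
    sg_bal_emp adj_d, D_emp, ← Finset.sum_filter] at h
  have hset : (D (bal emp)).filter noneP = {one} := by
    ext lam
    simp only [Finset.mem_filter, mem_D, Finset.mem_singleton]
    constructor
    · rintro ⟨⟨h1, h2⟩, h3⟩
      rcases none_le h1 h2 h3 with h | h
      · have := h.length
        have h3 : emp.1 = 0 := rfl
        omega
      · exact h
    · rintro rfl
      exact ⟨⟨Nat.one_pos, one_le.2 (by rw [bal_length]; omega)⟩, none_one⟩
  rw [hset] at h
  simp [f_one] at h
  linarith

theorem f_bal {δ : PPerm} (hδ : 0 < δ.1) : f (bal δ) = nn (-1, -1) δ + nn (-1, 1) δ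
    - (if noneP δ then f δ else 0) + if δ = one then 5 else 0 := by
  have := inversion (fun ε => f (bal ε) - nn (-1, -1) ε - nn (-1, 1) ε
    + (if noneP ε then f ε else 0) - if ε = one then 5 else 0) (by
    intro δ hδ
    have h := total δ
    rw [f_sum (by rw [bal_length]; omega), sg_bal adj_a hδ, sg_bal adj_b hδ, sg_bal adj_c hδ,
      sg_bal adj_d hδ, f_bal_emp] at h
    have hset : (D (bal δ)).filter noneP = (D δ).filter noneP := by
      ext lam
      simp only [Finset.mem_filter, mem_D]
      constructor
      · rintro ⟨⟨h1, h2⟩, h3⟩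
        refine ⟨⟨h1, ?_⟩, h3⟩
        rcases none_le h1 h2 h3 with h | h
        · exact h
        · rw [h]; exact one_le.2 hδ
      · rintro ⟨⟨h1, h2⟩, h3⟩
        exact ⟨⟨h1, h2.trans (le_bal_self δ)⟩, h3⟩
    rw [← Finset.sum_filter, hset, Finset.sum_filter] at h
    simp only [Finset.sum_add_distrib, Finset.sum_sub_distrib]
    rw [Finset.sum_ite_eq', if_pos (one_mem_D hδ)]
    linarith) _ δ rfl hδ
  linarith

theorem f_bal_one : f (bal one) = 4 := by
  rw [f_bal Nat.one_pos, if_pos none_one, if_pos rfl, f_one]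
  simp [nn]

theorem not_isR_bal {s δ} (hs : Dir s) : ¬ isR s (bal δ) := by
  rintro ⟨ε, -, h⟩
  exact bal_ne_op hs h

theorem bal_ne_one (δ) : bal δ ≠ one := by
  intro h
  have := bal_length δ
  rw [h] at this
  have h3 : one.1 = 1 := rfl
  omega

theorem f_bal_bal (δ : PPerm) : f (bal (bal δ)) = 2 * f (bal δ) := by
  have hpos : 0 < (bal δ).1 := by rw [bal_length]; omega
  rw [f_bal hpos]
  have h1 : ¬ noneP (bal δ) := fun h => h.2.2.2.2 ⟨_, rfl⟩
  have e : ∀ s, Dir s → nn s (bal δ) = f (bal δ) := by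
    intro s hs
    unfold nn
    rw [if_neg]
    rintro (h | h | h)
    · exact bal_ne_one _ h
    · exact not_isR_bal hs h
    · exact not_isR_bal (dir_neg hs) h
  rw [e _ adj_a.dir.1, e _ adj_c.dir.1, if_neg h1, if_neg (bal_ne_one _)]
  ring

/-- Iterated balloons of the permutation `1`. -/
noncomputable def tower : ℕ → PPerm
  | 0 => one
  | k + 1 => bal (tower k)

theorem tower_length (k : ℕ) : (tower k).1 = 4 * k + 1 := by
  induction k with
  | zero => rfl
  | succ k ih => rw [tower, bal_length, ih]; ring

theorem f_tower (k : ℕ) : f (tower (k + 1)) = 2 ^ (k + 2) := by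
  induction k with
  | zero => simp only [tower]; rw [f_bal_one]; norm_num
  | succ k ih =>
    rw [tower, tower, f_bal_bal, ← tower, ih]; ring

theorem f_tower_ge (k : ℕ) : (2 : ℤ) ^ k ≤ |f (tower k)| := by
  cases k with
  | zero => simp [tower, f_one]
  | succ k =>
    rw [f_tower, abs_of_nonneg (by positivity)]
    exact pow_le_pow_right₀ (by norm_num) (by omega)

theorem tower_not_isR {s} (hs : Dir s) (k : ℕ) : ¬ isR s (tower k) := by
  cases k with
  | zero => exact not_isR_one hs
  | succ k => exact not_isR_bal hs

theorem abs_f_op {s δ} (hs : Dir s) (hδ : 0 < δ.1) (h : ¬ isR s δ) : |f (op s δ)| = |f δ| := by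
  rw [f_op hs hδ, if_neg h, abs_neg]

theorem exists_large (k j : ℕ) (hj : j < 4) : ∃ π : PPerm, π.1 = 4 * k + 1 + j ∧ (2 : ℤ) ^ k ≤ |f π| := by
  have da := adj_a.dir.1
  have dc := adj_c.dir.1
  have l0 := tower_length k
  have h0 := f_tower_ge k
  have l1 : (op (-1, -1) (tower k)).1 = 4 * k + 2 := by rw [op_length da, l0]
  have l2 : (op (-1, 1) (op (-1, -1) (tower k))).1 = 4 * k + 3 := by rw [op_length dc, l1]
  have l3 : (op (-1, -1) (op (-1, 1) (op (-1, -1) (tower k)))).1 = 4 * k + 4 := by rw [op_length da, l2]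
  have h1 : (2 : ℤ) ^ k ≤ |f (op (-1, -1) (tower k))| := by
    rwa [abs_f_op da (by omega) (tower_not_isR da k)]
  have h2 : (2 : ℤ) ^ k ≤ |f (op (-1, 1) (op (-1, -1) (tower k)))| := by
    rwa [abs_f_op dc (by omega) (not_isR_of_op dc da (by norm_num) (by omega))]
  have h3 : (2 : ℤ) ^ k ≤ |f (op (-1, -1) (op (-1, 1) (op (-1, -1) (tower k))))| := by
    rwa [abs_f_op da (by omega) (not_isR_of_op da dc (by norm_num) (by omega))]
  interval_cases j
  · exact ⟨_, by omega, h0⟩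
  · exact ⟨_, l1, h1⟩
  · exact ⟨_, l2, h2⟩
  · exact ⟨_, l3, h3⟩

theorem maxAbsMu_ge (n : ℕ) (hn : 1 ≤ n) : 2 ^ ((n - 1) / 4) ≤ maxAbsMu n := by
  obtain ⟨⟨m, p⟩, h1, h2⟩ := exists_large ((n - 1) / 4) ((n - 1) % 4) (by omega)
  simp only at h1
  obtain rfl : m = n := by omega
  have : (mu one ⟨m, p⟩).natAbs ≤ maxAbsMu m :=
    Finset.le_sup (f := fun p : Equiv.Perm (Fin m) => (mu PPerm.one ⟨m, p⟩).natAbs) (Finset.mem_univ p)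
  refine le_trans ?_ this
  unfold f at h2
  rw [Int.abs_eq_natAbs] at h2
  exact_mod_cast h2

end PPerm

/-- **(Theorem `theorem-growth-of-mobius-function`.)**  For all `n ≥ 1`,
`M(n) ≥ 2^{⌊n/4⌋ − 1}` (where `2^{−1} = 1/2` for `n < 4`); in particular the
principal Möbius function grows at least exponentially. -/
theorem growth_of_mobius_function :
    ∀ n : ℕ, 1 ≤ n → (2 : ℝ) ^ (((n / 4 : ℕ) : ℤ) - 1) ≤ (maxAbsMu n : ℝ) := by
  intro n hn
  have h := PPerm.maxAbsMu_ge n hn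
  have h' : ((2 : ℝ) ^ ((n - 1) / 4)) ≤ (maxAbsMu n : ℝ) := by exact_mod_cast h
  refine le_trans ?_ h'
  rw [← zpow_natCast]
  exact zpow_le_zpow_right₀ (by norm_num) (by omega)
end

section
/- Let β be a nonempty permutation and let π = B(β) be its 2413-balloon. Then: μ(1,π) = 4 if β = 1; μ(1,π) = −6 if β = 2413; μ(1,π) = 2·μ(1,β) if β is a 2413-balloon; and μ(1,π) = μ(1,β) in all remaining cases. -/
/-!
The permutation pattern poset and its Möbius function.

A permutation of length `n` is represented as an element of the symmetric
group on `Fin n`; the collection of all permutations of all lengths is the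
sigma type `PPerm`.  Pattern containment `PPerm.Le` makes `PPerm` into the
permutation pattern poset, and `mu` is its Möbius function, defined by the
usual recursion `μ(σ,σ) = 1`, `μ(σ,π) = -∑_{σ ≤ λ < π} μ(σ,λ)` for `σ < π`
and `μ(σ,π) = 0` otherwise.
-/

open scoped Classical

/-- `π` is the 2413-balloon `B(β)` of `β`: writing `b = |β|`, the permutation
`π` has length `b + 4` and (1-indexed) entry sequence
`2, b+4, β(1)+2, …, β(b)+2, 1, b+3`.  In the 0-indexed representation used
here: position `0` has value `1`, position `1` has value `b+3`, position
`t+2` has value `β(t)+2` for `t < b`, position `b+2` has value `0`, and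
position `b+3` has value `b+2`. -/
def IsBalloon2413 (β π : PPerm) : Prop :=
  π.1 = β.1 + 4 ∧
    ∀ p : Fin π.1,
      ((p : ℕ) = 0 → (π.2 p : ℕ) = 1) ∧
      ((p : ℕ) = 1 → (π.2 p : ℕ) = β.1 + 3) ∧
      (∀ t : Fin β.1, (p : ℕ) = (t : ℕ) + 2 → (π.2 p : ℕ) = (β.2 t : ℕ) + 2) ∧
      ((p : ℕ) = β.1 + 2 → (π.2 p : ℕ) = 0) ∧
      ((p : ℕ) = β.1 + 3 → (π.2 p : ℕ) = β.1 + 2)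

/-- The permutation `2413` (0-indexed values `1 3 0 2`). -/
noncomputable def p2413 : PPerm :=
  ⟨4, Equiv.ofBijective (![1, 3, 0, 2] : Fin 4 → Fin 4) (by decide)⟩

namespace Balloon

open PPerm

/-- `S` realises the pattern `σ`. -/
def Real (S : Finset (ℤ × ℤ)) (σ : PPerm) : Prop :=
  ∃ e : Fin σ.1 → ℤ × ℤ, Finset.univ.image e = S ∧
    ∀ a b, (a < b ↔ (e a).1 < (e b).1) ∧ (σ.2 a < σ.2 b ↔ (e a).2 < (e b).2)

def Gen (S : Finset (ℤ × ℤ)) : Prop :=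
  ∀ p ∈ S, ∀ q ∈ S, p ≠ q → p.1 ≠ q.1 ∧ p.2 ≠ q.2

def Sim (S S' : Finset (ℤ × ℤ)) : Prop :=
  ∃ φ : ℤ × ℤ → ℤ × ℤ, S.image φ = S' ∧
    ∀ p ∈ S, ∀ q ∈ S, (p.1 < q.1 ↔ (φ p).1 < (φ q).1) ∧ (p.2 < q.2 ↔ (φ p).2 < (φ q).2)

lemma e_inj {σ : PPerm} {e : Fin σ.1 → ℤ × ℤ}
    (h : ∀ a b, (a < b ↔ (e a).1 < (e b).1) ∧ (σ.2 a < σ.2 b ↔ (e a).2 < (e b).2)) :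
    Function.Injective e := by
  intro a b hab
  rcases lt_trichotomy a b with h1 | h1 | h1
  · have := (h a b).1.1 h1
    rw [hab] at this; omega
  · exact h1
  · have := (h b a).1.1 h1
    rw [hab] at this; omega

lemma Real.card {S σ} (h : Real S σ) : S.card = σ.1 := by
  obtain ⟨e, rfl, h⟩ := h
  rw [Finset.card_image_of_injective _ (e_inj h)]; simp

lemma Real.gen {S σ} (h : Real S σ) : Gen S := by
  obtain ⟨e, rfl, h⟩ := h
  intro p hp q hq hpq
  simp only [Finset.mem_image, Finset.mem_univ, true_and] at hp hq
  obtain ⟨a, rfl⟩ := hp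
  obtain ⟨b, rfl⟩ := hq
  have hab : a ≠ b := fun h => hpq (by rw [h])
  have hs : σ.2 a ≠ σ.2 b := fun h => hab (σ.2.injective h)
  have h1 := h a b
  have h2 := h b a
  constructor
  · rcases lt_or_gt_of_ne hab with h3 | h3
    · have := h1.1.1 h3; omega
    · have := h2.1.1 h3; omega
  · rcases lt_or_gt_of_ne hs with h3 | h3
    · have := h1.2.1 h3; omega
    · have := h2.2.1 h3; omega

lemma Gen.mono {S T} (h : Gen S) (hT : T ⊆ S) : Gen T :=
  fun p hp q hq => h p (hT hp) q (hT hq)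

lemma exists_real (σ : PPerm) : ∃ S, Real S σ := by
  refine ⟨_, fun i => ((i : ℕ), ((σ.2 i : ℕ) : ℤ)), rfl, fun a b => ?_⟩
  simp

lemma Gen.exists {S} (h : Gen S) : ∃ σ, Real S σ := by
  have h1 : (S.image Prod.fst).card = S.card := by
    apply Finset.card_image_of_injOn
    intro p hp q hq hpq
    by_contra hne
    exact (h p hp q hq hne).1 hpq
  have h2 : (S.image Prod.snd).card = S.card := by
    apply Finset.card_image_of_injOn
    intro p hp q hq hpq
    by_contra hne
    exact (h p hp q hq hne).2 hpq
  let ox := (S.image Prod.fst).orderIsoOfFin h1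
  let oy := (S.image Prod.snd).orderIsoOfFin h2
  have hex : ∀ i : Fin S.card, ∃ p ∈ S, p.1 = (ox i : ℤ) := fun i => by
    obtain ⟨p, hp, h⟩ := Finset.mem_image.1 (ox i).2
    exact ⟨p, hp, h⟩
  choose e he1 he2 using hex
  let g : Fin S.card → Fin S.card := fun i => oy.symm ⟨(e i).2, Finset.mem_image_of_mem _ (he1 i)⟩
  have he : ∀ a b, a < b ↔ (e a).1 < (e b).1 := by
    intro a b; rw [he2, he2]; simp
  have einj : Function.Injective e := by
    intro a b hab
    have h1 := he a b
    have h2 := he b a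
    rw [hab] at h1 h2
    simp at h1 h2
    exact le_antisymm h2 h1
  have hg : Function.Injective g := by
    intro a b hab
    have := oy.symm.injective hab
    simp only [Subtype.mk.injEq] at this
    apply einj
    by_contra hne
    exact (h _ (he1 a) _ (he1 b) hne).2 this
  refine ⟨⟨S.card, Equiv.ofBijective g (Finite.injective_iff_bijective.1 hg)⟩, e, ?_, fun a b => ⟨he a b, ?_⟩⟩
  · apply Finset.eq_of_subset_of_card_le
    · intro p hp
      simp only [Finset.mem_image, Finset.mem_univ, true_and] at hp
      obtain ⟨a, rfl⟩ := hp
      exact he1 a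
    · rw [Finset.card_image_of_injective _ einj]; simp
  · simp [g]

lemma Real.unique {S σ τ} (h : Real S σ) (h' : Real S τ) : σ = τ := by
  have hc := h.card.symm.trans h'.card
  have hgen := h.gen
  obtain ⟨n, σ⟩ := σ
  obtain ⟨m, τ⟩ := τ
  simp only at hc
  subst hc
  obtain ⟨e, hS, h⟩ := h
  obtain ⟨e', hS', h'⟩ := h'
  simp only at e e' h h'
  have hr : Set.range e = Set.range e' := by
    have := hS.trans hS'.symm
    have := congrArg (fun s : Finset (ℤ × ℤ) => (s : Set (ℤ × ℤ))) this
    simpa using this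
  have hfst : (fun a => (e a).1) = fun a => (e' a).1 := by
    apply (StrictMono.range_inj _ _).1
    · have := congrArg (Set.image Prod.fst) hr
      rwa [← Set.range_comp, ← Set.range_comp] at this
    · exact fun a b hab => (h a b).1.1 hab
    · exact fun a b hab => (h' a b).1.1 hab
  have hee : e = e' := by
    funext a
    have ha : e a ∈ S := hS ▸ by simp
    have ha' : e' a ∈ S := hS' ▸ by simp
    by_contra hne
    exact (hgen _ ha _ ha' hne).1 (congrFun hfst a)
  subst hee
  have hsnd : (fun a => (e (σ.symm a)).2) = fun a => (e (τ.symm a)).2 := by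
    apply (StrictMono.range_inj _ _).1
    · change Set.range ((fun a => (e a).2) ∘ σ.symm) = Set.range ((fun a => (e a).2) ∘ τ.symm)
      rw [Set.range_comp, Set.range_comp, σ.symm.range_eq_univ, τ.symm.range_eq_univ]
    · intro a b hab
      refine (h _ _).2.1 ?_
      simpa using hab
    · intro a b hab
      refine (h' _ _).2.1 ?_
      simpa using hab
  have : σ.symm = τ.symm := by
    ext a
    have h1 := congrFun hsnd a
    have : σ.symm a = τ.symm a := by
      by_contra hne
      have hne' : e (σ.symm a) ≠ e (τ.symm a) := fun h2 => hne (e_inj (σ := ⟨n, σ⟩) h h2)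
      refine (hgen _ ?_ _ ?_ hne').2 h1 <;> (rw [← hS]; simp)
    rw [this]
  have : σ = τ := by
    rw [← σ.symm_symm, this, τ.symm_symm]
  rw [this]

lemma Real.sim {S S' σ} (h : Real S σ) (h' : Real S' σ) : Sim S S' := by
  obtain ⟨e, rfl, h⟩ := h
  obtain ⟨e', rfl, h'⟩ := h'
  have hi := e_inj h
  refine ⟨Function.extend e e' (fun x => x), ?_, ?_⟩
  · rw [Finset.image_image]
    congr 1
    funext a
    exact hi.extend_apply _ _ _
  · intro p hp q hq
    simp only [Finset.mem_image, Finset.mem_univ, true_and] at hp hq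
    obtain ⟨a, rfl⟩ := hp
    obtain ⟨b, rfl⟩ := hq
    rw [hi.extend_apply, hi.extend_apply, ← (h a b).1, ← (h a b).2]
    exact h' a b

lemma Real.of_sim {S S' σ} (h : Real S σ) (hs : Sim S S') : Real S' σ := by
  obtain ⟨e, rfl, h⟩ := h
  obtain ⟨φ, rfl, hφ⟩ := hs
  refine ⟨fun a => φ (e a), ?_, fun a b => ?_⟩
  · rw [Finset.image_image]; rfl
  · have := hφ (e a) (by simp) (e b) (by simp)
    rw [← this.1, ← this.2]
    exact h a b

lemma le_iff_real {S σ π} (h : Real S π) : Le σ π ↔ ∃ S' ⊆ S, Real S' σ := by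
  obtain ⟨e, rfl, h⟩ := h
  constructor
  · rintro ⟨f, hf, hf'⟩
    refine ⟨Finset.univ.image (e ∘ f), ?_, e ∘ f, rfl, fun a b => ⟨?_, ?_⟩⟩
    · intro p hp
      simp only [Finset.mem_image, Finset.mem_univ, true_and, Function.comp] at hp ⊢
      obtain ⟨a, rfl⟩ := hp
      exact ⟨_, rfl⟩
    · rw [← hf.lt_iff_lt]; exact (h _ _).1
    · rw [hf' a b]; exact (h _ _).2
  · rintro ⟨S', hS, e', rfl, h'⟩
    have : ∀ a, ∃ b, e b = e' a := fun a => by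
      have := hS (Finset.mem_image_of_mem e' (Finset.mem_univ a))
      simpa using this
    choose f hf using this
    refine ⟨f, fun a b hab => ?_, fun a b => ?_⟩
    · rw [(h _ _).1, hf, hf]; exact (h' a b).1.1 hab
    · rw [(h _ _).2, hf, hf]; exact (h' a b).2

lemma le_refl' (σ : PPerm) : Le σ σ := ⟨id, strictMono_id, fun _ _ => Iff.rfl⟩

lemma le_trans' {σ τ π : PPerm} (h : Le σ τ) (h' : Le τ π) : Le σ π := by
  obtain ⟨f, hf, hf'⟩ := h
  obtain ⟨g, hg, hg'⟩ := h'
  exact ⟨g ∘ f, hg.comp hf, fun a b => (hf' a b).trans (hg' _ _)⟩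

lemma le_len {σ π : PPerm} (h : Le σ π) : σ.1 ≤ π.1 := by
  obtain ⟨f, hf, -⟩ := h
  simpa using Fintype.card_le_of_injective f hf.injective

lemma le_eq_of_len {σ π : PPerm} (h : Le σ π) (hl : π.1 ≤ σ.1) : σ = π := by
  obtain ⟨S, hS⟩ := exists_real π
  obtain ⟨S', hs, hS'⟩ := (le_iff_real hS).1 h
  have : S' = S := Finset.eq_of_subset_of_card_le hs (by rw [hS.card, hS'.card]; exact hl)
  subst this
  exact hS'.unique hS

lemma le_lt_len {σ π : PPerm} (h : Le σ π) (hne : σ ≠ π) : σ.1 < π.1 := by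
  by_contra hh
  exact hne (le_eq_of_len h (by omega))

lemma le_antisymm' {σ π : PPerm} (h : Le σ π) (h' : Le π σ) : σ = π :=
  le_eq_of_len h (le_len h')

/-- The empty permutation. -/
def emp : PPerm := ⟨0, 1⟩

lemma eq_emp {σ : PPerm} (h : σ.1 = 0) : σ = emp := by
  obtain ⟨n, σ⟩ := σ
  simp only at h
  subst h
  unfold emp
  congr 1
  exact Subsingleton.elim _ _

lemma emp_real : Real ∅ emp := ⟨fun a => a.elim0, by
  apply Finset.eq_empty_of_forall_notMem
  simp only [Finset.mem_image, Finset.mem_univ, true_and, not_exists]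
  exact fun p a => a.elim0, fun a => a.elim0⟩

lemma emp_le (σ : PPerm) : Le emp σ := by
  obtain ⟨S, hS⟩ := exists_real σ
  exact (le_iff_real hS).2 ⟨∅, by simp, emp_real⟩

lemma one_real (p : ℤ × ℤ) : Real {p} one := by
  refine ⟨fun _ => p, ?_, fun a b => ?_⟩
  · apply Finset.image_const
    exact ⟨(0 : Fin 1), Finset.mem_univ _⟩
  · have : a = b := Subsingleton.elim (α := Fin 1) _ _
    subst this; simp

lemma one_le {σ : PPerm} (h : σ ≠ emp) : Le one σ := by
  obtain ⟨S, hS⟩ := exists_real σ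
  have : S.Nonempty := by
    rw [← Finset.card_pos, hS.card]
    by_contra hh
    exact h (eq_emp (by omega))
  obtain ⟨p, hp⟩ := this
  exact (le_iff_real hS).2 ⟨{p}, by simpa using hp, one_real p⟩

lemma one_ne_emp : one ≠ emp := fun h => by
  have : one.1 = emp.1 := by rw [h]
  simp [one, emp] at this

/-! ### Corners -/

def crel (c : Fin 4) (p q : ℤ × ℤ) : Prop :=
  match c with
  | 0 => q.1 < p.1 ∧ p.2 < q.2
  | 1 => q.1 < p.1 ∧ q.2 < p.2
  | 2 => p.1 < q.1 ∧ q.2 < p.2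
  | 3 => p.1 < q.1 ∧ p.2 < q.2

def IsCorner (c : Fin 4) (p : ℤ × ℤ) (S : Finset (ℤ × ℤ)) : Prop := ∀ q ∈ S, crel c p q

lemma crel_ne {c p q} (h : crel c p q) : p.1 ≠ q.1 ∧ p.2 ≠ q.2 := by
  fin_cases c <;> simp [crel] at h <;> omega

lemma IsCorner.notMem {c p S} (h : IsCorner c p S) : p ∉ S :=
  fun hp => (crel_ne (h p hp)).1 rfl

lemma IsCorner.mono {c p S T} (h : IsCorner c p S) (hT : T ⊆ S) : IsCorner c p T :=
  fun q hq => h q (hT hq)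

lemma crel_congr {c p q p' q'} (h1 : p.1 < q.1 ↔ p'.1 < q'.1) (h2 : q.1 < p.1 ↔ q'.1 < p'.1)
    (h3 : p.2 < q.2 ↔ p'.2 < q'.2) (h4 : q.2 < p.2 ↔ q'.2 < p'.2) : crel c p q ↔ crel c p' q' := by
  fin_cases c <;> simp [crel, *]

lemma IsCorner.gen {c p S} (h : IsCorner c p S) (hS : Gen S) : Gen (insert p S) := by
  intro x hx y hy hxy
  rw [Finset.mem_insert] at hx hy
  rcases hx with rfl | hx <;> rcases hy with rfl | hy
  · exact absurd rfl hxy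
  · exact crel_ne (h y hy)
  · have := crel_ne (h x hx)
    exact ⟨this.1.symm, this.2.symm⟩
  · exact hS x hx y hy hxy

lemma exists_bound (S : Finset (ℤ × ℤ)) : ∃ N : ℤ, 0 < N ∧ ∀ q ∈ S, -N < q.1 ∧ q.1 < N ∧ -N < q.2 ∧ q.2 < N := by
  induction S using Finset.induction_on with
  | empty => exact ⟨1, by simp⟩
  | insert p S _ ih =>
    obtain ⟨N, h0, hN⟩ := ih
    refine ⟨N + |p.1| + |p.2| + 1, by positivity, fun q hq => ?_⟩
    have h1 := abs_nonneg p.1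
    have h2 := abs_nonneg p.2
    have h3 := neg_abs_le p.1
    have h4 := neg_abs_le p.2
    have h5 := le_abs_self p.1
    have h6 := le_abs_self p.2
    rw [Finset.mem_insert] at hq
    rcases hq with rfl | hq
    · omega
    · have := hN q hq
      omega

lemma exists_corner (c : Fin 4) (S : Finset (ℤ × ℤ)) : ∃ p, IsCorner c p S := by
  obtain ⟨N, -, hN⟩ := exists_bound S
  fin_cases c
  · refine ⟨(N, -N), fun q hq => ?_⟩
    have := hN q hq
    simp only [crel]; omega
  · refine ⟨(N, N), fun q hq => ?_⟩
    have := hN q hq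
    simp only [crel]; omega
  · refine ⟨(-N, N), fun q hq => ?_⟩
    have := hN q hq
    simp only [crel]; omega
  · refine ⟨(-N, -N), fun q hq => ?_⟩
    have := hN q hq
    simp only [crel]; omega

lemma X_exists (c : Fin 4) (α : PPerm) : ∃ σ, ∃ S p, Real S α ∧ IsCorner c p S ∧ Real (insert p S) σ := by
  obtain ⟨S, hS⟩ := exists_real α
  obtain ⟨p, hp⟩ := exists_corner c S
  obtain ⟨σ, hσ⟩ := (hp.gen hS.gen).exists
  exact ⟨σ, S, p, hS, hp, hσ⟩

/-- Adding a corner point. -/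
noncomputable def X (c : Fin 4) (α : PPerm) : PPerm := (X_exists c α).choose

lemma X_spec (c : Fin 4) (α : PPerm) :
    ∃ S p, Real S α ∧ IsCorner c p S ∧ Real (insert p S) (X c α) := (X_exists c α).choose_spec

lemma crel_iff {c : Fin 4} {p q p' q' : ℤ × ℤ} (h : crel c p q) (h' : crel c p' q') :
    ((p.1 < q.1 ↔ p'.1 < q'.1) ∧ (p.2 < q.2 ↔ p'.2 < q'.2)) ∧
    ((q.1 < p.1 ↔ q'.1 < p'.1) ∧ (q.2 < p.2 ↔ q'.2 < p'.2)) := by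
  fin_cases c <;> simp only [crel] at h h' <;> omega

lemma Real.X {c p S α} (h : Real S α) (hp : IsCorner c p S) : Real (insert p S) (X c α) := by
  obtain ⟨S₀, p₀, h0, hp0, hr⟩ := X_spec c α
  obtain ⟨φ, hφ, hφ'⟩ := h0.sim h
  refine hr.of_sim ⟨fun q => if q = p₀ then p else φ q, ?_, ?_⟩
  · rw [Finset.image_insert, if_pos rfl]
    congr 1
    rw [← hφ]
    apply Finset.image_congr
    intro q hq
    have : q ≠ p₀ := fun h => hp0.notMem (h ▸ hq)
    simp [this]
  · have key : ∀ q ∈ S₀, q ≠ p₀ ∧ φ q ∈ S := fun q hq =>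
      ⟨fun h => hp0.notMem (h ▸ hq), hφ ▸ Finset.mem_image_of_mem _ hq⟩
    intro x hx y hy
    rw [Finset.mem_insert] at hx hy
    rcases hx with rfl | hx <;> rcases hy with rfl | hy
    · simp
    · simp only [if_true, if_neg (key y hy).1]
      exact (crel_iff (hp0 y hy) (hp _ (key y hy).2)).1
    · simp only [if_true, if_neg (key x hx).1]
      exact (crel_iff (hp0 x hx) (hp _ (key x hx).2)).2
    · simp only [if_neg (key x hx).1, if_neg (key y hy).1]
      exact hφ' x hx y hy

lemma Real.X_inv {c S α} (h : Real S (Balloon.X c α)) :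
    ∃ p S', S = insert p S' ∧ IsCorner c p S' ∧ Real S' α := by
  obtain ⟨S₀, p₀, h0, hp0, hr⟩ := X_spec c α
  obtain ⟨φ, hφ, hφ'⟩ := hr.sim h
  refine ⟨φ p₀, S₀.image φ, ?_, ?_, ?_⟩
  · rw [← hφ, Finset.image_insert]
  · intro q hq
    rw [Finset.mem_image] at hq
    obtain ⟨x, hx, rfl⟩ := hq
    have h1 := hφ' p₀ (by simp) x (by simp [hx])
    have h2 := hφ' x (by simp [hx]) p₀ (by simp)
    exact (crel_congr h1.1 h2.1 h1.2 h2.2).1 (hp0 x hx)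
  · exact h0.of_sim ⟨φ, rfl, fun p hp q hq => hφ' p (by simp [hp]) q (by simp [hq])⟩

lemma X_len (c α) : (X c α).1 = α.1 + 1 := by
  obtain ⟨S, p, h, hp, hr⟩ := X_spec c α
  rw [← hr.card, ← h.card, Finset.card_insert_of_notMem hp.notMem]

lemma X_emp (c) : X c emp = one := by
  have : IsCorner c (0, 0) ∅ := fun q hq => by simp at hq
  exact (emp_real.X this).unique (by simpa using one_real (0, 0))

lemma le_X_iff {c α lam} : Le lam (X c α) ↔ Le lam α ∨ ∃ τ, Le τ α ∧ lam = X c τ := by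
  obtain ⟨S, p, h, hp, hr⟩ := X_spec c α
  rw [le_iff_real hr, le_iff_real h]
  constructor
  · rintro ⟨S', hS', hl⟩
    by_cases hpS : p ∈ S'
    · right
      have hsub : S'.erase p ⊆ S := by
        intro q hq
        rw [Finset.mem_erase] at hq
        have := hS' hq.2
        rw [Finset.mem_insert] at this
        tauto
      obtain ⟨τ, hτ⟩ := (h.gen.mono hsub).exists
      refine ⟨τ, (le_iff_real h).2 ⟨_, hsub, hτ⟩, ?_⟩
      have := hτ.X (hp.mono hsub)
      rw [Finset.insert_erase hpS] at this
      exact hl.unique this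
    · left
      refine ⟨S', fun q hq => ?_, hl⟩
      have := hS' hq
      rw [Finset.mem_insert] at this
      rcases this with rfl | h
      · contradiction
      · exact h
  · rintro (⟨S', hS', hl⟩ | ⟨τ, hτ, rfl⟩)
    · exact ⟨S', hS'.trans (Finset.subset_insert _ _), hl⟩
    · obtain ⟨S', hS', hl⟩ := (le_iff_real h).1 hτ
      exact ⟨insert p S', Finset.insert_subset_insert _ hS', hl.X (hp.mono hS')⟩

lemma le_X (c α) : Le α (X c α) := le_X_iff.2 (Or.inl (le_refl' _))

lemma X_not_le (c α) : ¬ Le (X c α) α := fun h => by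
  have := le_len h
  rw [X_len] at this
  omega

/-- Two opposite or equal corners of the same set agree only for singletons. -/
lemma corner_two {c d : Fin 4} {p q S T} (h : insert p S = insert q T) (hp : IsCorner c p S)
    (hq : IsCorner d q T) (hpq : p = q) (hcd : c ≠ d) : S = ∅ ∧ T = ∅ := by
  subst hpq
  have hST : S = T := by
    rw [← Finset.erase_insert hp.notMem, h, Finset.erase_insert hq.notMem]
  subst hST
  have : S = ∅ := by
    apply Finset.eq_empty_of_forall_notMem
    intro x hx
    have h1 := hp x hx
    have h2 := hq x hx
    fin_cases c <;> fin_cases d <;> simp [crel] at h1 h2 hcd <;> omega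
  exact ⟨this, this⟩

lemma Real.emp_of {α} (h : Real ∅ α) : α = emp := h.unique emp_real

lemma X_inj {c α β} (h : X c α = X c β) : α = β := by
  obtain ⟨S, hS⟩ := exists_real (X c α)
  obtain ⟨p, S1, h1, hp, r1⟩ := hS.X_inv
  rw [h] at hS
  obtain ⟨q, S2, h2, hq, r2⟩ := hS.X_inv
  have hpq : p = q := by
    by_contra hne
    have e1 : p ∈ S2 := by
      have : p ∈ insert q S2 := by rw [← h2, h1]; simp
      simpa [hne] using this
    have e2 : q ∈ S1 := by
      have : q ∈ insert p S1 := by rw [← h1, h2]; simp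
      simpa [Ne.symm hne] using this
    have a1 := hp q e2
    have a2 := hq p e1
    fin_cases c <;> simp [crel] at a1 a2 <;> omega
  subst hpq
  have : S1 = S2 := by
    rw [← Finset.erase_insert hp.notMem, ← h1, h2, Finset.erase_insert hq.notMem]
  subst this
  exact r1.unique r2

/-- Adjacent corners. -/
lemma X_adj {c d α β} (hcd : d = c + 1 ∨ c = d + 1) (h : X c α = X d β) : α = emp ∧ β = emp := by
  obtain ⟨S, hS⟩ := exists_real (X c α)
  obtain ⟨p, S1, h1, hp, r1⟩ := hS.X_inv
  rw [h] at hS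
  obtain ⟨q, S2, h2, hq, r2⟩ := hS.X_inv
  have hpq : p = q := by
    by_contra hne
    have e1 : p ∈ S2 := by
      have : p ∈ insert q S2 := by rw [← h2, h1]; simp
      simpa [hne] using this
    have e2 : q ∈ S1 := by
      have : q ∈ insert p S1 := by rw [← h1, h2]; simp
      simpa [Ne.symm hne] using this
    have a1 := hp q e2
    have a2 := hq p e1
    fin_cases c <;> fin_cases d <;> simp [crel] at a1 a2 hcd <;> omega
  have hne : c ≠ d := by
    fin_cases c <;> fin_cases d <;> simp at hcd ⊢
  obtain ⟨rfl, rfl⟩ := corner_two (h1.symm.trans h2) hp hq hpq hne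
  exact ⟨r1.emp_of, r2.emp_of⟩

lemma X_opp {c α β} (h : X c α = X (c + 2) β) :
    (α = emp ∧ β = emp) ∨ ∃ γ, α = X (c + 2) γ ∧ β = X c γ := by
  obtain ⟨S, hS⟩ := exists_real (X c α)
  obtain ⟨p, S1, h1, hp, r1⟩ := hS.X_inv
  rw [h] at hS
  obtain ⟨q, S2, h2, hq, r2⟩ := hS.X_inv
  by_cases hpq : p = q
  · left
    have hne : c ≠ c + 2 := by
      fin_cases c <;> simp
    obtain ⟨rfl, rfl⟩ := corner_two (h1.symm.trans h2) hp hq hpq hne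
    exact ⟨r1.emp_of, r2.emp_of⟩
  · right
    have e1 : p ∈ S2 := by
      have : p ∈ insert q S2 := by rw [← h2, h1]; simp
      simpa [hpq] using this
    have e2 : q ∈ S1 := by
      have : q ∈ insert p S1 := by rw [← h1, h2]; simp
      simpa [Ne.symm hpq] using this
    have he : S1.erase q = S2.erase p := by
      rw [← Finset.erase_insert hp.notMem, ← Finset.erase_insert hq.notMem, ← h1, ← h2, Finset.erase_right_comm]
    obtain ⟨γ, hγ⟩ := (r1.gen.mono (Finset.erase_subset q S1)).exists
    refine ⟨γ, ?_, ?_⟩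
    · have := hγ.X (c := c + 2) (p := q) (hq.mono (by rw [he]; exact Finset.erase_subset _ _))
      rw [Finset.insert_erase e2] at this
      exact r1.unique this
    · rw [he] at hγ
      have := hγ.X (c := c) (p := p) (hp.mono (by rw [← he]; exact Finset.erase_subset _ _))
      rw [Finset.insert_erase e1] at this
      exact r2.unique this

lemma X_comm (c α) : X c (X (c + 2) α) = X (c + 2) (X c α) := by
  obtain ⟨S, hS⟩ := exists_real (X c (X (c + 2) α))
  obtain ⟨p, S1, h1, hp, r1⟩ := hS.X_inv
  obtain ⟨q, S2, rfl, hq, r2⟩ := r1.X_inv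
  have hp2 : IsCorner c p S2 := hp.mono (Finset.subset_insert _ _)
  have hpq := hp q (by simp)
  have : IsCorner (c + 2) q (insert p S2) := by
    intro x hx
    rw [Finset.mem_insert] at hx
    rcases hx with rfl | hx
    · fin_cases c <;> simp [crel] at hpq ⊢ <;> omega
    · exact hq x hx
  have := (r2.X hp2).X this
  rw [Finset.insert_comm, ← h1] at this
  exact hS.unique this

/-! ### Balloons -/

def IsBal (S : Finset (ℤ × ℤ)) (l t b r : ℤ × ℤ) : Prop :=
  (l.1 < t.1 ∧ t.1 < b.1 ∧ b.1 < r.1 ∧ b.2 < l.2 ∧ l.2 < r.2 ∧ r.2 < t.2) ∧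
  ∀ q ∈ S, t.1 < q.1 ∧ q.1 < b.1 ∧ l.2 < q.2 ∧ q.2 < r.2

lemma IsBal.mono {S T l t b r} (h : IsBal S l t b r) (hT : T ⊆ S) : IsBal T l t b r :=
  ⟨h.1, fun q hq => h.2 q (hT hq)⟩

abbrev bset (S : Finset (ℤ × ℤ)) (l t b r : ℤ × ℤ) : Finset (ℤ × ℤ) :=
  insert l (insert t (insert b (insert r S)))

lemma IsBal.gen {S l t b r} (h : IsBal S l t b r) (hS : Gen S) : Gen (bset S l t b r) := by
  obtain ⟨h1, h2⟩ := h
  intro x hx y hy hxy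
  simp only [Finset.mem_insert] at hx hy
  rcases hx with rfl | rfl | rfl | rfl | hx <;> rcases hy with rfl | rfl | rfl | rfl | hy <;>
    first
    | exact absurd rfl hxy
    | exact hS x hx y hy hxy
    | omega
    | (have := h2 _ hx; omega)
    | (have := h2 _ hy; omega)

lemma Bal_exists (α : PPerm) :
    ∃ σ, ∃ S l t b r, Real S α ∧ IsBal S l t b r ∧ Real (bset S l t b r) σ := by
  obtain ⟨S, hS⟩ := exists_real α
  obtain ⟨N, h0, hN⟩ := exists_bound S
  have : IsBal S (-N-1, -N) (-N, N+1) (N, -N-1) (N+1, N) := by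
    refine ⟨by simp; omega, fun q hq => ?_⟩
    have := hN q hq
    simp; omega
  obtain ⟨σ, hσ⟩ := (this.gen hS.gen).exists
  exact ⟨σ, S, _, _, _, _, hS, this, hσ⟩

noncomputable def Bal (α : PPerm) : PPerm := (Bal_exists α).choose

lemma Bal_spec (α : PPerm) :
    ∃ S l t b r, Real S α ∧ IsBal S l t b r ∧ Real (bset S l t b r) (Bal α) :=
  (Bal_exists α).choose_spec

lemma Real.Bal {S α l t b r} (h : Real S α) (hb : IsBal S l t b r) :
    Real (bset S l t b r) (Bal α) := by
  obtain ⟨S₀, l₀, t₀, b₀, r₀, h0, hb0, hr⟩ := Bal_spec α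
  obtain ⟨φ, hφ, hφ'⟩ := h0.sim h
  obtain ⟨k1, k2⟩ := hb
  obtain ⟨k3, k4⟩ := hb0
  have n1 : t₀ ≠ l₀ := by rintro rfl; omega
  have n2 : b₀ ≠ l₀ := by rintro rfl; omega
  have n3 : r₀ ≠ l₀ := by rintro rfl; omega
  have n4 : b₀ ≠ t₀ := by rintro rfl; omega
  have n5 : r₀ ≠ t₀ := by rintro rfl; omega
  have n6 : r₀ ≠ b₀ := by rintro rfl; omega
  let ψ : ℤ × ℤ → ℤ × ℤ := fun q =>
    if q = l₀ then l else if q = t₀ then t else if q = b₀ then b else if q = r₀ then r else φ q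
  have e1 : ψ l₀ = l := by simp [ψ]
  have e2 : ψ t₀ = t := by simp [ψ, n1]
  have e3 : ψ b₀ = b := by simp [ψ, n2, n4]
  have e4 : ψ r₀ = r := by simp [ψ, n3, n5, n6]
  have e5 : ∀ q ∈ S₀, ψ q = φ q := by
    intro q hq
    have := k4 q hq
    have m1 : q ≠ l₀ := by rintro rfl; omega
    have m2 : q ≠ t₀ := by rintro rfl; omega
    have m3 : q ≠ b₀ := by rintro rfl; omega
    have m4 : q ≠ r₀ := by rintro rfl; omega
    simp [ψ, m1, m2, m3, m4]
  have key : ∀ q ∈ S₀, (t₀.1 < q.1 ∧ q.1 < b₀.1 ∧ l₀.2 < q.2 ∧ q.2 < r₀.2) ∧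
      (t.1 < (φ q).1 ∧ (φ q).1 < b.1 ∧ l.2 < (φ q).2 ∧ (φ q).2 < r.2) := fun q hq =>
    ⟨k4 q hq, k2 _ (hφ ▸ Finset.mem_image_of_mem _ hq)⟩
  refine hr.of_sim ⟨ψ, ?_, ?_⟩
  · simp only [bset, Finset.image_insert, e1, e2, e3, e4]
    congr 4
    rw [← hφ]
    exact Finset.image_congr e5
  · intro x hx y hy
    simp only [bset, Finset.mem_insert] at hx hy
    rcases hx with rfl | rfl | rfl | rfl | hx <;> rcases hy with rfl | rfl | rfl | rfl | hy <;>
      (try simp only [e1, e2, e3, e4]) <;>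
      first
      | omega
      | (have := key _ hx; rw [e5 _ hx]; omega)
      | (have := key _ hy; rw [e5 _ hy]; omega)
      | (rw [e5 _ hx, e5 _ hy]; exact hφ' x hx y hy)

lemma Real.Bal_inv {S α} (h : Real S (Balloon.Bal α)) :
    ∃ S' l t b r, S = bset S' l t b r ∧ IsBal S' l t b r ∧ Real S' α := by
  obtain ⟨S₀, l₀, t₀, b₀, r₀, h0, ⟨k3, k4⟩, hr⟩ := Bal_spec α
  obtain ⟨φ, hφ, hφ'⟩ := hr.sim h
  refine ⟨S₀.image φ, φ l₀, φ t₀, φ b₀, φ r₀, ?_, ⟨?_, ?_⟩, ?_⟩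
  · rw [← hφ]; simp only [bset, Finset.image_insert]
  · have a1 := hφ' l₀ (by simp [bset]) t₀ (by simp [bset])
    have a2 := hφ' t₀ (by simp [bset]) b₀ (by simp [bset])
    have a3 := hφ' b₀ (by simp [bset]) r₀ (by simp [bset])
    have a4 := hφ' b₀ (by simp [bset]) l₀ (by simp [bset])
    have a5 := hφ' l₀ (by simp [bset]) r₀ (by simp [bset])
    have a6 := hφ' r₀ (by simp [bset]) t₀ (by simp [bset])
    omega
  · intro q hq
    rw [Finset.mem_image] at hq
    obtain ⟨x, hx, rfl⟩ := hq
    have := k4 x hx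
    have a1 := hφ' t₀ (by simp [bset]) x (by simp [bset, hx])
    have a2 := hφ' x (by simp [bset, hx]) b₀ (by simp [bset])
    have a3 := hφ' l₀ (by simp [bset]) x (by simp [bset, hx])
    have a4 := hφ' x (by simp [bset, hx]) r₀ (by simp [bset])
    omega
  · exact h0.of_sim ⟨φ, rfl, fun p hp q hq => hφ' p (by simp [bset, hp]) q (by simp [bset, hq])⟩

/-- Extremality of the four outer points. -/
lemma IsBal.ext {S l t b r} (h : IsBal S l t b r) : ∀ q ∈ bset S l t b r,
    l.1 ≤ q.1 ∧ q.1 ≤ r.1 ∧ b.2 ≤ q.2 ∧ q.2 ≤ t.2 := by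
  obtain ⟨h1, h2⟩ := h
  intro q hq
  simp only [bset, Finset.mem_insert] at hq
  rcases hq with rfl | rfl | rfl | rfl | hq
  · omega
  · omega
  · omega
  · omega
  · have := h2 q hq; omega

lemma IsBal.inner {S l t b r} (h : IsBal S l t b r) :
    S = (((bset S l t b r).erase l).erase t |>.erase b).erase r := by
  obtain ⟨h1, h2⟩ := h
  ext q
  simp only [bset, Finset.mem_erase, Finset.mem_insert]
  constructor
  · intro hq
    have := h2 q hq
    refine ⟨?_, ?_, ?_, ?_, by tauto⟩ <;> (rintro rfl; omega)
  · tauto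

lemma Bal_inj {α β} (h : Bal α = Bal β) : α = β := by
  obtain ⟨S, hS⟩ := exists_real (Bal α)
  have hg := hS.gen
  obtain ⟨S1, l, t, b, r, h1, hb, r1⟩ := hS.Bal_inv
  rw [h] at hS
  obtain ⟨S2, l', t', b', r', h2, hb', r2⟩ := hS.Bal_inv
  have x1 := hb.ext
  have x2 := hb'.ext
  rw [← h1] at x1
  rw [← h2] at x2
  have ml : l ∈ S := by simp [h1, bset]
  have mt : t ∈ S := by simp [h1, bset]
  have mb : b ∈ S := by simp [h1, bset]
  have mr : r ∈ S := by simp [h1, bset]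
  have ml' : l' ∈ S := by simp [h2, bset]
  have mt' : t' ∈ S := by simp [h2, bset]
  have mb' : b' ∈ S := by simp [h2, bset]
  have mr' : r' ∈ S := by simp [h2, bset]
  have el : l = l' := by
    by_contra hne
    have := (hg _ ml _ ml' hne).1
    have := x1 _ ml'
    have := x2 _ ml
    omega
  have er : r = r' := by
    by_contra hne
    have := (hg _ mr _ mr' hne).1
    have := x1 _ mr'
    have := x2 _ mr
    omega
  have et : t = t' := by
    by_contra hne
    have := (hg _ mt _ mt' hne).2
    have := x1 _ mt'
    have := x2 _ mt
    omega
  have eb : b = b' := by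
    by_contra hne
    have := (hg _ mb _ mb' hne).2
    have := x1 _ mb'
    have := x2 _ mb
    omega
  subst el er et eb
  have : S1 = S2 := by rw [hb.inner, hb'.inner, ← h1, ← h2]
  subst this
  exact r1.unique r2

lemma Bal_ne_X {c α β} : Bal α ≠ X c β := by
  intro h
  obtain ⟨S, hS⟩ := exists_real (Bal α)
  obtain ⟨S1, l, t, b, r, h1, hb, r1⟩ := hS.Bal_inv
  rw [h] at hS
  obtain ⟨p, S2, h2, hp, r2⟩ := hS.X_inv
  have hk : ∀ q ∈ bset S1 l t b r, (q.1 = p.1 ∧ q.2 = p.2) ∨ crel c p q := by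
    intro q hq
    rw [← h1, h2, Finset.mem_insert] at hq
    rcases hq with rfl | hq
    · exact Or.inl ⟨rfl, rfl⟩
    · exact Or.inr (hp q hq)
  have x1 := hb.ext p (by rw [← h1, h2]; simp)
  have al := hk l (by simp [bset])
  have at' := hk t (by simp [bset])
  have ab := hk b (by simp [bset])
  have ar := hk r (by simp [bset])
  have k1 := hb.1
  fin_cases c <;> simp only [crel] at al at' ab ar <;> omega

lemma Bal_len (α) : (Bal α).1 = α.1 + 4 := by
  obtain ⟨S, l, t, b, r, h, hb, hr⟩ := Bal_spec α
  rw [← hr.card, ← h.card]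
  obtain ⟨k3, k4⟩ := hb
  have n1 : t ≠ l := by rintro rfl; omega
  have n2 : b ≠ l := by rintro rfl; omega
  have n3 : r ≠ l := by rintro rfl; omega
  have n4 : b ≠ t := by rintro rfl; omega
  have n5 : r ≠ t := by rintro rfl; omega
  have n6 : r ≠ b := by rintro rfl; omega
  have m1 : l ∉ S := fun hq => by have := k4 _ hq; omega
  have m2 : t ∉ S := fun hq => by have := k4 _ hq; omega
  have m3 : b ∉ S := fun hq => by have := k4 _ hq; omega
  have m4 : r ∉ S := fun hq => by have := k4 _ hq; omega
  rw [bset, Finset.card_insert_of_notMem, Finset.card_insert_of_notMem,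
    Finset.card_insert_of_notMem, Finset.card_insert_of_notMem]
  all_goals simp [n1.symm, n2.symm, n3.symm, n4.symm, n5.symm, n6.symm, m1, m2, m3, m4]

lemma Bal_not_le (α) : ¬ Le (Bal α) α := fun h => by
  have := le_len h
  rw [Bal_len] at this
  omega

/-- The coatoms obtained by deleting an outer point. -/
noncomputable def W (c : Fin 4) (α : PPerm) : PPerm := X (c + 2) (X (c + 1) (X c α))

lemma le_Bal_iff {α lam} : Le lam (Bal α) ↔ (∃ c, Le lam (W c α)) ∨ ∃ τ, Le τ α ∧ lam = Bal τ := by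
  obtain ⟨S, l, t, b, r, h, hb, hr⟩ := Bal_spec α
  obtain ⟨k1, k2⟩ := id hb
  have w0 : Real (insert t (insert r (insert b S))) (W 0 α) := by
    refine Real.X (Real.X (Real.X h ?_) ?_) ?_ <;> intro q hq <;>
      (try simp only [Finset.mem_insert] at hq)
    · have := k2 q hq
      simp only [crel]; omega
    · rcases hq with rfl | hq
      · simp [crel]; omega
      · have := k2 q hq
        simp [crel]; omega
    · rcases hq with rfl | rfl | hq
      · simp [crel]; omega
      · simp [crel]; omega
      · have := k2 q hq
        simp [crel]; omega
  have w1 : Real (insert l (insert t (insert r S))) (W 1 α) := by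
    refine Real.X (Real.X (Real.X h ?_) ?_) ?_ <;> intro q hq <;>
      (try simp only [Finset.mem_insert] at hq)
    · have := k2 q hq
      simp only [crel]; omega
    · rcases hq with rfl | hq
      · simp [crel]; omega
      · have := k2 q hq
        simp [crel]; omega
    · rcases hq with rfl | rfl | hq
      · simp [crel]; omega
      · simp [crel]; omega
      · have := k2 q hq
        simp [crel]; omega
  have w2 : Real (insert b (insert l (insert t S))) (W 2 α) := by
    refine Real.X (Real.X (Real.X h ?_) ?_) ?_ <;> intro q hq <;>
      (try simp only [Finset.mem_insert] at hq)
    · have := k2 q hq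
      simp only [crel]; omega
    · rcases hq with rfl | hq
      · simp [crel]; omega
      · have := k2 q hq
        simp [crel]; omega
    · rcases hq with rfl | rfl | hq
      · simp [crel]; omega
      · simp [crel]; omega
      · have := k2 q hq
        simp [crel]; omega
  have w3 : Real (insert r (insert b (insert l S))) (W 3 α) := by
    refine Real.X (Real.X (Real.X h ?_) ?_) ?_ <;> intro q hq <;>
      (try simp only [Finset.mem_insert] at hq)
    · have := k2 q hq
      simp only [crel]; omega
    · rcases hq with rfl | hq
      · simp [crel]; omega
      · have := k2 q hq
        simp [crel]; omega
    · rcases hq with rfl | rfl | hq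
      · simp [crel]; omega
      · simp [crel]; omega
      · have := k2 q hq
        simp [crel]; omega
  rw [le_iff_real hr]
  constructor
  · rintro ⟨S', hS', hl⟩
    have hm : ∀ q ∈ S', q = l ∨ q = t ∨ q = b ∨ q = r ∨ q ∈ S := fun q hq => by
      simpa [bset] using hS' hq
    by_cases ml : l ∈ S'
    swap
    · refine Or.inl ⟨0, (le_iff_real w0).2 ⟨S', fun q hq => ?_, hl⟩⟩
      simp only [Finset.mem_insert]
      rcases hm q hq with rfl | h | h | h | h <;> tauto
    by_cases mt : t ∈ S'
    swap
    · refine Or.inl ⟨3, (le_iff_real w3).2 ⟨S', fun q hq => ?_, hl⟩⟩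
      simp only [Finset.mem_insert]
      rcases hm q hq with h | rfl | h | h | h <;> tauto
    by_cases mb : b ∈ S'
    swap
    · refine Or.inl ⟨1, (le_iff_real w1).2 ⟨S', fun q hq => ?_, hl⟩⟩
      simp only [Finset.mem_insert]
      rcases hm q hq with h | h | rfl | h | h <;> tauto
    by_cases mr : r ∈ S'
    swap
    · refine Or.inl ⟨2, (le_iff_real w2).2 ⟨S', fun q hq => ?_, hl⟩⟩
      simp only [Finset.mem_insert]
      rcases hm q hq with h | h | h | rfl | h <;> tauto
    right
    have hsub : S' ∩ S ⊆ S := Finset.inter_subset_right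
    obtain ⟨τ, hτ⟩ := (h.gen.mono hsub).exists
    refine ⟨τ, (le_iff_real h).2 ⟨_, hsub, hτ⟩, hl.unique ?_⟩
    have := hτ.Bal (hb.mono hsub)
    convert this using 1
    ext q
    simp only [bset, Finset.mem_insert, Finset.mem_inter]
    constructor
    · intro hq
      have := hm q hq
      tauto
    · rintro (rfl | rfl | rfl | rfl | h)
      · assumption
      · assumption
      · assumption
      · assumption
      · exact h.1
  · have big : ∀ T, T ⊆ bset S l t b r → ∀ π, Real T π → Le lam π →
        ∃ S' ⊆ bset S l t b r, Real S' lam := by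
      intro T hT π hπ hle
      obtain ⟨S', hS', hl⟩ := (le_iff_real hπ).1 hle
      exact ⟨S', hS'.trans hT, hl⟩
    rintro (⟨c, hc⟩ | ⟨τ, hτ, rfl⟩)
    · fin_cases c
      · refine big _ ?_ _ w0 hc
        intro q; simp only [bset, Finset.mem_insert]; tauto
      · refine big _ ?_ _ w1 hc
        intro q; simp only [bset, Finset.mem_insert]; tauto
      · refine big _ ?_ _ w2 hc
        intro q; simp only [bset, Finset.mem_insert]; tauto
      · refine big _ ?_ _ w3 hc
        intro q; simp only [bset, Finset.mem_insert]; tauto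
    · obtain ⟨S', hS', hl⟩ := (le_iff_real h).1 hτ
      refine ⟨_, ?_, hl.Bal (hb.mono hS')⟩
      exact Finset.insert_subset_insert _ (Finset.insert_subset_insert _
        (Finset.insert_subset_insert _ (Finset.insert_subset_insert _ hS')))

/-! ### The Möbius function -/

noncomputable def f (lam : PPerm) : ℤ := mu one lam

noncomputable def down (π : PPerm) : Finset PPerm :=
  (Finset.range (π.1 + 1)).sigma fun m =>
    Finset.univ.filter fun p : Equiv.Perm (Fin m) => Le ⟨m, p⟩ π

lemma mem_down {lam π} : lam ∈ down π ↔ Le lam π := by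
  obtain ⟨m, p⟩ := lam
  simp only [down, Finset.mem_sigma, Finset.mem_range, Finset.mem_filter, Finset.mem_univ, true_and]
  constructor
  · exact fun h => h.2
  · intro h
    have := le_len h
    simp only at this
    exact ⟨by omega, h⟩

lemma muAux_fuel (σ : PPerm) : ∀ n m (π : PPerm), π.1 < n → π.1 < m → muAux n σ π = muAux m σ π := by
  intro n
  induction n with
  | zero => intro m π h; omega
  | succ n ih =>
    intro m π hn hm
    obtain ⟨m, rfl⟩ : ∃ k, m = k + 1 := ⟨m - 1, by omega⟩
    simp only [muAux]
    split_ifs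
    · rfl
    · congr 1
      refine Finset.sum_congr rfl fun k hk => Finset.sum_congr rfl fun p hp => ?_
      rw [Finset.mem_range] at hk
      exact ih _ _ (by simp only; omega) (by simp only; omega)
    · rfl

lemma f_emp : f emp = 0 := by
  have : ¬ Le one emp := fun h => by
    have := le_len h
    simp [one, emp] at this
  simp [f, mu, muAux, this, one_ne_emp]

lemma f_one : f one = 1 := by simp [f, mu, muAux]

lemma sum_down_aux (π : PPerm) : ∑ lam ∈ down π, f lam =
    (∑ m ∈ Finset.range π.1, ∑ p ∈ Finset.univ.filter
      (fun p : Equiv.Perm (Fin m) => Le ⟨m, p⟩ π), f ⟨m, p⟩) + f π := by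
  rw [down, Finset.sum_sigma, Finset.sum_range_succ]
  congr 1
  have : Finset.univ.filter (fun p : Equiv.Perm (Fin π.1) => Le ⟨π.1, p⟩ π) = {π.2} := by
    ext p
    simp only [Finset.mem_filter, Finset.mem_univ, true_and, Finset.mem_singleton]
    constructor
    · intro h
      have h1 := le_eq_of_len h (by simp)
      obtain ⟨n, q⟩ := π
      simpa using h1
    · rintro rfl
      exact le_refl' _
  rw [this, Finset.sum_singleton]

lemma sum_down (π : PPerm) : ∑ lam ∈ down π, f lam = if π = one then 1 else 0 := by
  rw [sum_down_aux]
  by_cases he : π = emp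
  · subst he
    rw [if_neg one_ne_emp.symm, f_emp]
    rfl
  split_ifs with h1
  · subst h1
    rw [f_one]
    have : ∀ p : Equiv.Perm (Fin 0), f ⟨0, p⟩ = 0 := fun p => by
      rw [eq_emp (σ := ⟨0, p⟩) rfl, f_emp]
    change (∑ m ∈ Finset.range 1, _) + _ = _
    rw [Finset.sum_range_one, Finset.sum_eq_zero (fun p _ => this p)]
    rfl
  · have : f π = - ∑ m ∈ Finset.range π.1, ∑ p ∈ Finset.univ.filter
      (fun p : Equiv.Perm (Fin m) => Le ⟨m, p⟩ π), f ⟨m, p⟩ := by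
      conv_lhs => rw [f, mu, muAux]
      rw [if_neg (Ne.symm h1), if_pos (one_le he)]
      congr 1
      refine Finset.sum_congr rfl fun m hm => ?_
      rw [Finset.mem_range] at hm
      rw [Finset.sum_congr rfl (fun p _ => muAux_fuel one π.1 (m + 1) ⟨m, p⟩ hm (by simp))]
      refine Finset.sum_subset ?_ ?_
      · intro p hp
        simp only [Finset.mem_filter, Finset.mem_univ, true_and] at hp ⊢
        exact hp.2
      · intro p hp hp'
        simp only [Finset.mem_filter, Finset.mem_univ, true_and] at hp hp'
        have hn : ¬ Le one ⟨m, p⟩ := fun h => hp' ⟨h, hp⟩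
        have hn2 : one ≠ ⟨m, p⟩ := fun h => hn (h ▸ le_refl' _)
        rw [muAux, if_neg hn2, if_neg hn]
    rw [this]; ring

/-- The general recursion principle used both for corners and for balloons. -/
lemma rec_principle (φ : PPerm → PPerm) (hinj : ∀ a b, φ a = φ b → a = b)
    (hle : ∀ a, Le a (φ a)) (hnle : ∀ a, ¬ Le (φ a) a) (s c : ℤ)
    (hsum : ∀ α, ∑ τ ∈ (down α).filter (fun τ => ¬ Le (φ τ) α), f (φ τ) =
      s * (if α = one then 1 else 0) + c * (if α = emp then 1 else 0)) :
    ∀ n α, α.1 = n → f (φ α) = s * f α + (if ∃ τ, α = φ τ then f α else 0)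
      + c * (if α = emp then 1 else 0) - c * (if α = one then 1 else 0) := by
  intro n
  induction n using Nat.strong_induction_on with
  | _ n ih =>
  intro α hα
  set q : PPerm → ℤ := fun α => s * f α + (if ∃ τ, α = φ τ then f α else 0)
      + c * (if α = emp then 1 else 0) - c * (if α = one then 1 else 0) with hq
  -- total sum of q over down α
  have h1 : ∑ τ ∈ down α, q τ = s * (if α = one then 1 else 0)
      + ∑ τ ∈ (down α).filter (fun τ => Le (φ τ) α), f (φ τ)
      + c * (if α = emp then 1 else 0) := by
    simp only [hq]
    rw [Finset.sum_sub_distrib, Finset.sum_add_distrib, Finset.sum_add_distrib,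
      ← Finset.mul_sum, ← Finset.mul_sum, ← Finset.mul_sum, sum_down]
    have e1 : ∑ τ ∈ down α, (if ∃ τ', τ = φ τ' then f τ else 0)
        = ∑ τ ∈ (down α).filter (fun τ => Le (φ τ) α), f (φ τ) := by
      rw [← Finset.sum_filter]
      symm
      apply Finset.sum_bij (fun τ _ => φ τ)
      · intro τ hτ
        rw [Finset.mem_filter] at hτ
        exact Finset.mem_filter.2 ⟨mem_down.2 hτ.2, τ, rfl⟩
      · intro a _ b _ h
        exact hinj a b h
      · intro b hb
        rw [Finset.mem_filter, mem_down] at hb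
        obtain ⟨hb, τ, rfl⟩ := hb
        exact ⟨τ, Finset.mem_filter.2 ⟨mem_down.2 (le_trans' (hle τ) hb), hb⟩, rfl⟩
      · intros; rfl
    have e2 : ∑ τ ∈ down α, (if τ = emp then (1 : ℤ) else 0) = 1 := by
      rw [Finset.sum_ite_eq' (down α) emp, if_pos (mem_down.2 (emp_le _))]
    have e3 : ∑ τ ∈ down α, (if τ = one then (1 : ℤ) else 0) = 1 - if α = emp then 1 else 0 := by
      rw [Finset.sum_ite_eq' (down α) one]
      split_ifs with a1 a2 a2
      · subst a2
        have := le_len (mem_down.1 a1)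
        simp [one, emp] at this
      · rfl
      · rfl
      · exact absurd (mem_down.2 (one_le a2)) a1
    rw [e1, e2, e3]; ring
  have h2 : ∑ τ ∈ down α, f (φ τ) = s * (if α = one then 1 else 0)
      + ∑ τ ∈ (down α).filter (fun τ => Le (φ τ) α), f (φ τ)
      + c * (if α = emp then 1 else 0) := by
    rw [← Finset.sum_filter_add_sum_filter_not (down α) (fun τ => Le (φ τ) α), hsum]; ring
  have hmem : α ∈ down α := mem_down.2 (le_refl' _)
  have h3 : ∑ τ ∈ (down α).erase α, f (φ τ) = ∑ τ ∈ (down α).erase α, q τ := by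
    apply Finset.sum_congr rfl
    intro τ hτ
    rw [Finset.mem_erase, mem_down] at hτ
    exact ih τ.1 (hα ▸ le_lt_len hτ.2 hτ.1) τ rfl
  have h4 := Finset.add_sum_erase (down α) (fun τ => f (φ τ)) hmem
  have h5 := Finset.add_sum_erase (down α) q hmem
  change f (φ α) = q α
  linarith

lemma X_mono {c α β} (h : Le α β) : Le (X c α) (X c β) := le_X_iff.2 (Or.inr ⟨α, h, rfl⟩)

lemma X_eq_one {c α} : X c α = one ↔ α = emp := by
  constructor
  · intro h
    rw [← X_emp c] at h
    exact X_inj h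
  · rintro rfl; exact X_emp c

lemma X_ne_emp {c α} : X c α ≠ emp := fun h => by
  have := X_len c α
  rw [h] at this
  simp [emp] at this

lemma X_sum (c : Fin 4) (α : PPerm) :
    ∑ τ ∈ (down α).filter (fun τ => ¬ Le (X c τ) α), f (X c τ) =
      (-1) * (if α = one then 1 else 0) + 1 * (if α = emp then 1 else 0) := by
  have h1 := sum_down (X c α)
  have h2 : down (X c α) = down α ∪ ((down α).filter (fun τ => ¬ Le (X c τ) α)).image (X c) := by
    ext lam
    simp only [mem_down, Finset.mem_union, Finset.mem_image, Finset.mem_filter, le_X_iff]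
    constructor
    · rintro (h | ⟨τ, h, rfl⟩)
      · exact Or.inl h
      · by_cases h3 : Le (X c τ) α
        · exact Or.inl h3
        · exact Or.inr ⟨τ, ⟨h, h3⟩, rfl⟩
    · rintro (h | ⟨τ, h, rfl⟩)
      · exact Or.inl h
      · exact Or.inr ⟨τ, h.1, rfl⟩
  rw [h2, Finset.sum_union, Finset.sum_image (fun a _ b _ h => X_inj h), sum_down] at h1
  · simp only [X_eq_one] at h1
    linarith
  · rw [Finset.disjoint_left]
    intro lam hl hl'
    simp only [Finset.mem_image, Finset.mem_filter] at hl'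
    obtain ⟨τ, ⟨_, h⟩, rfl⟩ := hl'
    exact h (mem_down.1 hl)

lemma f_X (c : Fin 4) (α : PPerm) : f (X c α) = (-1) * f α + (if ∃ τ, α = X c τ then f α else 0)
      + 1 * (if α = emp then 1 else 0) - 1 * (if α = one then 1 else 0) :=
  rec_principle (X c) (fun _ _ h => X_inj h) (le_X c) (X_not_le c) (-1) 1 (X_sum c) _ α rfl

lemma f_X_neg {c α} (h1 : α ≠ emp) (h2 : ∀ τ, α ≠ X c τ) : f (X c α) = - f α := by
  have h3 : α ≠ one := fun h => h2 emp (by rw [h, X_emp])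
  have h4 : ¬ ∃ τ, α = X c τ := fun ⟨τ, h⟩ => h2 τ h
  rw [f_X, if_neg h1, if_neg h3, if_neg h4]; ring

/-! ### Stepping down through corners -/

lemma le_X_of_ne {c α lam} (h : Le lam (X c α)) (hn : ∀ τ, lam ≠ X c τ) : Le lam α := by
  rcases le_X_iff.1 h with h | ⟨τ, _, h⟩
  · exact h
  · exact absurd h (hn τ)

lemma X_le_X {c α β} (h : Le (X c α) (X c β)) : Le α β := by
  rcases le_X_iff.1 h with h | ⟨τ, h, h'⟩
  · exact le_trans' (le_X c α) h
  · rw [X_inj h']; exact h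

/-- `c` and `d` are adjacent corners. -/
def Adj (c d : Fin 4) : Prop := d = c + 1 ∨ c = d + 1

lemma X_adj_ne {c d α β} (h : Adj c d) (hα : α ≠ emp) : X c α ≠ X d β :=
  fun h' => hα (X_adj h h').1

lemma X_le_adj {c d α β} (h : Adj c d) (hα : α ≠ emp) (hle : Le (X c α) (X d β)) : Le (X c α) β :=
  le_X_of_ne hle fun _ => X_adj_ne h hα

/-- `X (c+1) (X c τ)` is not of the form `X (c+3) _`. -/
lemma XX_ne {c τ γ} (hτ : τ ≠ emp) : X (c + 1) (X c τ) ≠ X (c + 1 + 2) γ := by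
  intro h
  rcases X_opp h with h | ⟨δ, h, _⟩
  · exact X_ne_emp h.1
  · refine X_adj_ne (d := c + 1 + 2) ?_ hτ h
    fin_cases c <;> simp [Adj]

lemma adj1 (c : Fin 4) : Adj c (c + 1) := Or.inl rfl
lemma adj1' (c : Fin 4) : Adj (c + 1) c := Or.inr rfl
lemma adj3 (c : Fin 4) : Adj c (c + 3) := by fin_cases c <;> simp [Adj]
lemma adj21 (c : Fin 4) : Adj (c + 2) (c + 1) := by fin_cases c <;> simp [Adj]
lemma adj12 (c : Fin 4) : Adj (c + 1) (c + 2) := by fin_cases c <;> simp [Adj]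
lemma adj23 (c : Fin 4) : Adj (c + 2) (c + 3) := by fin_cases c <;> simp [Adj]

/-- The set `D` of patterns below `β` with two opposite corners. -/
def InD (β lam : PPerm) : Prop := ∃ c : Fin 4, Le lam (X (c + 2) (X c β))

lemma InD.iff {β lam} (c : Fin 4) : InD β lam ↔
    Le lam (X (c + 2) (X c β)) ∨ Le lam (X (c + 3) (X (c + 1) β)) := by
  have a1 : X 0 (X 2 β) = X 2 (X 0 β) := X_comm 0 β
  have a2 : X 1 (X 3 β) = X 3 (X 1 β) := X_comm 1 β
  constructor
  · rintro ⟨d, h⟩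
    fin_cases c <;> fin_cases d <;> simp_all
  · rintro (h | h)
    · exact ⟨_, h⟩
    · refine ⟨c + 1, ?_⟩
      convert h using 2
      fin_cases c <;> rfl

lemma two_notInD {c β τ} (hτ : τ ≠ emp) (h : ¬ Le (X c τ) β) : ¬ InD β (X (c + 1) (X c τ)) := by
  rw [InD.iff c]
  have k : ¬ Le (X (c + 1) (X c τ)) β := fun hh => h (le_trans' (le_X _ _) hh)
  rintro (h1 | h1)
  · exact k (X_le_adj (adj1' c) X_ne_emp (X_le_adj (adj12 c) X_ne_emp h1))
  · have a2 : X (c + 3) (X (c + 1) β) = X (c + 1) (X (c + 3) β) := by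
      have := X_comm (c + 1) β
      rw [add_assoc] at this
      exact this.symm
    rw [a2] at h1
    exact h (X_le_adj (adj3 c) hτ (X_le_X h1))

lemma three_notInD {c β τ} (h : ¬ Le (X c τ) β) : ¬ InD β (W c τ) := by
  rw [InD.iff c]
  have k : ¬ Le (X (c + 1) (X c τ)) β := fun hh => h (le_trans' (le_X _ _) hh)
  rintro (h1 | h1)
  · exact k (X_le_adj (adj1' c) X_ne_emp (X_le_X h1))
  · exact k (le_trans' (le_X _ _) (X_le_adj (adj21 c) X_ne_emp (X_le_adj (adj23 c) X_ne_emp h1)))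

/-- Index set for the patterns of `C` outside `D`. -/
noncomputable def idx (β : PPerm) : Finset (Fin 4 × PPerm) :=
  (Finset.univ ×ˢ down β).filter fun i => ¬ Le (X i.1 i.2) β

lemma mem_idx {β c τ} : (c, τ) ∈ idx β ↔ Le τ β ∧ ¬ Le (X c τ) β := by
  simp [idx, mem_down]

lemma idx_ne {β c τ} (hβ : β ≠ emp) (h : (c, τ) ∈ idx β) : τ ≠ emp := by
  rintro rfl
  rw [mem_idx, X_emp] at h
  exact h.2 (one_le hβ)

lemma inC_iff {β lam} : (∃ c, Le lam (W c β)) ↔ InD β lam ∨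
    (∃ i ∈ idx β, X (i.1 + 1) (X i.1 i.2) = lam) ∨ (∃ i ∈ idx β, W i.1 i.2 = lam) := by
  constructor
  · rintro ⟨c, h⟩
    have d0 : ∀ e, Le lam (X e β) → InD β lam := fun e he => ⟨e, le_trans' he (le_X _ _)⟩
    have two : ∀ e ν, Le ν β → lam = X (e + 1) (X e ν) → InD β lam ∨
        (∃ i ∈ idx β, X (i.1 + 1) (X i.1 i.2) = lam) ∨ (∃ i ∈ idx β, W i.1 i.2 = lam) := by
      rintro e ν hν rfl
      by_cases hX : Le (X e ν) β
      · exact Or.inl (d0 _ (X_mono hX))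
      · exact Or.inr (Or.inl ⟨(e, ν), mem_idx.2 ⟨hν, hX⟩, rfl⟩)
    have add2 : c + 2 = c + 1 + 1 := by fin_cases c <;> rfl
    rcases le_X_iff.1 h with h1 | ⟨ξ, h1, rfl⟩
    · rcases le_X_iff.1 h1 with h2 | ⟨ν, h2, rfl⟩
      · exact Or.inl (d0 _ h2)
      · rcases le_X_iff.1 h2 with h3 | ⟨τ, h3, rfl⟩
        · exact Or.inl (d0 _ (X_mono h3))
        · exact two c τ h3 rfl
    · rcases le_X_iff.1 h1 with h2 | ⟨ν, h2, rfl⟩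
      · exact Or.inl ⟨c, X_mono h2⟩
      · rcases le_X_iff.1 h2 with h3 | ⟨τ, h3, rfl⟩
        · exact two (c + 1) ν h3 (by rw [add2])
        · by_cases hX : Le (X c τ) β
          · exact two (c + 1) _ hX (by rw [add2])
          · exact Or.inr (Or.inr ⟨(c, τ), mem_idx.2 ⟨h3, hX⟩, rfl⟩)
  · rintro (⟨c, h⟩ | ⟨⟨c, τ⟩, h, rfl⟩ | ⟨⟨c, τ⟩, h, rfl⟩)
    · exact ⟨c, le_trans' h (X_mono (le_X _ _))⟩
    · exact ⟨c, le_trans' (X_mono (X_mono (mem_idx.1 h).1)) (le_X _ _)⟩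
    · exact ⟨c, X_mono (X_mono (X_mono (mem_idx.1 h).1))⟩

lemma fin4_cases (c d : Fin 4) : d = c ∨ d = c + 2 ∨ Adj c d := by
  revert c d; unfold Adj; decide

lemma adj_add (c d e : Fin 4) (h : Adj c d) : Adj (c + e) (d + e) := by
  revert c d e; unfold Adj; decide

lemma adj_aux (c : Fin 4) : Adj (c + 1) (c + 2 + 2) := by
  revert c; unfold Adj; decide

lemma fin4_aux (c d : Fin 4) (h : d + 2 = c + 1) : c = d + 1 := by
  revert c d; decide

lemma two_inj {β} (hβ : β ≠ emp) : Set.InjOn (fun i : Fin 4 × PPerm => X (i.1 + 1) (X i.1 i.2))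
    (idx β) := by
  rintro ⟨c, τ⟩ h ⟨d, τ'⟩ h' heq
  have hτ := idx_ne hβ h
  simp only at heq
  rcases fin4_cases c d with rfl | rfl | hcd
  · rw [X_inj (X_inj heq)]
  · exfalso
    have : c + 2 + 1 = c + 1 + 2 := by fin_cases c <;> rfl
    rw [this] at heq
    exact XX_ne hτ heq
  · exact absurd heq (X_adj_ne (adj_add _ _ _ hcd) X_ne_emp)

lemma three_inj {β} (hβ : β ≠ emp) : Set.InjOn (fun i : Fin 4 × PPerm => W i.1 i.2)
    (idx β) := by
  rintro ⟨c, τ⟩ h ⟨d, τ'⟩ h' heq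
  have hτ := idx_ne hβ h
  simp only [W] at heq
  rcases fin4_cases c d with rfl | rfl | hcd
  · rw [X_inj (X_inj (X_inj heq))]
  · exfalso
    rcases X_opp heq with h | ⟨δ, h, _⟩
    · exact X_ne_emp h.1
    · exact X_adj_ne (adj_aux c) X_ne_emp h
  · exact absurd heq (X_adj_ne (adj_add _ _ _ hcd) X_ne_emp)

lemma two_ne_three {β c d τ τ'} (hβ : β ≠ emp) (h : (c, τ) ∈ idx β) (h' : (d, τ') ∈ idx β) :
    X (c + 1) (X c τ) ≠ W d τ' := by
  intro heq
  have hτ := idx_ne hβ h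
  simp only [W] at heq
  rcases fin4_cases (c + 1) (d + 2) with hc | hc | hcd
  · rw [hc] at heq
    have h1 := X_inj heq
    have : c = d + 1 := fin4_aux c d hc
    rw [this] at h1
    have h2 := X_inj h1
    exact (mem_idx.1 h').2 (h2 ▸ (mem_idx.1 h).1)
  · rw [hc] at heq
    exact XX_ne hτ heq
  · exact X_adj_ne hcd X_ne_emp heq

noncomputable def Cset (β : PPerm) : Finset PPerm :=
  (down (Bal β)).filter fun lam => ∃ c, Le lam (W c β)

lemma mem_Cset {β lam} : lam ∈ Cset β ↔ ∃ c, Le lam (W c β) := by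
  simp only [Cset, Finset.mem_filter, mem_down]
  constructor
  · exact fun h => h.2
  · exact fun h => ⟨le_Bal_iff.2 (Or.inl h), h⟩

noncomputable def Dset (β : PPerm) : Finset PPerm :=
  down (X 2 (X 0 β)) ∪ down (X 3 (X 1 β))

lemma mem_Dset {β lam} : lam ∈ Dset β ↔ InD β lam := by
  rw [InD.iff 0, Dset, Finset.mem_union, mem_down, mem_down]; rfl

lemma Dset_inter {β : PPerm} (hβ : β ≠ emp) :
    down (X 2 (X 0 β)) ∩ down (X 3 (X 1 β)) = down β := by
  ext lam
  simp only [Finset.mem_inter, mem_down]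
  constructor
  · rintro ⟨h1, h2⟩
    have key : ∀ e ν, lam = X e ν → Adj e 3 → Adj e 1 → Le lam β := by
      rintro e ν rfl a3 a1
      by_cases hν : ν = emp
      · rw [hν, X_emp]; exact one_le hβ
      · exact X_le_adj a1 hν (X_le_adj a3 hν h2)
    by_cases k2 : ∃ ν, lam = X 2 ν
    · obtain ⟨ν, hν⟩ := k2
      exact key 2 ν hν (by unfold Adj; decide) (by unfold Adj; decide)
    by_cases k0 : ∃ ν, lam = X 0 ν
    · obtain ⟨ν, hν⟩ := k0
      exact key 0 ν hν (by unfold Adj; decide) (by unfold Adj; decide)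
    exact le_X_of_ne (le_X_of_ne h1 fun τ h => k2 ⟨τ, h⟩) fun τ h => k0 ⟨τ, h⟩
  · exact fun h => ⟨le_trans' h (le_trans' (le_X _ _) (le_X _ _)),
      le_trans' h (le_trans' (le_X _ _) (le_X _ _))⟩

lemma Dset_sum {β : PPerm} (hβ : β ≠ emp) :
    ∑ lam ∈ Dset β, f lam = - (if β = one then 1 else 0) := by
  have h := Finset.sum_union_inter (s₁ := down (X 2 (X 0 β))) (s₂ := down (X 3 (X 1 β))) (f := f)
  rw [Dset_inter hβ, sum_down, sum_down, sum_down,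
    if_neg (fun h => X_ne_emp (X_eq_one.1 h)), if_neg (fun h => X_ne_emp (X_eq_one.1 h))] at h
  rw [Dset]
  linarith

lemma Cset_sum {β : PPerm} (hβ : β ≠ emp) :
    ∑ lam ∈ Cset β, f lam = - (if β = one then 1 else 0) := by
  have h1 : Cset β = Dset β ∪ ((idx β).image (fun i => X (i.1 + 1) (X i.1 i.2)) ∪
      (idx β).image (fun i => W i.1 i.2)) := by
    ext lam
    simp only [mem_Cset, Finset.mem_union, mem_Dset, Finset.mem_image]
    exact inC_iff
  rw [h1, Finset.sum_union, Finset.sum_union, Finset.sum_image (two_inj hβ),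
    Finset.sum_image (three_inj hβ), Dset_sum hβ, ← Finset.sum_add_distrib, Finset.sum_eq_zero]
  · simp
  · rintro ⟨c, τ⟩ h
    have hτ := idx_ne hβ h
    have : f (W c τ) = - f (X (c + 1) (X c τ)) :=
      f_X_neg X_ne_emp fun γ => X_adj_ne (adj12 c) X_ne_emp
    simp only [this]; ring
  · rw [Finset.disjoint_left]
    intro lam hl hl'
    simp only [Finset.mem_image] at hl hl'
    obtain ⟨⟨c, τ⟩, h, rfl⟩ := hl
    obtain ⟨⟨d, τ'⟩, h', heq⟩ := hl'
    exact two_ne_three hβ h h' heq.symm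
  · rw [Finset.disjoint_left]
    intro lam hl hl'
    rw [mem_Dset] at hl
    simp only [Finset.mem_union, Finset.mem_image] at hl'
    rcases hl' with ⟨⟨c, τ⟩, h, rfl⟩ | ⟨⟨c, τ⟩, h, rfl⟩
    · exact two_notInD (idx_ne hβ h) (mem_idx.1 h).2 hl
    · exact three_notInD (mem_idx.1 h).2 hl

lemma Bal_le_W {c τ β} : Le (Bal τ) (W c β) ↔ Le (Bal τ) β := by
  constructor
  · intro h
    exact le_X_of_ne (le_X_of_ne (le_X_of_ne h fun _ => Bal_ne_X) fun _ => Bal_ne_X)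
      fun _ => Bal_ne_X
  · intro h
    exact le_trans' h (le_trans' (le_X _ _) (le_trans' (le_X _ _) (le_X _ _)))

lemma Bal_ne_one (α) : Bal α ≠ one := fun h => by
  have := Bal_len α
  rw [h] at this
  simp [one] at this

lemma Bal_split (β : PPerm) : ∑ lam ∈ Cset β, f lam +
    ∑ τ ∈ (down β).filter (fun τ => ¬ Le (Bal τ) β), f (Bal τ) = 0 := by
  have h1 := sum_down (Bal β)
  have h2 : down (Bal β) = Cset β ∪ ((down β).filter (fun τ => ¬ Le (Bal τ) β)).image Bal := by
    ext lam
    simp only [mem_down, Finset.mem_union, Finset.mem_image, Finset.mem_filter, mem_Cset,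
      le_Bal_iff]
    constructor
    · rintro (h | ⟨τ, h, rfl⟩)
      · exact Or.inl h
      · by_cases h3 : Le (Bal τ) β
        · exact Or.inl ⟨0, Bal_le_W.2 h3⟩
        · exact Or.inr ⟨τ, ⟨h, h3⟩, rfl⟩
    · rintro (h | ⟨τ, h, rfl⟩)
      · exact Or.inl h
      · exact Or.inr ⟨τ, h.1, rfl⟩
  rw [h2, Finset.sum_union, Finset.sum_image (fun a _ b _ h => Bal_inj h),
    if_neg (Bal_ne_one _)] at h1
  · exact h1
  · rw [Finset.disjoint_left]
    intro lam hl hl'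
    simp only [Finset.mem_image, Finset.mem_filter] at hl'
    obtain ⟨τ, ⟨_, h⟩, rfl⟩ := hl'
    obtain ⟨c, hc⟩ := mem_Cset.1 hl
    exact h (Bal_le_W.1 hc)

/-! ### The empty balloon -/

lemma X_one_opp (c : Fin 4) : X (c + 2) one = X c one := by
  have := X_comm c emp
  rw [X_emp, X_emp] at this
  exact this.symm

lemma f_X_one (c : Fin 4) : f (X c one) = -1 := by
  rw [f_X, if_pos ⟨emp, (X_emp c).symm⟩, if_neg one_ne_emp, if_pos rfl, f_one]; norm_num

lemma le_one_iff {lam} : Le lam one ↔ lam = emp ∨ lam = one := by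
  rw [← X_emp 0, le_X_iff]
  constructor
  · rintro (h | ⟨τ, h, rfl⟩)
    · exact Or.inl (eq_emp (by have := le_len h; simpa [emp] using this))
    · rw [eq_emp (σ := τ) (by have := le_len h; simpa [emp] using this)]
      exact Or.inr rfl
  · rintro (rfl | rfl)
    · exact Or.inl (le_refl' _)
    · exact Or.inr ⟨emp, le_refl' _, rfl⟩

lemma le_X_one_iff {c lam} : Le lam (X c one) ↔ lam = emp ∨ lam = one ∨ lam = X c one := by
  rw [le_X_iff]
  constructor
  · rintro (h | ⟨τ, h, rfl⟩)
    · rcases le_one_iff.1 h with h | h <;> tauto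
    · rcases le_one_iff.1 h with rfl | rfl
      · rw [X_emp]; tauto
      · tauto
  · rintro (rfl | rfl | rfl)
    · exact Or.inl (emp_le _)
    · exact Or.inl (le_refl' _)
    · exact Or.inr ⟨one, le_refl' _, rfl⟩

lemma W_emp (c : Fin 4) : W c emp = X (c + 2) (X (c + 1) one) := by rw [W, X_emp]

lemma le_W_emp_iff {c lam} : Le lam (W c emp) ↔
    lam = emp ∨ lam = one ∨ lam = X 0 one ∨ lam = X 1 one ∨ lam = W c emp := by
  have a1 : X 2 one = X 0 one := X_one_opp 0
  have a2 : X 3 one = X 1 one := X_one_opp 1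
  have a3 : (X (c + 1) one = X 0 one ∧ X (c + 2) one = X 1 one) ∨
      (X (c + 1) one = X 1 one ∧ X (c + 2) one = X 0 one) := by
    fin_cases c <;> simp [a1, a2]
  rw [W_emp, le_X_iff]
  constructor
  · rintro (h | ⟨τ, h, rfl⟩)
    · rcases le_X_one_iff.1 h with h | h | h
      · tauto
      · tauto
      · rcases a3 with ⟨a, b⟩ | ⟨a, b⟩ <;> rw [a] at h <;> tauto
    · rcases le_X_one_iff.1 h with rfl | rfl | rfl
      · rw [X_emp]; tauto
      · rcases a3 with ⟨a, b⟩ | ⟨a, b⟩ <;> rw [b] <;> tauto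
      · tauto
  · have b1 : Le one (X (c + 1) one) := le_X _ _
    rintro (rfl | rfl | h | h | rfl)
    · exact Or.inl (emp_le _)
    · exact Or.inl b1
    · rcases a3 with ⟨a, b⟩ | ⟨a, b⟩
      · left; rw [h, ← a]; exact le_refl' _
      · right; exact ⟨one, b1, by rw [h, b]⟩
    · rcases a3 with ⟨a, b⟩ | ⟨a, b⟩
      · right; exact ⟨one, b1, by rw [h, b]⟩
      · left; rw [h, ← a]; exact le_refl' _
    · exact Or.inr ⟨_, le_refl' _, rfl⟩

lemma W_emp_len (c) : (W c emp).1 = 3 := by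
  simp only [W, X_len]; rfl

lemma f_W_emp (c) : f (W c emp) = 1 := by
  rw [W_emp, f_X_neg X_ne_emp (fun τ => X_adj_ne (adj12 c) one_ne_emp), f_X_one]; norm_num

lemma W_emp_inj : Function.Injective (fun c => W c emp) := by
  intro c d heq
  simp only [W_emp] at heq
  rcases fin4_cases c d with rfl | rfl | hcd
  · rfl
  · exfalso
    rcases X_opp heq with h | ⟨δ, h, _⟩
    · exact X_ne_emp h.1
    · exact X_adj_ne (adj_aux c) one_ne_emp h
  · exact absurd heq (X_adj_ne (adj_add _ _ _ hcd) X_ne_emp)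

lemma Cset_emp_sum : ∑ lam ∈ Cset emp, f lam = 3 := by
  have h1 : Cset emp = ({emp, one, X 0 one, X 1 one} : Finset PPerm) ∪
      Finset.univ.image (fun c => W c emp) := by
    ext lam
    simp only [mem_Cset, le_W_emp_iff, Finset.mem_union, Finset.mem_insert,
      Finset.mem_singleton, Finset.mem_image, Finset.mem_univ, true_and]
    constructor
    · rintro ⟨c, h | h | h | h | h⟩
      · tauto
      · tauto
      · tauto
      · tauto
      · exact Or.inr ⟨c, h.symm⟩
    · rintro (h | ⟨c, h⟩)
      · exact ⟨0, by tauto⟩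
      · exact ⟨c, by tauto⟩
  have l1 : ∀ c, (X c one).1 = 2 := fun c => by rw [X_len]; rfl
  have n01 : X 0 one ≠ X 1 one := X_adj_ne (adj1 0) one_ne_emp
  have n1 : ∀ c, one ≠ X c one := fun c h => by
    have := l1 c
    rw [← h] at this
    simp [one] at this
  rw [h1, Finset.sum_union, Finset.sum_image (fun a _ b _ h => W_emp_inj h),
    Finset.sum_insert, Finset.sum_insert, Finset.sum_insert, Finset.sum_singleton]
  · simp only [f_emp, f_one, f_X_one, f_W_emp]; simp
  · simpa using n01
  · simp [n1]
  · simp [one_ne_emp.symm, X_ne_emp.symm]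
  · rw [Finset.disjoint_left]
    intro lam hl hl'
    simp only [Finset.mem_insert, Finset.mem_singleton, Finset.mem_image, Finset.mem_univ,
      true_and] at hl hl'
    obtain ⟨c, rfl⟩ := hl'
    have := W_emp_len c
    rcases hl with h | h | h | h <;> rw [h] at this
    · simp [emp] at this
    · simp [one] at this
    · rw [l1] at this; omega
    · rw [l1] at this; omega

lemma Bal_sum (β : PPerm) :
    ∑ τ ∈ (down β).filter (fun τ => ¬ Le (Bal τ) β), f (Bal τ) =
      1 * (if β = one then 1 else 0) + (-3) * (if β = emp then 1 else 0) := by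
  have h := Bal_split β
  by_cases hβ : β = emp
  · subst hβ
    rw [Cset_emp_sum] at h
    rw [if_neg one_ne_emp.symm, if_pos rfl]
    linarith
  · rw [Cset_sum hβ] at h
    rw [if_neg hβ]
    linarith

lemma le_Bal (α) : Le α (Bal α) :=
  le_Bal_iff.2 (Or.inl ⟨0, le_trans' (le_X _ _) (le_trans' (le_X _ _) (le_X _ _))⟩)

lemma f_Bal (α : PPerm) : f (Bal α) = 1 * f α + (if ∃ τ, α = Bal τ then f α else 0)
      + (-3) * (if α = emp then 1 else 0) - (-3) * (if α = one then 1 else 0) :=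
  rec_principle Bal (fun _ _ h => Bal_inj h) le_Bal Bal_not_le 1 (-3) Bal_sum _ α rfl

lemma f_Bal_emp : f (Bal emp) = -3 := by
  have : ¬ ∃ τ, emp = Bal τ := by
    rintro ⟨τ, h⟩
    have := Bal_len τ
    rw [← h] at this
    simp [emp] at this
  rw [f_Bal, if_neg this, if_pos rfl, if_neg one_ne_emp.symm, f_emp]; norm_num

/-! ### Comparison with the frozen definition of balloons -/

lemma eq_Bal {β π : PPerm} (h : IsBalloon2413 β π) : π = Bal β := by
  obtain ⟨n, σ⟩ := π
  obtain ⟨hn, h⟩ := h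
  simp only at hn h
  subst hn
  let e : Fin (β.1 + 4) → ℤ × ℤ := fun i => ((i : ℕ), ((σ i : ℕ) : ℤ))
  have hr : Real (Finset.univ.image e) ⟨β.1 + 4, σ⟩ := ⟨e, rfl, fun a b => by simp [e]⟩
  let e' : Fin β.1 → ℤ × ℤ := fun t => ((t : ℕ) + 2, ((β.2 t : ℕ) : ℤ) + 2)
  have hr' : Real (Finset.univ.image e') β := ⟨e', rfl, fun a b => by simp [e']⟩
  have hb : IsBal (Finset.univ.image e') (0, 1) (1, β.1 + 3) (β.1 + 2, 0) (β.1 + 3, β.1 + 2) := by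
    refine ⟨by simp; omega, fun q hq => ?_⟩
    simp only [Finset.mem_image, Finset.mem_univ, true_and] at hq
    obtain ⟨t, rfl⟩ := hq
    have := t.2
    have := (β.2 t).2
    simp only [e']
    omega
  have key : Finset.univ.image e =
      bset (Finset.univ.image e') (0, 1) (1, β.1 + 3) (β.1 + 2, 0) (β.1 + 3, β.1 + 2) := by
    have v0 := (h ⟨0, by omega⟩).1 rfl
    have v1 := (h ⟨1, by omega⟩).2.1 rfl
    have v2 := (h ⟨β.1 + 2, by omega⟩).2.2.2.1 rfl
    have v3 := (h ⟨β.1 + 3, by omega⟩).2.2.2.2 rfl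
    have vt := fun t : Fin β.1 => (h ⟨t + 2, by omega⟩).2.2.1 t rfl
    ext q
    simp only [bset, Finset.mem_insert, Finset.mem_image, Finset.mem_univ, true_and]
    constructor
    · rintro ⟨i, rfl⟩
      have hi := i.2
      by_cases i0 : (i : ℕ) = 0
      · left
        simp only [e, (h i).1 i0, i0]; rfl
      by_cases i1 : (i : ℕ) = 1
      · right; left
        simp only [e, (h i).2.1 i1, i1]; push_cast; rfl
      by_cases i2 : (i : ℕ) = β.1 + 2
      · right; right; left
        simp only [e, (h i).2.2.2.1 i2, i2]; push_cast; rfl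
      by_cases i3 : (i : ℕ) = β.1 + 3
      · right; right; right; left
        simp only [e, (h i).2.2.2.2 i3, i3]; push_cast; rfl
      right; right; right; right
      refine ⟨⟨i - 2, by omega⟩, ?_⟩
      have := (h i).2.2.1 ⟨i - 2, by omega⟩ (by simp only; omega)
      simp only [e, e', this]
      ext
      · simp only; omega
      · simp
    · rintro (rfl | rfl | rfl | rfl | ⟨t, rfl⟩)
      · exact ⟨⟨0, by omega⟩, by simp only [e, v0]; rfl⟩
      · exact ⟨⟨1, by omega⟩, by simp only [e, v1]; push_cast; rfl⟩
      · exact ⟨⟨β.1 + 2, by omega⟩, by simp [e, v2]⟩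
      · exact ⟨⟨β.1 + 3, by omega⟩, by simp [e, v3]⟩
      · exact ⟨⟨t + 2, by omega⟩, by simp [e, e', vt t]⟩
  rw [key] at hr
  exact hr.unique (hr'.Bal hb)

lemma exists_balloon (γ : PPerm) : ∃ π, IsBalloon2413 γ π := by
  obtain ⟨b, β⟩ := γ
  let g : Fin (b + 4) → Fin (b + 4) := fun i =>
    if (i : ℕ) = 0 then ⟨1, by omega⟩ else
    if (i : ℕ) = 1 then ⟨b + 3, by omega⟩ else
    if h : (i : ℕ) < b + 2 then
      (if h0 : 2 ≤ (i : ℕ) then ⟨β ⟨i - 2, by omega⟩ + 2, by omega⟩ else ⟨0, by omega⟩) else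
    if (i : ℕ) = b + 2 then ⟨0, by omega⟩ else ⟨b + 2, by omega⟩
  have g0 : ∀ i : Fin (b + 4), (i : ℕ) = 0 → (g i : ℕ) = 1 := fun i h => by simp only [g]; rw [if_pos h]
  have g1 : ∀ i : Fin (b + 4), (i : ℕ) = 1 → (g i : ℕ) = b + 3 := fun i h => by
    simp only [g]; rw [if_neg (by omega), if_pos h]
  have g2 : ∀ i : Fin (b + 4), (i : ℕ) = b + 2 → (g i : ℕ) = 0 := fun i h => by
    simp only [g]; rw [if_neg (by omega), if_neg (by omega), dif_neg (by omega), if_pos h]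
  have g3 : ∀ i : Fin (b + 4), (i : ℕ) = b + 3 → (g i : ℕ) = b + 2 := fun i h => by
    simp only [g]; rw [if_neg (by omega), if_neg (by omega), dif_neg (by omega), if_neg (by omega)]
  have gt : ∀ (i : Fin (b + 4)) (t : Fin b), (i : ℕ) = t + 2 → (g i : ℕ) = β t + 2 := by
    intro i t h
    have := t.2
    simp only [g]; rw [if_neg (by omega), if_neg (by omega), dif_pos (by omega)]; simp [h]
  have cases' : ∀ i : Fin (b + 4), (i : ℕ) = 0 ∨ (i : ℕ) = 1 ∨ (i : ℕ) = b + 2 ∨ (i : ℕ) = b + 3 ∨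
      ∃ t : Fin b, (i : ℕ) = t + 2 := by
    intro i
    have := i.2
    by_cases h : 2 ≤ (i : ℕ) ∧ (i : ℕ) < b + 2
    · right; right; right; right
      exact ⟨⟨i - 2, by omega⟩, by simp only; omega⟩
    · omega
  have ginj : Function.Injective g := by
    intro i j hij
    have hij' : (g i : ℕ) = g j := by rw [hij]
    apply Fin.ext
    rcases cases' i with h | h | h | h | ⟨t, h⟩ <;> rcases cases' j with k | k | k | k | ⟨u, k⟩ <;>
      first
      | omega
      | skip
    all_goals
      first
      | rw [g0 i h] at hij'
      | rw [g1 i h] at hij'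
      | rw [g2 i h] at hij'
      | rw [g3 i h] at hij'
      | rw [gt i t h] at hij'
    all_goals
      first
      | rw [g0 j k] at hij'
      | rw [g1 j k] at hij'
      | rw [g2 j k] at hij'
      | rw [g3 j k] at hij'
      | rw [gt j u k] at hij'
    all_goals
      first
      | omega
      | (have := (β t).2; omega)
      | (have := (β u).2; omega)
      | (have : t = u := β.injective (Fin.ext (by omega))
         rw [h, k, this])
  refine ⟨⟨b + 4, Equiv.ofBijective g (Finite.injective_iff_bijective.1 ginj)⟩, rfl, fun p => ?_⟩
  exact ⟨g0 p, g1 p, gt p, g2 p, g3 p⟩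

lemma balloon_Bal (γ : PPerm) : IsBalloon2413 γ (Bal γ) := by
  obtain ⟨π, h⟩ := exists_balloon γ
  rw [← eq_Bal h]
  exact h

lemma p2413_eq : p2413 = Bal emp := by
  apply eq_Bal
  refine ⟨rfl, fun p => ?_⟩
  simp only [emp]
  change Fin 4 at p
  refine ⟨?_, ?_, fun t => t.elim0, ?_, ?_⟩ <;> intro h <;> fin_cases p <;>
    first
    | rfl
    | (simp at h)

end Balloon

/-- **(Theorem `theorem-2413-balloons`.)**  Let `β` be a nonempty permutation
and `π = B(β)` its 2413-balloon.  Then `μ(1,π) = 4` if `β = 1`;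
`μ(1,π) = −6` if `β = 2413`; `μ(1,π) = 2·μ(1,β)` if `β` is a 2413-balloon;
and `μ(1,π) = μ(1,β)` otherwise. -/
theorem mu_of_balloon (β π : PPerm) (hβ : 0 < β.1) (hπ : IsBalloon2413 β π) :
    (β = PPerm.one → mu PPerm.one π = 4) ∧
    (β = p2413 → mu PPerm.one π = -6) ∧
    ((∃ γ : PPerm, 0 < γ.1 ∧ IsBalloon2413 γ β) →
      mu PPerm.one π = 2 * mu PPerm.one β) ∧
    (β ≠ PPerm.one → β ≠ p2413 → ¬ (∃ γ : PPerm, 0 < γ.1 ∧ IsBalloon2413 γ β) →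
      mu PPerm.one π = mu PPerm.one β) := by
  have hπ' := Balloon.eq_Bal hπ
  have hne : β ≠ Balloon.emp := by
    rintro rfl
    simp [Balloon.emp] at hβ
  have main := Balloon.f_Bal β
  rw [← hπ'] at main
  change mu PPerm.one π = 1 * mu PPerm.one β + (if ∃ τ, β = Balloon.Bal τ then mu PPerm.one β else 0)
      + (-3) * (if β = Balloon.emp then 1 else 0) - (-3) * (if β = PPerm.one then 1 else 0) at main
  rw [if_neg hne] at main
  have hB1 : (∃ τ, β = Balloon.Bal τ) → β ≠ PPerm.one := by
    rintro ⟨τ, rfl⟩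
    exact Balloon.Bal_ne_one τ
  refine ⟨fun h => ?_, fun h => ?_, ?_, fun h1 h2 h3 => ?_⟩
  · have hn : ¬ ∃ τ, β = Balloon.Bal τ := fun hh => hB1 hh h
    rw [if_neg hn, if_pos h] at main
    have : mu PPerm.one β = 1 := by rw [h]; exact Balloon.f_one
    rw [main, this]; norm_num
  · have hp : ∃ τ, β = Balloon.Bal τ := ⟨Balloon.emp, by rw [h, Balloon.p2413_eq]⟩
    rw [if_pos hp, if_neg (hB1 hp)] at main
    have : mu PPerm.one β = -3 := by
      rw [h, Balloon.p2413_eq]; exact Balloon.f_Bal_emp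
    rw [main, this]; norm_num
  · rintro ⟨γ, _, hγ⟩
    have hp : ∃ τ, β = Balloon.Bal τ := ⟨γ, Balloon.eq_Bal hγ⟩
    rw [if_pos hp, if_neg (hB1 hp)] at main
    rw [main]; ring
  · have hn : ¬ ∃ τ, β = Balloon.Bal τ := by
      rintro ⟨τ, h⟩
      by_cases hτ : τ = Balloon.emp
      · exact h2 (by rw [h, hτ, Balloon.p2413_eq])
      · refine h3 ⟨τ, ?_, h ▸ Balloon.balloon_Bal τ⟩
        by_contra hh
        exact hτ (Balloon.eq_emp (by omega))
    rw [if_neg hn, if_neg h1] at main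
    rw [main]; ring
end

section
/- Let α and β be nonempty permutations with |α| = a, and let k be an integer with 0 ≤ k ≤ a. Then there exists an integer c such that μ(1, W_k(α,β)) = c · μ(1,β); that is, the principal Möbius function of any wedge permutation W_k(α,β) is an integer multiple of the principal Möbius function of β. -/
/-!
The permutation pattern poset and its Möbius function.

A permutation of length `n` is represented as an element of the symmetric
group on `Fin n`; the collection of all permutations of all lengths is the
sigma type `PPerm`.  Pattern containment `PPerm.Le` makes `PPerm` into the
permutation pattern poset, and `mu` is its Möbius function, defined by the
usual recursion `μ(σ,σ) = 1`, `μ(σ,π) = -∑_{σ ≤ λ < π} μ(σ,λ)` for `σ < π`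
and `μ(σ,π) = 0` otherwise.
-/

open scoped Classical

/-- `π` is the wedge permutation `W_k(α,β)`: writing `a = |α|` and `b = |β|`,
`π` is the permutation of length `a + b` with (1-indexed) entry sequence
`α(1), …, α(k), β(1)+a, …, β(b)+a, α(k+1), …, α(a)`. -/
def IsWedge (α β : PPerm) (k : ℕ) (π : PPerm) : Prop :=
  π.1 = α.1 + β.1 ∧
    (∀ (s : Fin α.1) (p : Fin π.1),
        (((s : ℕ) < k ∧ (p : ℕ) = (s : ℕ)) ∨
          (k ≤ (s : ℕ) ∧ (p : ℕ) = β.1 + (s : ℕ))) →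
        (π.2 p : ℕ) = (α.2 s : ℕ)) ∧
    ∀ (t : Fin β.1) (p : Fin π.1), (p : ℕ) = k + (t : ℕ) →
      (π.2 p : ℕ) = α.1 + (β.2 t : ℕ)

/-! ### Abstract finite configurations of points -/

/-- A finite configuration of points with distinct positions and distinct values. -/
structure Conf where
  X : Type
  fin : Finite X
  p : X → ℕ
  v : X → ℕ
  hp : Function.Injective p
  hv : Function.Injective v
  N : ℕ
  hN : ∀ x, v x < N ∧ p x < N

namespace Conf

instance (C : Conf) : Finite C.X := C.fin

def Emb (C D : Conf) (f : C.X → D.X) : Prop :=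
  (∀ x y, C.p x < C.p y ↔ D.p (f x) < D.p (f y)) ∧
  (∀ x y, C.v x < C.v y ↔ D.v (f x) < D.v (f y))

def le (C D : Conf) : Prop := ∃ f, Emb C D f

noncomputable def card (C : Conf) : ℕ := Nat.card C.X

theorem le_refl (C : Conf) : le C C := ⟨id, fun _ _ => Iff.rfl, fun _ _ => Iff.rfl⟩

theorem le_trans {C D E : Conf} : le C D → le D E → le C E := by
  rintro ⟨f, hf, hf'⟩ ⟨g, hg, hg'⟩
  exact ⟨g ∘ f, fun x y => (hf x y).trans (hg _ _), fun x y => (hf' x y).trans (hg' _ _)⟩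

theorem Emb.inj {C D : Conf} {f : C.X → D.X} (h : Emb C D f) : Function.Injective f := by
  intro x y hxy
  apply C.hp
  have h1 := h.1 x y
  have h2 := h.1 y x
  rw [hxy] at h1 h2
  omega

theorem card_le {C D : Conf} (h : le C D) : C.card ≤ D.card := by
  obtain ⟨f, hf⟩ := h
  exact Nat.card_le_card_of_injective f hf.inj

theorem Emb.rev {C D : Conf} {f : C.X → D.X} (h : Emb C D f) (hs : Function.Surjective f) :
    le D C := by
  refine ⟨Function.surjInv hs, fun x y => ?_, fun x y => ?_⟩
  · rw [h.1, Function.surjInv_eq hs x, Function.surjInv_eq hs y]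
  · rw [h.2, Function.surjInv_eq hs x, Function.surjInv_eq hs y]

theorem rev_of_card {C D : Conf} (h : le C D) (hc : D.card ≤ C.card) : le D C := by
  have h0 := card_le h
  obtain ⟨f, hf⟩ := h
  apply hf.rev
  have : Function.Bijective f := by
    rw [Nat.bijective_iff_injective_and_card]
    exact ⟨hf.inj, _root_.le_antisymm h0 hc⟩
  exact this.2

/-- Restriction to a subset. -/
def res (C : Conf) (T : Set C.X) : Conf where
  X := T
  fin := inferInstance
  p := fun x => C.p x
  v := fun x => C.v x
  hp := fun x y h => Subtype.ext (C.hp h)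
  hv := fun x y h => Subtype.ext (C.hv h)
  N := C.N
  hN := fun x => C.hN x

theorem res_mono (C : Conf) {T U : Set C.X} (h : T ⊆ U) : le (C.res T) (C.res U) :=
  ⟨fun x => ⟨x.1, h x.2⟩, fun _ _ => Iff.rfl, fun _ _ => Iff.rfl⟩

/-- The wedge of two configurations. -/
def W (A : Conf) (k : ℕ) (D : Conf) : Conf where
  X := A.X ⊕ D.X
  fin := inferInstance
  p := Sum.elim (fun s => if A.p s < k then A.p s else D.N + A.p s) (fun t => k + D.p t)
  v := Sum.elim A.v (fun t => A.N + D.v t)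
  hp := by
    rintro (x | x) (y | y) h
    · simp only [Sum.elim_inl] at h
      congr 1
      apply A.hp
      split_ifs at h <;> omega
    · have := D.hN y
      simp only [Sum.elim_inl, Sum.elim_inr] at h
      split_ifs at h <;> omega
    · have := D.hN x
      simp only [Sum.elim_inl, Sum.elim_inr] at h
      split_ifs at h <;> omega
    · simp only [Sum.elim_inr] at h
      congr 1
      apply D.hp
      omega
  hv := by
    rintro (x | x) (y | y) h
    · simp only [Sum.elim_inl] at h
      congr 1
      exact A.hv h
    · have := A.hN x
      simp only [Sum.elim_inl, Sum.elim_inr] at h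
      omega
    · have := A.hN y
      simp only [Sum.elim_inl, Sum.elim_inr] at h
      omega
    · simp only [Sum.elim_inr] at h
      congr 1
      apply D.hv
      omega
  N := A.N + D.N + k
  hN := by
    rintro (x | x)
    · have := A.hN x
      simp only [Sum.elim_inl]
      split_ifs <;> omega
    · have := D.hN x
      simp only [Sum.elim_inr]
      omega

section
variable (A : Conf) (k : ℕ) (D : Conf)

theorem W_card : (W A k D).card = A.card + D.card := Nat.card_sum

theorem Wp_ll (x y : A.X) : (W A k D).p (Sum.inl x) < (W A k D).p (Sum.inl y) ↔ A.p x < A.p y := by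
  simp only [W, Sum.elim_inl]
  split_ifs <;> omega

theorem Wp_lr (x : A.X) (y : D.X) :
    (W A k D).p (Sum.inl x) < (W A k D).p (Sum.inr y) ↔ A.p x < k := by
  have := D.hN y
  simp only [W, Sum.elim_inl, Sum.elim_inr]
  split_ifs <;> omega

theorem Wp_rl (x : D.X) (y : A.X) :
    (W A k D).p (Sum.inr x) < (W A k D).p (Sum.inl y) ↔ k ≤ A.p y := by
  have := D.hN x
  simp only [W, Sum.elim_inl, Sum.elim_inr]
  split_ifs <;> omega

theorem Wp_rr (x y : D.X) : (W A k D).p (Sum.inr x) < (W A k D).p (Sum.inr y) ↔ D.p x < D.p y := by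
  simp only [W, Sum.elim_inr]
  omega

theorem Wv_ll (x y : A.X) : (W A k D).v (Sum.inl x) < (W A k D).v (Sum.inl y) ↔ A.v x < A.v y :=
  Iff.rfl

theorem Wv_lr (x : A.X) (y : D.X) :
    (W A k D).v (Sum.inl x) < (W A k D).v (Sum.inr y) ↔ True := by
  have := A.hN x
  simp only [W, Sum.elim_inl, Sum.elim_inr, iff_true, iff_false]
  omega

theorem Wv_rl (x : D.X) (y : A.X) :
    (W A k D).v (Sum.inr x) < (W A k D).v (Sum.inl y) ↔ False := by
  have := A.hN y
  simp only [W, Sum.elim_inl, Sum.elim_inr, iff_true, iff_false]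
  omega

theorem Wv_rr (x y : D.X) : (W A k D).v (Sum.inr x) < (W A k D).v (Sum.inr y) ↔ D.v x < D.v y := by
  simp only [W, Sum.elim_inr]
  omega

theorem W_mono {D E : Conf} (h : le D E) : le (W A k D) (W A k E) := by
  obtain ⟨f, hf⟩ := h
  refine ⟨Sum.map id f, ?_, ?_⟩
  · rintro (x | x) (y | y) <;>
      simp only [Sum.map_inl, Sum.map_inr, id, Wp_ll, Wp_lr, Wp_rl, Wp_rr]
    exact hf.1 x y
  · rintro (x | x) (y | y) <;>
      simp only [Sum.map_inl, Sum.map_inr, id, Wv_ll, Wv_lr, Wv_rl, Wv_rr]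
    exact hf.2 x y

theorem W_res_le (S : Set A.X) : le (W (A.res S) k D) (W A k D) := by
  refine ⟨Sum.map Subtype.val id, ?_, ?_⟩
  · rintro (x | x) (y | y)
    · exact (Wp_ll (A.res S) k D x y).trans (Wp_ll A k D x.1 y.1).symm
    · exact (Wp_lr (A.res S) k D x y).trans (Wp_lr A k D x.1 y).symm
    · exact (Wp_rl (A.res S) k D x y).trans (Wp_rl A k D x y.1).symm
    · exact (Wp_rr (A.res S) k D x y).trans (Wp_rr A k D x y).symm
  · rintro (x | x) (y | y)
    · exact (Wv_ll (A.res S) k D x y).trans (Wv_ll A k D x.1 y.1).symm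
    · exact (Wv_lr (A.res S) k D x y).trans (Wv_lr A k D x.1 y).symm
    · exact (Wv_rl (A.res S) k D x y).trans (Wv_rl A k D x y.1).symm
    · exact (Wv_rr (A.res S) k D x y).trans (Wv_rr A k D x y).symm

theorem inr_emb : Emb D (W A k D) Sum.inr :=
  ⟨fun x y => (Wp_rr A k D x y).symm, fun x y => (Wv_rr A k D x y).symm⟩

end

/-- Decomposition of anything below a wedge. -/
theorem decomp {C A D : Conf} {k : ℕ} (h : le C (W A k D)) :
    ∃ T : Set C.X, (∀ x y, x ∈ T → C.v x < C.v y → y ∈ T) ∧ le (C.res T) D ∧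
      ∃ S : Set A.X, le C (W (A.res S) k (C.res T)) ∧ le (W (A.res S) k (C.res T)) C := by
  obtain ⟨f, hf⟩ := h
  let T : Set C.X := {x | ∃ t, f x = Sum.inr t}
  let S : Set A.X := {s | ∃ x, f x = Sum.inl s}
  refine ⟨T, ?_, ?_, S, ?_⟩
  · rintro x y ⟨t, ht⟩ hxy
    rcases hy : f y with s | t'
    · rw [hf.2, ht, hy, Wv_rl] at hxy
      exact hxy.elim
    · exact ⟨t', hy⟩
  · choose g hg using fun x : (C.res T).X => x.2
    refine ⟨g, fun x y => ?_, fun x y => ?_⟩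
    · have := hf.1 x.1 y.1
      rw [hg, hg, Wp_rr] at this
      exact this
    · have := hf.2 x.1 y.1
      rw [hg, hg, Wv_rr] at this
      exact this
  · have key : ∀ x : C.X, ∃ z : (W (A.res S) k (C.res T)).X,
        (∃ s t, f x = Sum.inl s ∧ z = Sum.inl ⟨s, t⟩) ∨
        (∃ s t, f x = Sum.inr s ∧ z = Sum.inr ⟨x, t⟩) := by
      intro x
      rcases hx : f x with s | t
      · exact ⟨Sum.inl ⟨s, x, hx⟩, Or.inl ⟨s, ⟨x, hx⟩, rfl, rfl⟩⟩
      · exact ⟨Sum.inr ⟨x, t, hx⟩, Or.inr ⟨t, ⟨t, hx⟩, rfl, rfl⟩⟩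
    choose g hg using key
    have hE : Emb C (W (A.res S) k (C.res T)) g := by
      constructor
      · intro x y
        have h0 := hf.1 x y
        rcases hg x with ⟨s, m, hs, hz⟩ | ⟨s, m, hs, hz⟩ <;>
        rcases hg y with ⟨s', m', hs', hz'⟩ | ⟨s', m', hs', hz'⟩ <;>
        rw [hs, hs'] at h0 <;> rw [hz, hz']
        · exact (h0.trans (Wp_ll A k D s s')).trans
            (Wp_ll (A.res S) k (C.res T) ⟨s, m⟩ ⟨s', m'⟩).symm
        · exact (h0.trans (Wp_lr A k D s s')).trans
            (Wp_lr (A.res S) k (C.res T) ⟨s, m⟩ ⟨y, m'⟩).symm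
        · exact (h0.trans (Wp_rl A k D s s')).trans
            (Wp_rl (A.res S) k (C.res T) ⟨x, m⟩ ⟨s', m'⟩).symm
        · exact (Wp_rr (A.res S) k (C.res T) ⟨x, m⟩ ⟨y, m'⟩).symm
      · intro x y
        have h0 := hf.2 x y
        rcases hg x with ⟨s, m, hs, hz⟩ | ⟨s, m, hs, hz⟩ <;>
        rcases hg y with ⟨s', m', hs', hz'⟩ | ⟨s', m', hs', hz'⟩ <;>
        rw [hs, hs'] at h0 <;> rw [hz, hz']
        · exact (h0.trans (Wv_ll A k D s s')).trans
            (Wv_ll (A.res S) k (C.res T) ⟨s, m⟩ ⟨s', m'⟩).symm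
        · exact (h0.trans (Wv_lr A k D s s')).trans
            (Wv_lr (A.res S) k (C.res T) ⟨s, m⟩ ⟨y, m'⟩).symm
        · exact (h0.trans (Wv_rl A k D s s')).trans
            (Wv_rl (A.res S) k (C.res T) ⟨x, m⟩ ⟨s', m'⟩).symm
        · exact (Wv_rr (A.res S) k (C.res T) ⟨x, m⟩ ⟨y, m'⟩).symm
    refine ⟨⟨g, hE⟩, hE.rev ?_⟩
    rintro (⟨s, x, hx⟩ | ⟨x, t, hx⟩)
    · refine ⟨x, ?_⟩
      rcases hg x with ⟨s', m, hs, hz⟩ | ⟨s', m, hs, hz⟩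
      · rw [hx] at hs
        cases hs
        exact hz
      · rw [hx] at hs
        cases hs
    · refine ⟨x, ?_⟩
      rcases hg x with ⟨s', m, hs, hz⟩ | ⟨s', m, hs, hz⟩
      · rw [hx] at hs
        cases hs
      · exact hz

theorem exists_rank {X : Type} [Finite X] (p : X → ℕ) (hp : Function.Injective p) :
    ∃ e : X ≃ Fin (Nat.card X), ∀ x y, p x < p y ↔ e x < e y := by
  letI := Fintype.ofFinite X
  letI : LinearOrder X := LinearOrder.lift' p hp
  let e := Fintype.orderIsoFinOfCardEq X (Nat.card_eq_fintype_card (α := X)).symm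
  exact ⟨e.symm.toEquiv, fun x y => (e.symm.lt_iff_lt (x := x) (y := y)).symm⟩

/-- The configuration of a permutation. -/
def ofPerm (σ : PPerm) : Conf where
  X := Fin σ.1
  fin := inferInstance
  p := fun x => x
  v := fun x => σ.2 x
  hp := Fin.val_injective
  hv := fun x y h => σ.2.injective (Fin.val_injective h)
  N := σ.1
  hN := fun x => ⟨(σ.2 x).2, x.2⟩

theorem card_ofPerm (σ : PPerm) : (ofPerm σ).card = σ.1 := by
  simp [card, ofPerm]

theorem le_iff (σ π : PPerm) : PPerm.Le σ π ↔ le (ofPerm σ) (ofPerm π) := by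
  constructor
  · rintro ⟨f, hf, h⟩
    exact ⟨f, fun x y => (hf.lt_iff_lt).symm, h⟩
  · rintro ⟨f, hf, h⟩
    exact ⟨f, fun x y hxy => (hf x y).1 hxy, h⟩

theorem exists_std (C : Conf) : ∃ σ : PPerm, le C (ofPerm σ) ∧ le (ofPerm σ) C := by
  obtain ⟨e, he⟩ := exists_rank C.p C.hp
  obtain ⟨g, hg⟩ := exists_rank C.v C.hv
  have hE : Emb C (ofPerm ⟨Nat.card C.X, e.symm.trans g⟩) e := by
    refine ⟨he, fun x y => ?_⟩
    rw [hg]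
    simp [ofPerm]
  exact ⟨⟨Nat.card C.X, e.symm.trans g⟩, ⟨e, hE⟩, hE.rev e.surjective⟩

noncomputable def std (C : Conf) : PPerm := (exists_std C).choose
theorem le_std (C : Conf) : le C (ofPerm C.std) := (exists_std C).choose_spec.1
theorem std_le (C : Conf) : le (ofPerm C.std) C := (exists_std C).choose_spec.2
theorem std_card (C : Conf) : C.std.1 = C.card := by
  have h1 := card_le C.le_std
  have h2 := card_le C.std_le
  rw [card_ofPerm] at h1 h2
  omega

end Conf

open Conf

theorem PLe_refl (σ : PPerm) : PPerm.Le σ σ := (le_iff _ _).2 (Conf.le_refl _)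

theorem PLe_trans {σ τ π : PPerm} (h : PPerm.Le σ τ) (h' : PPerm.Le τ π) : PPerm.Le σ π := by
  rw [le_iff] at *
  exact Conf.le_trans h h'

theorem PLe_len {σ π : PPerm} (h : PPerm.Le σ π) : σ.1 ≤ π.1 := by
  rw [le_iff] at h
  simpa [card_ofPerm] using card_le h

theorem strictMono_perm_eq {n : ℕ} (e : Equiv.Perm (Fin n)) (h : StrictMono e) : e = 1 := by
  have : (h.orderIsoOfSurjective e e.surjective) = OrderIso.refl _ := Subsingleton.elim _ _
  ext x
  have := congrArg (fun g : Fin n ≃o Fin n => g x) this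
  simpa using congrArg Fin.val this

theorem PLe_eq {σ π : PPerm} (h : PPerm.Le σ π) (hl : π.1 ≤ σ.1) : σ = π := by
  have h0 := PLe_len h
  obtain ⟨n, s⟩ := σ
  obtain ⟨m, t⟩ := π
  obtain rfl : n = m := le_antisymm h0 hl
  obtain ⟨f, hf, hft⟩ := h
  simp only at f hf hft
  have hb : Function.Bijective f := Finite.injective_iff_bijective.1 hf.injective
  have hf1 : Equiv.ofBijective f hb = 1 := strictMono_perm_eq _ hf
  have hfx : ∀ x, f x = x := fun x => by
    have := congrArg (fun g : Equiv.Perm (Fin n) => g x) hf1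
    simpa using this
  have h2 : s.symm.trans t = 1 := by
    apply strictMono_perm_eq
    intro x y hxy
    have := hft (s.symm x) (s.symm y)
    simp only [hfx, Equiv.apply_symm_apply] at this
    exact this.1 hxy
  congr 1
  ext x
  have := congrArg (fun g : Equiv.Perm (Fin n) => g (s x)) h2
  simp at this
  rw [this]

theorem PLe_antisymm {σ π : PPerm} (h : PPerm.Le σ π) (h' : PPerm.Le π σ) : σ = π :=
  PLe_eq h (PLe_len h')

theorem one_le_iff (σ : PPerm) : PPerm.Le PPerm.one σ ↔ 0 < σ.1 := by
  constructor
  · intro h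
    exact PLe_len h
  · intro h
    refine ⟨fun _ => ⟨0, h⟩, ?_, ?_⟩
    · intro x y hxy
      exact absurd hxy (by rw [Subsingleton.elim (α := Fin 1) x y]; exact lt_irrefl _)
    · intro x y
      rw [Subsingleton.elim (α := Fin 1) x y]
      simp

/-! ### The Möbius function -/

theorem muAux_eq (σ : PPerm) : ∀ (N : ℕ) (π : PPerm) (n : ℕ), π.1 ≤ N → π.1 + 1 ≤ n →
    muAux n σ π = mu σ π := by
  intro N
  induction N using Nat.strong_induction_on with
  | _ N ih =>
    intro π n hN hn
    obtain ⟨n, rfl⟩ : ∃ m, n = m + 1 := ⟨n - 1, by omega⟩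
    unfold mu
    simp only [muAux]
    congr 2
    congr 1
    apply Finset.sum_congr rfl
    intro m hm
    apply Finset.sum_congr rfl
    intro p _
    rw [Finset.mem_range] at hm
    rw [ih m (by omega) ⟨m, p⟩ n le_rfl (by simp only; omega),
      ih m (by omega) ⟨m, p⟩ π.1 le_rfl (by simp only; omega)]

theorem mu_one_one : mu PPerm.one PPerm.one = 1 := by
  simp [mu, muAux]

noncomputable def F (σ : PPerm) : ℤ := mu PPerm.one σ

/-- nonempty permutations below `π`. -/
noncomputable def Idl (π : PPerm) : Finset PPerm :=
  (Finset.range (π.1 + 1)).sigma fun m => Finset.univ.filter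
    (fun p : Equiv.Perm (Fin m) => PPerm.Le PPerm.one ⟨m, p⟩ ∧ PPerm.Le ⟨m, p⟩ π)

theorem mem_Idl (l π : PPerm) : l ∈ Idl π ↔ 0 < l.1 ∧ PPerm.Le l π := by
  rw [Idl, Finset.mem_sigma, Finset.mem_filter, Finset.mem_range, one_le_iff]
  constructor
  · rintro ⟨_, _, h⟩
    exact h
  · rintro h
    exact ⟨Nat.lt_succ_of_le (PLe_len h.2), Finset.mem_univ _, h⟩

theorem sum_Idl (π : PPerm) (h : 1 < π.1) : ∑ l ∈ Idl π, F l = 0 := by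
  rw [Idl, Finset.sum_sigma, Finset.sum_range_succ]
  have h1 : (Finset.univ.filter (fun p : Equiv.Perm (Fin π.1) =>
      PPerm.Le PPerm.one ⟨π.1, p⟩ ∧ PPerm.Le ⟨π.1, p⟩ π)) = {π.2} := by
    ext p
    simp only [Finset.mem_filter, Finset.mem_univ, true_and, Finset.mem_singleton, one_le_iff]
    constructor
    · rintro ⟨_, hp⟩
      have := PLe_eq hp le_rfl
      obtain ⟨n, s⟩ := π
      simpa using this
    · rintro rfl
      exact ⟨by omega, PLe_refl π⟩
  rw [h1, Finset.sum_singleton]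
  have hne : PPerm.one ≠ π := by
    rintro rfl
    exact absurd h (by simp [PPerm.one])
  have h2 : F ⟨π.1, π.2⟩ = - ∑ m ∈ Finset.range π.1, ∑ p ∈ Finset.univ.filter
      (fun p : Equiv.Perm (Fin m) => PPerm.Le PPerm.one ⟨m, p⟩ ∧ PPerm.Le ⟨m, p⟩ π),
      F ⟨m, p⟩ := by
    have h3 : F ⟨π.1, π.2⟩ = muAux (π.1 + 1) PPerm.one π := rfl
    rw [h3, muAux, if_neg hne, if_pos ((one_le_iff π).2 (by omega))]
    congr 1
    apply Finset.sum_congr rfl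
    intro m hm
    apply Finset.sum_congr rfl
    intro p _
    rw [Finset.mem_range] at hm
    exact muAux_eq _ m ⟨m, p⟩ π.1 le_rfl hm
  rw [h2]
  ring

/-! ### The minimal top part -/

/-- the wedge with a permutation on top, as a permutation -/
noncomputable def WP (A : Conf) (k : ℕ) (δ : PPerm) : PPerm := (W A k (ofPerm δ)).std

theorem le_WP (A : Conf) (k : ℕ) (δ l : PPerm) :
    PPerm.Le l (WP A k δ) ↔ le (ofPerm l) (W A k (ofPerm δ)) := by
  rw [le_iff]
  exact ⟨fun h => Conf.le_trans h (std_le _), fun h => Conf.le_trans h (le_std _)⟩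

theorem WP_card (A : Conf) (k : ℕ) (δ : PPerm) : (WP A k δ).1 = A.card + δ.1 := by
  rw [WP, std_card, W_card, card_ofPerm]

theorem WP_mono (A : Conf) (k : ℕ) {δ ε : PPerm} (h : PPerm.Le δ ε) :
    PPerm.Le (WP A k δ) (WP A k ε) := by
  rw [le_WP]
  exact Conf.le_trans (std_le _) (W_mono A k ((le_iff _ _).1 h))

def IsMinTop (A : Conf) (k : ℕ) (l γ : PPerm) : Prop :=
  0 < γ.1 ∧ ∀ δ : PPerm, 0 < δ.1 → (PPerm.Le l (WP A k δ) ↔ PPerm.Le γ δ)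

/-- If `γ` has minimal length among the nonempty tops, then every decomposition has a large top. -/
theorem top_large {A : Conf} {k : ℕ} {l : PPerm} {n : ℕ} (hn : 2 ≤ n)
    (hmin : ∀ δ : PPerm, 0 < δ.1 → PPerm.Le l (WP A k δ) → n ≤ δ.1)
    {T : Set (ofPerm l).X} {S : Set A.X}
    (h : le (ofPerm l) (W (A.res S) k ((ofPerm l).res T))) :
    n ≤ ((ofPerm l).res T).card := by
  by_cases h0 : 0 < ((ofPerm l).res T).card
  · have := hmin ((ofPerm l).res T).std (by rwa [std_card]) (by
      rw [le_WP]
      exact Conf.le_trans h (Conf.le_trans (W_res_le A k _ S) (W_mono A k (le_std _))))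
    rwa [std_card] at this
  · have he : IsEmpty ((ofPerm l).res T).X := by
      have h1 : Nat.card ((ofPerm l).res T).X = 0 := by
        have : ((ofPerm l).res T).card = Nat.card ((ofPerm l).res T).X := rfl
        omega
      rcases Nat.card_eq_zero.1 h1 with h | h
      · exact h
      · exact (h.not_finite inferInstance).elim
    have hle : le ((ofPerm l).res T) (ofPerm PPerm.one) :=
      ⟨fun x => he.elim x, fun x => he.elim x, fun x => he.elim x⟩
    have := hmin PPerm.one (by simp [PPerm.one]) (by
      rw [le_WP]
      exact Conf.le_trans h (Conf.le_trans (W_res_le A k _ S) (W_mono A k hle)))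
    simp [PPerm.one] at this
    omega

theorem exists_minTop (A : Conf) (k : ℕ) (l β : PPerm) (hβ : 0 < β.1)
    (h : PPerm.Le l (WP A k β)) : ∃ γ, IsMinTop A k l γ := by
  have hex : ∃ n, ∃ γ : PPerm, γ.1 = n ∧ 0 < γ.1 ∧ PPerm.Le l (WP A k γ) := ⟨_, β, rfl, hβ, h⟩
  obtain ⟨γ, hγn, hγ0, hγ⟩ := Nat.find_spec hex
  have hmin : ∀ δ : PPerm, 0 < δ.1 → PPerm.Le l (WP A k δ) → γ.1 ≤ δ.1 := by
    intro δ h0 h1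
    rw [hγn]
    exact Nat.find_min' hex ⟨δ, rfl, h0, h1⟩
  refine ⟨γ, hγ0, fun δ hδ => ⟨fun hl => ?_, fun hl => PLe_trans hγ (WP_mono A k hl)⟩⟩
  by_cases h2 : 2 ≤ γ.1
  · obtain ⟨T, hT, hTγ, S, hS, -⟩ := decomp ((le_WP A k _ _).1 hγ)
    obtain ⟨U, hU, hUδ, S', hS', -⟩ := decomp ((le_WP A k _ _).1 hl)
    have c1 := top_large h2 hmin hS
    have c2 := top_large h2 hmin hS'
    have c3 := card_le hTγ
    rw [card_ofPerm] at c3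
    have r := rev_of_card hTγ (by rwa [card_ofPerm])
    rw [le_iff]
    refine Conf.le_trans r (Conf.le_trans ?_ hUδ)
    by_cases hTU : T ⊆ U
    · exact res_mono _ hTU
    · obtain ⟨x, hx, hxU⟩ := Set.not_subset.1 hTU
      have hUT : U ⊆ T := by
        intro y hy
        rcases lt_trichotomy ((ofPerm l).v x) ((ofPerm l).v y) with h | h | h
        · exact hT x y hx h
        · exact (ofPerm l).hv h ▸ hx
        · exact (hxU (hU y x hy h)).elim
      exact rev_of_card (res_mono _ hUT) (by omega)
  · have : γ = PPerm.one := (PLe_eq ((one_le_iff γ).2 hγ0) (by simp [PPerm.one]; omega)).symm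
    rw [this, one_le_iff]
    exact hδ

theorem IsMinTop.unique {A : Conf} {k : ℕ} {l γ γ' : PPerm} (h : IsMinTop A k l γ)
    (h' : IsMinTop A k l γ') : γ = γ' :=
  PLe_antisymm ((h.2 γ' h'.1).1 ((h'.2 γ' h'.1).2 (PLe_refl _)))
    ((h'.2 γ h.1).1 ((h.2 γ h.1).2 (PLe_refl _)))

noncomputable def top (A : Conf) (k : ℕ) (l : PPerm) : PPerm :=
  if h : ∃ γ, IsMinTop A k l γ then h.choose else PPerm.one

theorem top_spec {A : Conf} {k : ℕ} {l β : PPerm} (hβ : 0 < β.1)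
    (h : PPerm.Le l (WP A k β)) : IsMinTop A k l (top A k l) := by
  have h' := exists_minTop A k l β hβ h
  rw [top, dif_pos h']
  exact h'.choose_spec

theorem sum_top (A : Conf) (k : ℕ) (hA : 0 < A.card) : ∀ (n : ℕ) (γ : PPerm), γ.1 = n → 0 < γ.1 →
    ∑ l ∈ (Idl (WP A k γ)).filter (fun l => top A k l = γ), F l = 0 := by
  intro n
  induction n using Nat.strong_induction_on with
  | _ n ih =>
    intro γ hγn hγ
    have h0 := sum_Idl (WP A k γ) (by rw [WP_card]; omega)
    have hmaps : ∀ l ∈ Idl (WP A k γ), top A k l ∈ Idl γ := by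
      intro l hl
      rw [mem_Idl] at hl ⊢
      have hs := top_spec hγ hl.2
      exact ⟨hs.1, (hs.2 γ hγ).1 hl.2⟩
    rw [← Finset.sum_fiberwise_of_maps_to hmaps] at h0
    rw [Finset.sum_eq_single γ] at h0
    · exact h0
    · intro γ' hγ' hne
      rw [mem_Idl] at hγ'
      have hlt : γ'.1 < γ.1 := by
        by_contra hc
        exact hne (PLe_eq hγ'.2 (by omega))
      rw [← ih γ'.1 (by omega) γ' rfl hγ'.1]
      apply Finset.sum_congr _ (fun _ _ => rfl)
      ext l
      simp only [Finset.mem_filter, mem_Idl]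
      constructor
      · rintro ⟨⟨h1, h2⟩, h3⟩
        refine ⟨⟨h1, ?_⟩, h3⟩
        have hs := top_spec hγ h2
        rw [h3] at hs
        exact (hs.2 γ' hγ'.1).2 (PLe_refl _)
      · rintro ⟨⟨h1, h2⟩, h3⟩
        exact ⟨⟨h1, PLe_trans h2 (WP_mono A k hγ'.2)⟩, h3⟩
    · intro h
      exact (h ((mem_Idl _ _).2 ⟨hγ, PLe_refl _⟩)).elim

theorem F_dvd (β : PPerm) (hβ : 2 ≤ β.1) (k : ℕ) : ∀ (n : ℕ) (A : Conf), A.card = n →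
    F β ∣ F (WP A k β) := by
  intro n
  induction n using Nat.strong_induction_on with
  | _ n ih =>
    intro A hAn
    rcases Nat.eq_zero_or_pos A.card with hA | hA
    · have : β = WP A k β := by
        apply PLe_eq
        · rw [le_WP]
          exact ⟨_, inr_emb A k _⟩
        · rw [WP_card]
          omega
      rw [← this]
    · have h0 := sum_top A k hA β.1 β rfl (by omega)
      have hmem : WP A k β ∈ (Idl (WP A k β)).filter (fun l => top A k l = β) := by
        have hs := top_spec (A := A) (k := k) (l := WP A k β) (β := β) (by omega) (PLe_refl _)
        rw [Finset.mem_filter, mem_Idl]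
        refine ⟨⟨by rw [WP_card]; omega, PLe_refl _⟩, ?_⟩
        apply PLe_eq ((hs.2 β (by omega)).1 (PLe_refl _))
        have := PLe_len ((hs.2 _ hs.1).2 (PLe_refl _))
        rw [WP_card, WP_card] at this
        omega
      rw [← Finset.add_sum_erase _ _ hmem] at h0
      rw [eq_neg_of_add_eq_zero_left h0, dvd_neg]
      apply Finset.dvd_sum
      intro l hl
      rw [Finset.mem_erase, Finset.mem_filter, mem_Idl] at hl
      obtain ⟨hne, ⟨hl0, hle⟩, htop⟩ := hl
      have hs := top_spec (by omega) hle
      rw [htop] at hs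
      have hlen : l.1 < (WP A k β).1 := by
        by_contra hc
        exact hne (PLe_eq hle (by omega))
      obtain ⟨T, hT, hTβ, S, hS, hS'⟩ := decomp ((le_WP A k _ _).1 hle)
      have c1 := top_large hβ (fun δ h1 h2 => PLe_len ((hs.2 δ h1).1 h2)) hS
      have r := rev_of_card hTβ (by rwa [card_ofPerm])
      have e1 : l = WP (A.res S) k β := by
        apply PLe_antisymm
        · rw [le_WP]
          exact Conf.le_trans hS (W_mono _ k hTβ)
        · rw [le_iff]
          exact Conf.le_trans (std_le _) (Conf.le_trans (W_mono _ k r) hS')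
      rw [e1]
      rw [e1, WP_card, WP_card] at hlen
      exact ih (A.res S).card (by omega) (A.res S) rfl

theorem wedge_eq (α β π : PPerm) (k : ℕ) (hk : k ≤ α.1) (hπ : IsWedge α β k π) :
    π = WP (ofPerm α) k β := by
  obtain ⟨h1, h2, h3⟩ := hπ
  have hex : ∀ z : (W (ofPerm α) k (ofPerm β)).X, ∃ x : Fin π.1,
      (x : ℕ) = (W (ofPerm α) k (ofPerm β)).p z ∧
      (π.2 x : ℕ) = (W (ofPerm α) k (ofPerm β)).v z := by
    rintro (s | t)
    · change Fin α.1 at s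
      by_cases hs : (s : ℕ) < k
      · refine ⟨⟨s, by omega⟩, ?_, ?_⟩
        · simp [W, ofPerm, hs]
        · rw [h2 s _ (Or.inl ⟨hs, rfl⟩)]
          rfl
      · refine ⟨⟨β.1 + s, by omega⟩, ?_, ?_⟩
        · simp [W, ofPerm, hs]
        · rw [h2 s _ (Or.inr ⟨by omega, rfl⟩)]
          rfl
    · change Fin β.1 at t
      refine ⟨⟨k + t, by omega⟩, ?_, ?_⟩
      · simp [W, ofPerm]
      · rw [h3 t _ rfl]
        rfl
  choose g hg hg' using hex
  symm
  apply PLe_eq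
  · rw [le_iff]
    refine Conf.le_trans (std_le _) ⟨g, fun x y => ?_, fun x y => ?_⟩
    · rw [← hg, ← hg]
      rfl
    · rw [← hg', ← hg']
      rfl
  · rw [WP_card, card_ofPerm, h1]

/-- **(Theorem `theorem-wedge-permutations-multiple-of-beta`.)**  For
nonempty permutations `α`, `β` and `0 ≤ k ≤ |α|`, the principal Möbius
function of the wedge permutation `W_k(α,β)` is an integer multiple of the
principal Möbius function of `β`. -/
theorem mu_wedge_multiple_of_mu (α β π : PPerm) (hα : 0 < α.1) (hβ : 0 < β.1)
    (k : ℕ) (hk : k ≤ α.1) (hπ : IsWedge α β k π) :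
    ∃ c : ℤ, mu PPerm.one π = c * mu PPerm.one β := by
  by_cases h2 : 2 ≤ β.1
  · obtain ⟨c, hc⟩ := F_dvd β h2 k _ (ofPerm α) rfl
    rw [← wedge_eq α β π k hk hπ] at hc
    exact ⟨c, by rw [mul_comm]; exact hc⟩
  · have : PPerm.one = β := PLe_eq ((one_le_iff β).2 hβ) (by simp [PPerm.one]; omega)
    exact ⟨mu PPerm.one π, by rw [← this, mu_one_one, mul_one]⟩
end
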